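/- Fix real numbers t, r with 0 < t < 1, 0 < r < 1 and r² + t² = 1. Suppose the absolutely continuous part of ν with respect to Haar measure on 𝕋 is a nonzero measure and the topological support of ν has nonempty interior. Then for ℙ-almost every ω ∈ Ω the unitary operator U_ω has pure point spectrum with exponentially decaying eigenfunctions; that is, the closed linear span of the eigenvectors of U_ω equals all of ℓ²(ℤ;ℂ), and for every eigenvector ψ of U_ω there exist constants C > 0 and λ > 0 such that |⟨e_k, ψ⟩| ≤ C e^{−λ|k|} for all k ∈ ℤ. -/

import Mathlib

open MeasureTheory Complex Filter

noncomputable section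

instance : Fact (0 < 2 * Real.pi) := ⟨by positivity⟩

/-- The torus `𝕋 = ℝ/2πℤ`. -/
abbrev Torus : Type := AddCircle (2 * Real.pi)

/-- `ec a = e^{ia}` for `a ∈ 𝕋`. -/
def ec (a : Torus) : ℂ := (AddCircle.toCircle a : ℂ)

/-- The topological support of a measure. -/
def measSupport (ν : Measure Torus) : Set Torus := {x | ∀ s ∈ nhds x, 0 < ν s}

/-- `ℓ²(ℤ;ℂ)`. -/
abbrev Hz : Type := lp (fun _ : ℤ => ℂ) 2

/-- Canonical orthonormal basis of `ℓ²(ℤ;ℂ)`. -/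
def ez (k : ℤ) : Hz := lp.single 2 k (1 : ℂ)

/-- Matrix entries of the operator `S(t)`: `Sent t r k j = ⟨e_k, S e_j⟩`. -/
def Sent (t r : ℝ) (k j : ℤ) : ℂ :=
  if k % 2 = 0 then
    (if j = k - 1 then (r*t : ℝ) else if j = k then (r^2 : ℝ)
     else if j = k + 1 then (r*t : ℝ) else if j = k + 2 then (-t^2 : ℝ) else 0)
  else
    (if j = k - 2 then (-t^2 : ℝ) else if j = k - 1 then (-(r*t) : ℝ)
     else if j = k then (r^2 : ℝ) else if j = k + 1 then (-(r*t) : ℝ) else 0)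

section
set_option linter.unusedSectionVars false

lemma ec_def' (a : Torus) : ec a = fourier 1 a := by simp [ec]
lemma ec_continuous : Continuous ec := by
  have : ec = fun a => (fourier 1 a : ℂ) := funext ec_def'
  rw [this]; exact (fourier 1).continuous
lemma ec_norm (a : Torus) : ‖ec a‖ = 1 := Circle.norm_coe _
lemma ec_ne_zero (a : Torus) : ec a ≠ 0 := by
  intro h; have := ec_norm a; rw [h] at this; simp at this
lemma ec_add (a b : Torus) : ec (a + b) = ec a * ec b := by simp [ec, AddCircle.toCircle_add]
lemma ec_zero : ec 0 = 1 := by simp [ec]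
lemma ec_neg (a : Torus) : ec (-a) = (ec a)⁻¹ := by
  have := ec_add a (-a)
  rw [add_neg_cancel, ec_zero] at this
  exact eq_inv_of_mul_eq_one_right this.symm
lemma ec_conj (a : Torus) : (starRingEnd ℂ) (ec a) = ec (-a) := by
  rw [ec_neg, Complex.inv_def, Complex.normSq_eq_norm_sq, ec_norm]; simp
lemma ec_mul_conj (a : Torus) : ec a * (starRingEnd ℂ) (ec a) = 1 := by
  rw [ec_conj, ← ec_add, add_neg_cancel, ec_zero]
lemma fourier_eq_ec (n : ℤ) (a : Torus) : fourier n a = ec a ^ n := by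
  simp [ec, fourier_apply, AddCircle.toCircle_zsmul]
lemma ec_injective : Function.Injective ec := by
  intro a b h
  exact AddCircle.injective_toCircle (by positivity) (Subtype.ext h)
lemma ec_coe (x : ℝ) : ec (x : Torus) = Complex.exp (x * I) := by
  unfold ec
  rw [AddCircle.toCircle_apply_mk, Circle.coe_exp]
  congr 2
  have : (2 * Real.pi) ≠ 0 := by positivity
  field_simp
lemma ec_arg {w : ℂ} (hw : ‖w‖ = 1) : ec ((w.arg : ℝ) : Torus) = w := by
  rw [ec_coe]
  have := Complex.norm_mul_exp_arg_mul_I w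
  rw [hw] at this; simpa using this

/-- density of trigonometric polynomials, as an induction principle -/
lemma trig_induction {p : C(Torus, ℂ) → Prop} (hcl : IsClosed {f | p f}) (h0 : p 0)
    (hadd : ∀ f g, p f → p g → p (f + g)) (hsmul : ∀ (c : ℂ) f, p f → p (c • f))
    (hf : ∀ n, p (fourier n)) (f : C(Torus, ℂ)) : p f := by
  let S : Submodule ℂ C(Torus, ℂ) :=
    { carrier := {f | p f}, add_mem' := fun {a b} ha hb => hadd a b ha hb, zero_mem' := h0,
      smul_mem' := fun c x hx => hsmul c x hx }
  have h1 : Submodule.span ℂ (Set.range (@fourier (2 * Real.pi))) ≤ S := by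
    rw [Submodule.span_le]; rintro _ ⟨n, rfl⟩; exact hf n
  have h2 := Submodule.topologicalClosure_minimal _ h1 hcl
  rw [span_fourier_closure_eq_top] at h2
  exact h2 (Submodule.mem_top)

lemma cont_integrable {E : Type*} [NormedAddCommGroup E] {X : Type*}
    [TopologicalSpace X] [CompactSpace X] [MeasurableSpace X] [BorelSpace X]
    [SecondCountableTopologyEither X E]
    (μ : Measure X) [IsFiniteMeasure μ] {f : X → E} (hf : Continuous f) :
    Integrable f μ := by
  obtain ⟨C, hC⟩ := (isCompact_range hf.norm).bddAbove
  exact Integrable.of_bound hf.aestronglyMeasurable C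
    (Eventually.of_forall fun x => hC ⟨x, rfl⟩)

lemma integral_trig_continuous (μ : Measure Torus) [IsFiniteMeasure μ] :
    Continuous fun f : C(Torus, ℂ) => ∫ x, f x ∂μ := by
  have h : ∀ f : C(Torus, ℂ), ∫ x, f x ∂μ = ∫ x, (ContinuousMap.toLp (E := ℂ) 1 μ ℂ f) x ∂μ := by
    intro f
    exact (integral_congr_ae (ContinuousMap.coeFn_toLp μ f)).symm
  simp_rw [h]
  exact continuous_integral.comp (ContinuousMap.toLp (E := ℂ) 1 μ ℂ).continuous

lemma integral_eq_of_fourier (μ₁ μ₂ : Measure Torus) [IsFiniteMeasure μ₁] [IsFiniteMeasure μ₂]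
    (h : ∀ n : ℤ, ∫ x, fourier n x ∂μ₁ = ∫ x, fourier n x ∂μ₂) (f : C(Torus, ℂ)) :
    ∫ x, f x ∂μ₁ = ∫ x, f x ∂μ₂ := by
  refine trig_induction (p := fun f => ∫ x, f x ∂μ₁ = ∫ x, f x ∂μ₂) ?_ ?_ ?_ ?_ h f
  · exact isClosed_eq (integral_trig_continuous μ₁) (integral_trig_continuous μ₂)
  · simp
  · intro f g hf hg
    simp only [ContinuousMap.add_apply]
    rw [integral_add (cont_integrable _ f.continuous) (cont_integrable _ g.continuous),
      integral_add (cont_integrable _ f.continuous) (cont_integrable _ g.continuous), hf, hg]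
  · intro c f hf
    simp only [ContinuousMap.smul_apply]
    rw [integral_smul, integral_smul, hf]

lemma torus_measure_ext (μ₁ μ₂ : Measure Torus) [IsFiniteMeasure μ₁] [IsFiniteMeasure μ₂]
    (h : ∀ n : ℤ, ∫ x, fourier n x ∂μ₁ = ∫ x, fourier n x ∂μ₂) : μ₁ = μ₂ := by
  apply ext_of_forall_integral_eq_of_IsFiniteMeasure
  intro f
  have := integral_eq_of_fourier μ₁ μ₂ h ⟨fun x => ((f x : ℝ) : ℂ), by fun_prop⟩
  simp only [ContinuousMap.coe_mk] at this
  rw [integral_complex_ofReal, integral_complex_ofReal] at this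
  exact_mod_cast this

abbrev mh : Measure Torus := AddCircle.haarAddCircle

/-- growth factor -/
def gf (t r : ℝ) (y : Torus) : ℝ := ‖ec y - r‖ / t
/-- Moebius map -/
def mob (r : ℝ) (y : Torus) : Torus :=
  ((Complex.arg ((r * ec y - 1) / (ec y - r)) : ℝ) : Torus)

section
variable {t r : ℝ} (ht0 : 0 < t) (hr0 : 0 < r) (hr1 : r < 1) (hrt : r^2 + t^2 = 1)
include hr0 hr1

lemma ec_sub_ne (y : Torus) : ec y - r ≠ 0 := by
  intro h
  have h1 : ec y = r := by linear_combination h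
  have := ec_norm y
  rw [h1] at this
  simp only [Complex.norm_real, Real.norm_eq_abs, abs_of_pos hr0] at this
  linarith

lemma mob_norm (y : Torus) : ‖(r * ec y - 1) / (ec y - r)‖ = 1 := by
  have h0 := ec_sub_ne hr0 hr1 y
  have h : (r * ec y - 1) = - (ec y) * (starRingEnd ℂ) (ec y - r) := by
    rw [map_sub, mul_sub, neg_mul, ec_mul_conj, Complex.conj_ofReal]; ring
  rw [norm_div, h, norm_mul, norm_neg, ec_norm, RCLike.norm_conj, one_mul]
  exact div_self (by simpa using h0)

lemma ec_mob (y : Torus) : ec (mob r y) = (r * ec y - 1) / (ec y - r) :=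
  ec_arg (mob_norm hr0 hr1 y)

lemma mob_continuous : Continuous (mob r) := by
  rw [continuous_iff_continuousAt]
  intro y
  have h : ContinuousAt (fun w : ℂ => ((w.arg : ℝ) : Torus)) ((r * ec y - 1) / (ec y - r)) := by
    apply Complex.continuousAt_arg_coe_angle
    intro h0
    have := mob_norm hr0 hr1 y
    rw [h0] at this; simp at this
  have h2 : ContinuousAt (fun y => (r * ec y - 1) / (ec y - r)) y := by
    have := ec_continuous
    refine ContinuousAt.div (f := fun y => r * ec y - 1) (g := fun y => ec y - r) (by fun_prop) (by fun_prop) (ec_sub_ne hr0 hr1 y)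
  exact ContinuousAt.comp (f := fun y => (r * ec y - 1) / (ec y - r)) h h2

include ht0 hrt

lemma mob_sub (y : Torus) : ec (mob r y) - r = - t^2 / (ec y - r) := by
  have h0 := ec_sub_ne hr0 hr1 y
  have h1 : (t:ℂ)^2 = 1 - r^2 := by
    have : t^2 = 1 - r^2 := by linarith
    exact_mod_cast this
  rw [ec_mob hr0 hr1, h1]; field_simp; ring

lemma mob_mob (y : Torus) : mob r (mob r y) = y := by
  apply ec_injective
  have h0 := ec_sub_ne hr0 hr1 y
  have ht : (t:ℂ) ≠ 0 := by exact_mod_cast ht0.ne'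
  have h1 : (t:ℂ)^2 = 1 - r^2 := by
    have : t^2 = 1 - r^2 := by linarith
    exact_mod_cast this
  rw [ec_mob hr0 hr1, mob_sub ht0 hr0 hr1 hrt, ec_mob hr0 hr1]
  field_simp
  rw [h1]; ring

lemma gf_pos (y : Torus) : 0 < gf t r y :=
  div_pos (norm_pos_iff.mpr (ec_sub_ne hr0 hr1 y)) ht0

lemma gf_mob (y : Torus) : gf t r (mob r y) * gf t r y = 1 := by
  have h0 := norm_pos_iff.mpr (ec_sub_ne hr0 hr1 y)
  unfold gf
  rw [mob_sub ht0 hr0 hr1 hrt, norm_div]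
  simp
  field_simp

lemma gf_ge (y : Torus) : (1 - r) / t ≤ gf t r y := by
  unfold gf
  gcongr
  have := norm_sub_norm_le (ec y) (r:ℂ)
  rw [ec_norm] at this
  simpa [abs_of_pos hr0] using this

lemma gf_le (y : Torus) : gf t r y ≤ (1 + r) / t := by
  unfold gf
  gcongr
  have := norm_sub_le (ec y) (r:ℂ)
  rw [ec_norm] at this
  simpa [abs_of_pos hr0] using this

omit ht0 hr0 hr1 hrt in
lemma gf_continuous : Continuous (gf t r) := by
  have := ec_continuous
  unfold gf; fun_prop

end
end

section
set_option linter.unusedSectionVars false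

lemma circleAverage_eq (φ : ℂ → ℂ) : Real.circleAverage φ 0 1 = ∫ y, φ (ec y) ∂mh := by
  rw [AddCircle.integral_haarAddCircle, Real.circleAverage_def]
  congr 1
  rw [← AddCircle.intervalIntegral_preimage (2 * Real.pi) 0 (fun y => φ (ec y))]
  simp [circleMap, ec_coe]

lemma integral_fourier (n : ℤ) : ∫ y : Torus, fourier n y ∂mh = if n = 0 then 1 else 0 := by
  have h := congrFun (fourierCoeff_fourier (T := 2 * Real.pi) n) 0
  rw [fourierCoeff] at h
  simp only [neg_zero, fourier_zero, one_smul] at h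
  rw [h]
  by_cases hn : n = 0 <;> simp [Pi.single_apply, hn, eq_comm]

section
variable {t r : ℝ} (ht0 : 0 < t) (hr0 : 0 < r) (hr1 : r < 1) (hrt : r^2 + t^2 = 1)
include hr0 hr1 ht0 hrt

/-- inverse growth factor -/
def Gf (t r : ℝ) (y : Torus) : ℝ := (gf t r y)⁻¹

lemma Gf_pos (y : Torus) : 0 < Gf t r y := inv_pos.mpr (gf_pos ht0 hr0 hr1 hrt y)
lemma Gf_continuous : Continuous (Gf t r) :=
  gf_continuous.inv₀ fun y => (gf_pos ht0 hr0 hr1 hrt y).ne'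

lemma Gf_sq (y : Torus) : Gf t r y ^ 2 = poissonKernel 0 r (ec y) := by
  rw [poissonKernel_def, Gf, gf]
  simp only [sub_zero, ec_norm, Complex.norm_real, Real.norm_eq_abs, abs_of_pos hr0]
  rw [show (1:ℝ)^2 - r^2 = t^2 by linarith]
  rw [inv_div, div_pow]

lemma cov_neg (k : ℕ) : ∫ y, (Gf t r y ^ 2 : ℝ) • fourier (-(k:ℤ)) (mob r y) ∂mh
    = if k = 0 then 1 else 0 := by
  let h : ℂ → ℂ := fun z => ((z - r) / (r * z - 1)) ^ k
  have hne : ∀ z : ℂ, ‖z‖ ≤ 1 → r * z - 1 ≠ 0 := by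
    intro z hz h0
    have h1 : r * z = 1 := by linear_combination h0
    have h2 : ‖(r:ℂ) * z‖ = 1 := by rw [h1]; simp
    rw [norm_mul, Complex.norm_real, Real.norm_eq_abs, abs_of_pos hr0] at h2
    nlinarith [norm_nonneg z]
  have hd : DiffContOnCl ℂ h (Metric.ball 0 1) := by
    apply DifferentiableOn.diffContOnCl
    intro z hz
    have hz' : ‖z‖ ≤ 1 := by
      have := Metric.closure_ball_subset_closedBall hz
      simpa using this
    have := hne z hz'
    apply DifferentiableAt.differentiableWithinAt
    apply DifferentiableAt.pow
    exact DifferentiableAt.div (by fun_prop) (by fun_prop) this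
  have h1 := hd.circleAverage_poissonKernel_smul (w := (r:ℂ)) (by simp [abs_of_pos hr0, hr1])
  rw [circleAverage_eq] at h1
  have h2 : h r = if k = 0 then 1 else 0 := by
    simp only [h, sub_self, zero_div]
    split_ifs with hk <;> simp [hk]
  rw [← h2, ← h1]
  congr 1
  ext y
  simp only [Pi.smul_apply', h, Gf_sq ht0 hr0 hr1 hrt, fourier_eq_ec, ec_mob hr0 hr1, zpow_neg,
    zpow_natCast, ← inv_pow, inv_div]

lemma cov_fourier (n : ℤ) : ∫ y, (Gf t r y ^ 2 : ℝ) • fourier n (mob r y) ∂mh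
    = ∫ y, fourier n y ∂mh := by
  rw [integral_fourier]
  obtain ⟨k, rfl | rfl⟩ := n.eq_nat_or_neg
  · have h := congrArg (starRingEnd ℂ) (cov_neg ht0 hr0 hr1 hrt k)
    rw [← integral_conj] at h
    have e : ∀ y, (starRingEnd ℂ) ((Gf t r y ^ 2 : ℝ) • fourier (-(k:ℤ)) (mob r y))
        = (Gf t r y ^ 2 : ℝ) • fourier (k:ℤ) (mob r y) := by
      intro y
      rw [fourier_neg]; simp
    simp_rw [e] at h
    rw [h]
    by_cases hk : k = 0 <;> simp [hk]
  · rw [cov_neg ht0 hr0 hr1 hrt]; simp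

/-- change of variables for the Moebius map -/
lemma cov_measure : Measure.map (mob r) (mh.withDensity fun y => ENNReal.ofReal (Gf t r y ^ 2)) = mh := by
  have hG := Gf_continuous ht0 hr0 hr1 hrt
  have hm := mob_continuous hr0 hr1
  have hfin : IsFiniteMeasure (mh.withDensity fun y => ENNReal.ofReal (Gf t r y ^ 2)) :=
    isFiniteMeasure_withDensity_ofReal (cont_integrable mh (by fun_prop)).2
  have : IsFiniteMeasure (Measure.map (mob r) (mh.withDensity fun y => ENNReal.ofReal (Gf t r y ^ 2))) :=
    inferInstance
  apply torus_measure_ext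
  intro n
  rw [integral_map hm.aemeasurable (fourier n).continuous.aestronglyMeasurable]
  rw [integral_withDensity_eq_integral_toReal_smul (by fun_prop) (by simp)]
  rw [← cov_fourier ht0 hr0 hr1 hrt n]
  congr 1
  ext y
  rw [ENNReal.toReal_ofReal (by positivity)]

lemma cov_integral {F : Torus → ℝ} (hF : Continuous F) :
    ∫ y, Gf t r y ^ 2 * F (mob r y) ∂mh = ∫ y, F y ∂mh := by
  have hG := Gf_continuous ht0 hr0 hr1 hrt
  have hm := mob_continuous hr0 hr1
  conv_rhs => rw [← cov_measure ht0 hr0 hr1 hrt]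
  rw [integral_map hm.aemeasurable hF.aestronglyMeasurable]
  rw [integral_withDensity_eq_integral_toReal_smul (by fun_prop) (by simp)]
  congr 1
  ext y
  rw [ENNReal.toReal_ofReal (by positivity)]; rfl

/-- kappa lt one -/
lemma kappa_lt : ∫ y, Gf t r y ∂mh < 1 := by
  have hG := Gf_continuous ht0 hr0 hr1 hrt
  have h1 : ∫ y, Gf t r y ^ 2 ∂mh = 1 := by
    have := cov_integral ht0 hr0 hr1 hrt (F := fun _ => 1) continuous_const
    simpa using this
  have h2 : 0 < ∫ y, (Gf t r y - 1) ^ 2 ∂mh := by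
    apply Continuous.integral_pos_of_hasCompactSupport_nonneg_nonzero (x := 0)
    · fun_prop
    · exact HasCompactSupport.of_compactSpace _
    · intro y; positivity
    · have : Gf t r 0 = t / (1 - r) := by
        unfold Gf gf
        rw [ec_zero, inv_div]
        congr 1
        rw [show (1:ℂ) - r = ((1 - r : ℝ) : ℂ) by push_cast; ring, Complex.norm_real]
        simp; linarith
      rw [this]
      have : t / (1 - r) - 1 ≠ 0 := by
        intro h
        have h3 : t = 1 - r := by
          have : 1 - r ≠ 0 := by linarith
          field_simp at h; linarith
        rw [h3] at hrt
        nlinarith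
      positivity
  have h3 : ∫ y, (Gf t r y - 1) ^ 2 ∂mh = ∫ y, (Gf t r y ^ 2 - 2 * Gf t r y + 1) ∂mh := by
    congr 1; ext y; ring
  have i1 := cont_integrable mh (f := fun y => Gf t r y ^ 2) (by fun_prop)
  have i2 := cont_integrable mh (f := fun y => 2 * Gf t r y) (by fun_prop)
  have i3 : Integrable (fun y => Gf t r y ^ 2 - 2 * Gf t r y) mh := i1.sub i2
  rw [h3, integral_add i3 (integrable_const _), integral_sub i1 i2, h1,
    integral_const_mul] at h2
  simp at h2
  linarith
end
end

section
set_option linter.unusedSectionVars false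

lemma nu_decomp (ν : Measure Torus) [IsProbabilityMeasure ν]
    (hac : (volume : Measure Torus).withDensity (ν.rnDeriv volume) ≠ 0) :
    ∃ (D : Torus → ENNReal) (ν₂ : Measure Torus), Measurable D ∧ (∀ y, D y ≤ 1) ∧
      IsFiniteMeasure ν₂ ∧
      ν = (volume : Measure Torus).withDensity D + ν₂ ∧
      (volume : Measure Torus).withDensity D ≠ 0 := by
  let d := ν.rnDeriv (volume : Measure Torus)
  have hd : Measurable d := Measure.measurable_rnDeriv _ _
  let D : Torus → ENNReal := fun y => min (d y) 1
  have hD : Measurable D := hd.min measurable_const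
  have hle : (volume : Measure Torus).withDensity D ≤ ν :=
    (withDensity_mono (Eventually.of_forall fun y => min_le_left _ _)).trans
      (Measure.withDensity_rnDeriv_le _ _)
  have hfin : IsFiniteMeasure ((volume : Measure Torus).withDensity D) :=
    isFiniteMeasure_of_le ν hle
  refine ⟨D, ν - (volume : Measure Torus).withDensity D, hD, fun y => min_le_right _ _, ?_, ?_, ?_⟩
  · exact isFiniteMeasure_of_le ν Measure.sub_le
  · rw [add_comm]; exact (Measure.sub_add_cancel_of_le hle).symm
  · intro h
    apply hac
    rw [withDensity_eq_zero_iff hD.aemeasurable] at h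
    rw [withDensity_eq_zero_iff hd.aemeasurable]
    filter_upwards [h] with y hy
    simp only [D, Pi.zero_apply] at hy ⊢
    rcases min_eq_iff.mp hy with h | h
    · exact h.1
    · simp at h

lemma fourier_dens_tendsto (D : Torus → ENNReal) (hD : Measurable D) (hD1 : ∀ y, D y ≤ 1) :
    Tendsto (fun n : ℤ => ‖∫ y, fourier n y ∂((volume : Measure Torus).withDensity D)‖)
      cofinite (nhds 0) := by
  let F : Torus → ℂ := fun y => ((D y).toReal : ℂ)
  have hF : MemLp F 2 mh := by
    apply MemLp.of_bound (C := 1) (by fun_prop)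
    apply Eventually.of_forall
    intro y
    simp only [F, Complex.norm_real, Real.norm_eq_abs, abs_of_nonneg ENNReal.toReal_nonneg]
    exact ENNReal.toReal_mono (by simp) (hD1 y)
  have h1 := (hasSum_sq_fourierCoeff (hF.toLp F)).summable.tendsto_cofinite_zero
  have h2 : ∀ n : ℤ, ‖∫ y, fourier n y ∂((volume : Measure Torus).withDensity D)‖
      = 2 * Real.pi * Real.sqrt (‖fourierCoeff (hF.toLp F) (-n)‖ ^ 2) := by
    intro n
    rw [fourierCoeff_congr_ae hF.coeFn_toLp, Real.sqrt_sq (norm_nonneg _), fourierCoeff,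
      AddCircle.integral_haarAddCircle, norm_smul]
    have : (0:ℝ) < 2 * Real.pi := by positivity
    rw [Real.norm_of_nonneg (by positivity), mul_inv_cancel_left₀ this.ne']
    rw [integral_withDensity_eq_integral_toReal_smul hD
      (Eventually.of_forall fun y => (hD1 y).trans_lt (by simp))]
    congr 2
    ext y
    simp [F, mul_comm]
  simp_rw [h2]
  have h3 : Tendsto (fun n : ℤ => -n) cofinite cofinite := neg_injective.tendsto_cofinite
  have h4 := ((Real.continuous_sqrt.tendsto 0).comp (h1.comp h3)).const_mul (2 * Real.pi)
  simpa using h4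

lemma fourier_gap (ν : Measure Torus) [IsProbabilityMeasure ν]
    (hac : (volume : Measure Torus).withDensity (ν.rnDeriv volume) ≠ 0) :
    ∃ q : ℝ, 0 ≤ q ∧ q < 1 ∧ ∀ n : ℤ, n ≠ 0 → ‖∫ y, fourier n y ∂ν‖ ≤ q := by
  obtain ⟨D, ν₂, hD, hD1, hfin2, hν, hne⟩ := nu_decomp ν hac
  set ν₁ := (volume : Measure Torus).withDensity D with hν₁
  have hfin1 : IsFiniteMeasure ν₁ := isFiniteMeasure_of_le ν (by rw [hν]; exact Measure.le_add_right le_rfl)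
  have hac1 : ν₁ ≪ ν := Measure.absolutelyContinuous_of_le (by rw [hν]; exact Measure.le_add_right le_rfl)
  have hp : 0 < ν₁.real Set.univ := by
    rw [measureReal_def, ENNReal.toReal_pos_iff]
    exact ⟨by rw [pos_iff_ne_zero]; simpa using hne, measure_lt_top _ _⟩
  have htot : ν₁.real Set.univ + ν₂.real Set.univ = 1 := by
    rw [← measureReal_add_apply, ← hν]; simp
  have ht := fourier_dens_tendsto D hD hD1
  rw [← hν₁] at ht
  have hlt : ∀ n : ℤ, n ≠ 0 → ‖∫ y, fourier n y ∂ν‖ < 1 := by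
    intro n hn
    have := ae_eq_const_or_norm_integral_lt_of_norm_le_const (μ := ν)
      (f := fun y : Torus => fourier n y) (C := 1) (Eventually.of_forall fun y => by rw [fourier_eq_ec, norm_zpow, ec_norm]; simp)
    rcases this with h | h
    · exfalso
      set c := ⨍ x, fourier n x ∂ν
      have hc : ∀ᵐ y ∂ν₁, fourier n y = c := hac1 h
      have hc1 : ‖c‖ = 1 := by
        have : ∃ y : Torus, fourier n y = c := by
          have : NeZero ν₁ := ⟨hne⟩
          exact hc.exists
        obtain ⟨y, hy⟩ := this
        rw [← hy, fourier_eq_ec, norm_zpow, ec_norm]; simp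
      have hk : ∀ k : ℕ, ‖∫ y, fourier (n * k) y ∂ν₁‖ = ν₁.real Set.univ := by
        intro k
        have : ∫ y, fourier (n * k) y ∂ν₁ = ∫ y, c ^ k ∂ν₁ := by
          apply integral_congr_ae
          filter_upwards [hc] with y hy
          rw [← hy, fourier_eq_ec, fourier_eq_ec, zpow_mul, zpow_natCast]
        rw [this, integral_const]
        simp [hc1]
      have hinj : Function.Injective (fun k : ℕ => n * (k:ℤ)) := by
        intro a b hab
        have := mul_left_cancel₀ hn hab
        exact_mod_cast this
      have h2 := ht.comp hinj.tendsto_cofinite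
      have h3 : ((fun n : ℤ => ‖∫ y, fourier n y ∂ν₁‖) ∘ fun k : ℕ => n * (k:ℤ)) = fun _ => ν₁.real Set.univ :=
        funext hk
      rw [h3] at h2
      have := tendsto_nhds_unique h2 tendsto_const_nhds
      linarith
    · simpa using h
  have hfinite : {n : ℤ | ¬ ‖∫ y, fourier n y ∂ν₁‖ < ν₁.real Set.univ / 2}.Finite := by
    have := ht.eventually (gt_mem_nhds (half_pos hp))
    exact this
  have hbig : ∀ n : ℤ, ‖∫ y, fourier n y ∂ν₁‖ < ν₁.real Set.univ / 2 →
      ‖∫ y, fourier n y ∂ν‖ ≤ 1 - ν₁.real Set.univ / 2 := by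
    intro n hn
    have i1 := cont_integrable ν₁ (fourier (T := 2 * Real.pi) n).continuous
    have i2 := cont_integrable ν₂ (fourier (T := 2 * Real.pi) n).continuous
    have e : ∫ y, fourier n y ∂ν = ∫ y, fourier n y ∂ν₁ + ∫ y, fourier n y ∂ν₂ := by
      rw [hν]; exact integral_add_measure i1 i2
    rw [e]
    have h2 : ‖∫ y, fourier n y ∂ν₂‖ ≤ ν₂.real Set.univ := by
      have := norm_integral_le_of_norm_le_const (μ := ν₂) (f := fun y : Torus => fourier n y) (C := 1)
        (Eventually.of_forall fun y => by rw [fourier_eq_ec, norm_zpow, ec_norm]; simp)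
      simpa using this
    have := norm_add_le (∫ y, fourier n y ∂ν₁) (∫ y, fourier n y ∂ν₂)
    linarith
  have hex : ∃ q0 : ℝ, 0 ≤ q0 ∧ q0 < 1 ∧ ∀ n ∈ hfinite.toFinset, n ≠ 0 → ‖∫ y, fourier n y ∂ν‖ ≤ q0 := by
    generalize hfinite.toFinset = s
    induction s using Finset.induction_on with
    | empty => exact ⟨0, le_rfl, by norm_num, by simp⟩
    | insert a s ha ih =>
      obtain ⟨q0, h0, h1, h2⟩ := ih
      by_cases haz : a = 0
      · refine ⟨q0, h0, h1, ?_⟩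
        intro n hn hn0
        rcases Finset.mem_insert.mp hn with h | h
        · exact absurd (h.trans haz) hn0
        · exact h2 n h hn0
      · refine ⟨max q0 ‖∫ y, fourier a y ∂ν‖, le_max_of_le_left h0, max_lt h1 (hlt a haz), ?_⟩
        intro n hn hn0
        rcases Finset.mem_insert.mp hn with h | h
        · rw [h]; exact le_max_right _ _
        · exact (h2 n h hn0).trans (le_max_left _ _)
  obtain ⟨q0, h0, h1, h2⟩ := hex
  refine ⟨max q0 (1 - ν₁.real Set.univ / 2), le_max_of_le_left h0, max_lt h1 (by linarith), ?_⟩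
  intro n hn
  by_cases h : ‖∫ y, fourier n y ∂ν₁‖ < ν₁.real Set.univ / 2
  · exact (hbig n h).trans (le_max_right _ _)
  · exact (h2 n (by simpa using h) hn).trans (le_max_left _ _)
end

section
set_option linter.unusedSectionVars false

/-- averaging operator -/
def Mop (ν : Measure Torus) (β : Torus → Torus) (h : Torus → ℝ) (y : Torus) : ℝ :=
  ∫ a, h (β a + y) ∂ν

lemma Mop_continuous (ν : Measure Torus) [IsProbabilityMeasure ν] {β : Torus → Torus}
    (hβ : Continuous β) {h : Torus → ℝ} (hh : Continuous h) : Continuous (Mop ν β h) := by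
  have := continuous_parametric_integral_of_continuous (μ := ν)
    (f := fun (y : Torus) (a : Torus) => h (β a + y)) (by unfold Function.uncurry; fun_prop) isCompact_univ
  simp only [Measure.restrict_univ] at this
  exact this

lemma parseval {h : Torus → ℝ} (hh : Continuous h) :
    HasSum (fun n : ℤ => ‖fourierCoeff (fun y => (h y : ℂ)) n‖ ^ 2) (∫ y, h y ^ 2 ∂mh) := by
  let F : C(Torus, ℂ) := ⟨fun y => (h y : ℂ), by fun_prop⟩
  have h1 := hasSum_sq_fourierCoeff (ContinuousMap.toLp (E := ℂ) 2 mh ℂ F)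
  have h2 : ∫ y, ‖ContinuousMap.toLp (E := ℂ) 2 mh ℂ F y‖ ^ 2 ∂mh = ∫ y, h y ^ 2 ∂mh := by
    apply integral_congr_ae
    filter_upwards [ContinuousMap.coeFn_toLp (𝕜 := ℂ) (p := 2) mh F] with y hy
    rw [hy]; simp [F]
  rw [h2] at h1
  convert h1 using 3
  rw [fourierCoeff_toLp]
  rfl

lemma fourierCoeff_Mop (ν : Measure Torus) [IsProbabilityMeasure ν] {β : Torus → Torus}
    (hβ : Continuous β) {h : Torus → ℝ} (hh : Continuous h) (n : ℤ) :
    fourierCoeff (fun y => (Mop ν β h y : ℂ)) n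
      = fourierCoeff (fun y => (h y : ℂ)) n * ∫ a, fourier n (β a) ∂ν := by
  unfold fourierCoeff Mop
  have hc : Continuous (Function.uncurry fun (y a : Torus) => fourier (-n) y • ((h (β a + y) : ℝ) : ℂ)) := by
    unfold Function.uncurry
    exact ((fourier (-n)).continuous.comp continuous_fst).smul
      (Complex.continuous_ofReal.comp (hh.comp ((hβ.comp continuous_snd).add continuous_fst)))
  calc ∫ y, fourier (-n) y • ((∫ a, h (β a + y) ∂ν : ℝ) : ℂ) ∂mh
      = ∫ y, ∫ a, fourier (-n) y • ((h (β a + y) : ℝ) : ℂ) ∂ν ∂mh := by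
        congr 1; ext y
        rw [integral_smul, integral_complex_ofReal]
    _ = ∫ a, ∫ y, fourier (-n) y • ((h (β a + y) : ℝ) : ℂ) ∂mh ∂ν :=
        integral_integral_swap (cont_integrable _ hc)
    _ = ∫ a, (∫ y, fourier (-n) y • ((h y : ℝ) : ℂ) ∂mh) * fourier n (β a) ∂ν := by
        congr 1; ext a
        rw [← integral_add_left_eq_self (fun y => fourier (-n) y • ((h y : ℝ) : ℂ)) (β a),
          ← integral_mul_const]
        congr 1; ext y
        simp only [fourier_eq_ec, ec_add, mul_zpow, smul_eq_mul]
        have := zpow_ne_zero n (ec_ne_zero (β a))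
        rw [zpow_neg (ec (β a))]
        field_simp
    _ = _ := by rw [integral_const_mul]

lemma Mop_L2 (ν : Measure Torus) [IsProbabilityMeasure ν] {β : Torus → Torus}
    (hβ : Continuous β) {q : ℝ}
    (hq : ∀ n : ℤ, n ≠ 0 → ‖∫ a, fourier n (β a) ∂ν‖ ≤ q) {h : Torus → ℝ} (hh : Continuous h) :
    ∫ y, Mop ν β h y ^ 2 ∂mh ≤ (∫ y, h y ∂mh) ^ 2 + q ^ 2 * (∫ y, h y ^ 2 ∂mh - (∫ y, h y ∂mh) ^ 2) := by
  have p1 := parseval (Mop_continuous ν hβ hh)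
  have p2 := parseval hh
  have h0 : ‖fourierCoeff (fun y => (h y : ℂ)) 0‖ = |∫ y, h y ∂mh| := by
    unfold fourierCoeff
    simp only [neg_zero, fourier_zero, one_smul]
    rw [integral_complex_ofReal, Complex.norm_real, Real.norm_eq_abs]
  have h3 := hasSum_le (fun n => ?_) p1
    ((p2.mul_left (q^2)).add (hasSum_ite_eq (0:ℤ) ((1 - q^2) * (∫ y, h y ∂mh) ^ 2)))
  · linarith
  · rw [fourierCoeff_Mop ν hβ hh, norm_mul, mul_pow]
    split_ifs with hn
    · subst hn
      rw [h0, sq_abs]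
      have : ‖∫ a, fourier 0 (β a) ∂ν‖ = 1 := by simp
      rw [this]; linarith
    · have := hq n hn
      have : ‖∫ a, fourier n (β a) ∂ν‖ ^ 2 ≤ q ^ 2 := by gcongr
      nlinarith [sq_nonneg ‖fourierCoeff (fun y => (h y : ℂ)) n‖]

lemma Mop_mean (ν : Measure Torus) [IsProbabilityMeasure ν] {β : Torus → Torus}
    (hβ : Continuous β) {h : Torus → ℝ} (hh : Continuous h) :
    ∫ y, Mop ν β h y ∂mh = ∫ y, h y ∂mh := by
  unfold Mop
  have hc : Continuous (Function.uncurry fun (y a : Torus) => h (β a + y)) := by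
    unfold Function.uncurry; fun_prop
  rw [integral_integral_swap (cont_integrable _ hc)]
  have : ∀ a, ∫ y, h (β a + y) ∂mh = ∫ y, h y ∂mh := fun a => integral_add_left_eq_self h (β a)
  simp [this]

lemma cs_int {f g : Torus → ℝ} (hf : Continuous f) (hg : Continuous g) :
    (∫ y, f y * g y ∂mh) ^ 2 ≤ (∫ y, f y ^ 2 ∂mh) * ∫ y, g y ^ 2 ∂mh := by
  have hq : ∀ s : ℝ, 0 ≤ (∫ y, g y ^ 2 ∂mh) * (s * s) + (2 * ∫ y, f y * g y ∂mh) * s + ∫ y, f y ^ 2 ∂mh := by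
    intro s
    have : ∫ y, (f y + s * g y) ^ 2 ∂mh = (∫ y, g y ^ 2 ∂mh) * (s * s) + (2 * ∫ y, f y * g y ∂mh) * s + ∫ y, f y ^ 2 ∂mh := by
      have e : ∀ y, (f y + s * g y) ^ 2 = g y ^ 2 * (s * s) + 2 * (f y * g y) * s + f y ^ 2 := fun y => by ring
      simp_rw [e]
      rw [integral_add (cont_integrable _ (by fun_prop)) (cont_integrable _ (by fun_prop)),
        integral_add (cont_integrable _ (by fun_prop)) (cont_integrable _ (by fun_prop)),
        integral_mul_const, integral_mul_const, integral_const_mul]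
    rw [← this]
    exact integral_nonneg fun y => sq_nonneg _
  have := discrim_le_zero hq
  unfold discrim at this
  linarith

/-- fractional transfer operator -/
def Kop (t r s : ℝ) (F : Torus → ℝ) (y : Torus) : ℝ := Gf t r y ^ s * F (mob r y)

/-- iterates -/
def Phi (t r : ℝ) (ν : Measure Torus) (β : ℕ → Torus → Torus) (s : ℝ) : ℕ → Torus → ℝ
  | 0 => fun _ => 1
  | n + 1 => Mop ν (β n) (Kop t r s (Phi t r ν β s n))

section
variable {t r : ℝ} (ht0 : 0 < t) (hr0 : 0 < r) (hr1 : r < 1) (hrt : r^2 + t^2 = 1)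
include ht0 hr0 hr1 hrt

lemma Kop_continuous (s : ℝ) {F : Torus → ℝ} (hF : Continuous F) : Continuous (Kop t r s F) := by
  have hG := Gf_continuous ht0 hr0 hr1 hrt
  have hm := mob_continuous hr0 hr1
  have : Continuous fun y => Gf t r y ^ s :=
    hG.rpow_const fun y => Or.inl (Gf_pos ht0 hr0 hr1 hrt y).ne'
  exact this.mul (hF.comp hm)

lemma Kop_nonneg (s : ℝ) {F : Torus → ℝ} (hF : ∀ y, 0 ≤ F y) (y : Torus) : 0 ≤ Kop t r s F y :=
  mul_nonneg (Real.rpow_nonneg (Gf_pos ht0 hr0 hr1 hrt y).le _) (hF _)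

lemma Mop_nonneg (ν : Measure Torus) (β : Torus → Torus) {h : Torus → ℝ} (hh : ∀ y, 0 ≤ h y)
    (y : Torus) : 0 ≤ Mop ν β h y := integral_nonneg fun _ => hh _

lemma Kop_L2 {F : Torus → ℝ} (hF : Continuous F) :
    ∫ y, Kop t r 1 F y ^ 2 ∂mh = ∫ y, F y ^ 2 ∂mh := by
  rw [← cov_integral ht0 hr0 hr1 hrt (F := fun y => F y ^ 2) (by fun_prop)]
  simp only [Kop, Real.rpow_one, mul_pow]

lemma two_step (ν : Measure Torus) [IsProbabilityMeasure ν] {β β' : Torus → Torus}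
    (hβ : Continuous β) (hβ' : Continuous β') {q : ℝ} (hq0 : 0 ≤ q) (hq1 : q < 1)
    (hq : ∀ n : ℤ, n ≠ 0 → ‖∫ a, fourier n (β a) ∂ν‖ ≤ q)
    (hq' : ∀ n : ℤ, n ≠ 0 → ‖∫ a, fourier n (β' a) ∂ν‖ ≤ q)
    {F : Torus → ℝ} (hF : Continuous F) (hF0 : ∀ y, 0 ≤ F y) :
    ∫ y, Mop ν β (Kop t r 1 F) y ^ 2 ∂mh ≤ ∫ y, F y ^ 2 ∂mh ∧
    ∫ y, Mop ν β' (Kop t r 1 (Mop ν β (Kop t r 1 F))) y ^ 2 ∂mh ≤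
      (1 - (1 - q^2) * ((1 - ∫ y, Gf t r y ∂mh) / 2) ^ 2) * ∫ y, F y ^ 2 ∂mh := by
  have hK := Kop_continuous ht0 hr0 hr1 hrt 1 hF
  set F1 := Mop ν β (Kop t r 1 F) with hF1def
  have hF1 : Continuous F1 := Mop_continuous ν hβ hK
  have hF10 : ∀ y, 0 ≤ F1 y := Mop_nonneg ht0 hr0 hr1 hrt _ _ (Kop_nonneg ht0 hr0 hr1 hrt 1 hF0)
  have hK1 := Kop_continuous ht0 hr0 hr1 hrt 1 hF1
  have e1 := Mop_L2 ν hβ hq hK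
  have e2 := Mop_L2 ν hβ' hq' hK1
  have m1 : ∫ y, F1 y ∂mh = ∫ y, Kop t r 1 F y ∂mh := Mop_mean ν hβ hK
  rw [← hF1def, Kop_L2 ht0 hr0 hr1 hrt hF, ← m1] at e1
  rw [Kop_L2 ht0 hr0 hr1 hrt hF1] at e2
  have hG := Gf_continuous ht0 hr0 hr1 hrt
  have hm := mob_continuous hr0 hr1
  have hc0 : 0 ≤ ∫ y, F1 y ∂mh := integral_nonneg hF10
  have hc'0 : 0 ≤ ∫ y, Kop t r 1 F1 y ∂mh := integral_nonneg (Kop_nonneg ht0 hr0 hr1 hrt 1 hF10)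
  have hκ0 : 0 ≤ ∫ y, Gf t r y ∂mh := integral_nonneg fun y => (Gf_pos ht0 hr0 hr1 hrt y).le
  have hκ1 := kappa_lt ht0 hr0 hr1 hrt
  have cs1 : (∫ y, Kop t r 1 F y ∂mh) ^ 2 ≤ ∫ y, F y ^ 2 ∂mh := by
    have := cs_int hK (continuous_const (y := (1:ℝ)))
    simpa [Kop_L2 ht0 hr0 hr1 hrt hF] using this
  rw [← m1] at cs1
  have cs2 : (∫ y, Kop t r 1 F1 y ∂mh) ^ 2 ≤ ∫ y, F1 y ^ 2 ∂mh := by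
    have := cs_int hK1 (continuous_const (y := (1:ℝ)))
    simpa [Kop_L2 ht0 hr0 hr1 hrt hF1] using this
  set c := ∫ y, F1 y ∂mh
  have hvar : (∫ y, Kop t r 1 F1 y ∂mh - c * ∫ y, Gf t r y ∂mh) ^ 2 ≤ ∫ y, F1 y ^ 2 ∂mh - c ^ 2 := by
    have hFc : Continuous (fun y => F1 y - c) := hF1.sub continuous_const
    have h1 := cs_int (Kop_continuous ht0 hr0 hr1 hrt 1 hFc)
      (continuous_const (y := (1:ℝ)))
    rw [Kop_L2 ht0 hr0 hr1 hrt hFc] at h1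
    have h2 : ∫ y, Kop t r 1 (fun y => F1 y - c) y * 1 ∂mh
        = ∫ y, Kop t r 1 F1 y ∂mh - c * ∫ y, Gf t r y ∂mh := by
      rw [← integral_const_mul, ← integral_sub (cont_integrable _ hK1) (cont_integrable _ (hG.const_mul c))]
      congr 1; ext y; simp only [Kop, Real.rpow_one]; ring
    have h3 : ∫ y, (F1 y - c) ^ 2 ∂mh = ∫ y, F1 y ^ 2 ∂mh - c ^ 2 := by
      have e : ∀ y, (F1 y - c) ^ 2 = F1 y ^ 2 - 2 * c * F1 y + c ^ 2 := fun y => by ring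
      have i1 : Integrable (fun y => F1 y ^ 2) mh := cont_integrable _ (hF1.pow 2)
      have i2 : Integrable (fun y => 2 * c * F1 y) mh := cont_integrable _ (hF1.const_mul _)
      have i3 : Integrable (fun y => F1 y ^ 2 - 2 * c * F1 y) mh := i1.sub i2
      simp_rw [e]
      rw [integral_add i3 (integrable_const _), integral_sub i1 i2, integral_const_mul]
      simp only [integral_const, probReal_univ, one_smul]
      change _ - 2 * c * c + c ^ 2 = _
      ring
    rw [h2, h3] at h1
    simpa using h1
  generalize ∫ y, Mop ν β' (Kop t r 1 F1) y ^ 2 ∂mh = N2 at *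
  generalize ∫ y, Kop t r 1 F1 y ∂mh = c' at *
  generalize ∫ y, F1 y ^ 2 ∂mh = N1 at *
  generalize ∫ y, F y ^ 2 ∂mh = N at *
  generalize (∫ y, Gf t r y ∂mh) = κ at *
  have hqq : 0 < 1 - q ^ 2 := by nlinarith
  have hN1 : N1 ≤ N := by nlinarith [mul_nonneg hqq.le (sub_nonneg.2 cs1)]
  refine ⟨hN1, ?_⟩
  by_contra hcon
  push Not at hcon
  set d := (1 - κ) / 2 with hd
  have hd0 : 0 < d := by rw [hd]; linarith
  have hd1 : d ≤ 1/2 := by rw [hd]; linarith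
  have hc'2 : (1 - d ^ 2) * N < c' ^ 2 := by
    have : (1 - q^2) * ((1 - d ^ 2) * N) < (1 - q^2) * c' ^ 2 := by
      nlinarith [mul_nonneg (sq_nonneg q) (sub_nonneg.2 hN1)]
    exact lt_of_mul_lt_mul_left this hqq.le
  have hN0 : 0 ≤ N := (sq_nonneg c).trans cs1
  have hN2N1 : N2 ≤ N1 := by
    nlinarith [mul_nonneg hqq.le (sub_nonneg.2 cs2)]
  have hc2 : (1 - d ^ 2) * N < c ^ 2 := by
    have : (1 - q^2) * ((1 - d ^ 2) * N) < (1 - q^2) * c ^ 2 := by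
      nlinarith [mul_nonneg (sq_nonneg q) (sub_nonneg.2 hN1)]
    exact lt_of_mul_lt_mul_left this hqq.le
  have hv : (c' - c * κ) ^ 2 ≤ d ^ 2 * N := by linarith
  obtain ⟨m, hm0, rfl⟩ : ∃ m, 0 ≤ m ∧ N = m ^ 2 := ⟨√N, Real.sqrt_nonneg _, (Real.sq_sqrt hN0).symm⟩
  have hcm : c ≤ m := abs_le_of_sq_le_sq' cs1 hm0 |>.2
  have hvm : c' - c * κ ≤ d * m := abs_le_of_sq_le_sq' (by rw [mul_pow]; exact hv) (by positivity) |>.2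
  have hκd : κ = 1 - 2 * d := by rw [hd]; ring
  have hle : c' ≤ (1 - d) * m := by nlinarith [mul_nonneg hκ0 (sub_nonneg.2 hcm)]
  have : c' ^ 2 ≤ ((1 - d) * m) ^ 2 := by gcongr
  nlinarith [mul_nonneg (mul_nonneg hd0.le (sub_nonneg.2 hd1)) (sq_nonneg m)]
end

end

section
set_option linter.unusedSectionVars false

/-- alternating sign -/
def sg (k : ℕ) (z : Torus) : Torus := if Even k then -z else z

lemma sg_continuous (k : ℕ) : Continuous (sg k) := by
  unfold sg; split_ifs <;> fun_prop

lemma sg_fourier (ν : Measure Torus) {q : ℝ}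
    (hq : ∀ n : ℤ, n ≠ 0 → ‖∫ a, fourier n a ∂ν‖ ≤ q) (k : ℕ) (x : Torus) (n : ℤ) (hn : n ≠ 0) :
    ‖∫ a, fourier n (sg k (x + a)) ∂ν‖ ≤ q := by
  have key : ∀ m : ℤ, m ≠ 0 → ‖∫ a, fourier m (x + a) ∂ν‖ ≤ q := by
    intro m hm
    have : ∀ a, fourier m (x + a) = fourier m x * fourier m a := by
      intro a; rw [fourier_eq_ec, fourier_eq_ec, fourier_eq_ec, ec_add, mul_zpow]
    simp_rw [this]
    rw [integral_const_mul, norm_mul, fourier_eq_ec m x, norm_zpow, ec_norm, one_zpow, one_mul]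
    exact hq m hm
  unfold sg
  split_ifs
  · have : ∀ a, fourier n (-(x + a)) = fourier (-n) (x + a) := by
      intro a; rw [fourier_eq_ec, fourier_eq_ec, ec_neg, inv_zpow, zpow_neg]
    simp_rw [this]
    exact key _ (neg_ne_zero.2 hn)
  · exact key n hn

lemma sg_integral (k : ℕ) (x y : Torus) (H : Torus → ℝ) :
    ∫ a, H (sg k (x + a) + y) ∂(volume : Measure Torus) = 2 * Real.pi * ∫ a, H a ∂mh := by
  have e : ∫ a, H (sg k (x + a) + y) ∂(volume : Measure Torus) = ∫ a, H a ∂(volume : Measure Torus) := by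
    unfold sg
    split_ifs
    · rw [integral_add_left_eq_self (fun a => H (-a + y)) x]
      rw [integral_neg_eq_self (fun a => H (a + y))]
      exact integral_add_right_eq_self H y
    · rw [integral_add_left_eq_self (fun a => H (a + y)) x]
      exact integral_add_right_eq_self H y
  rw [e, AddCircle.integral_haarAddCircle, smul_eq_mul, mul_inv_cancel_left₀ (by positivity)]

section
variable {t r : ℝ} (ht0 : 0 < t) (hr0 : 0 < r) (hr1 : r < 1) (hrt : r^2 + t^2 = 1)
include ht0 hr0 hr1 hrt

lemma Phi_cont (ν : Measure Torus) [IsProbabilityMeasure ν] {β : ℕ → Torus → Torus}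
    (hβ : ∀ n, Continuous (β n)) (s : ℝ) (n : ℕ) : Continuous (Phi t r ν β s n) := by
  induction n with
  | zero => exact continuous_const
  | succ n ih => exact Mop_continuous ν (hβ n) (Kop_continuous ht0 hr0 hr1 hrt s ih)

lemma Phi_nonneg (ν : Measure Torus) (β : ℕ → Torus → Torus) (s : ℝ) (n : ℕ) (y : Torus) :
    0 ≤ Phi t r ν β s n y := by
  induction n generalizing y with
  | zero => exact zero_le_one
  | succ n ih => exact Mop_nonneg ht0 hr0 hr1 hrt _ _ (Kop_nonneg ht0 hr0 hr1 hrt s ih) y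

lemma Phi_one_decay (ν : Measure Torus) [IsProbabilityMeasure ν] {q : ℝ} (hq0 : 0 ≤ q) (hq1 : q < 1) :
    ∃ C > (0:ℝ), ∃ q1 : ℝ, 0 < q1 ∧ q1 < 1 ∧ ∀ β : ℕ → Torus → Torus, (∀ n, Continuous (β n)) →
      (∀ (k : ℕ) (n : ℤ), n ≠ 0 → ‖∫ a, fourier n (β k a) ∂ν‖ ≤ q) →
      ∀ n, ∫ y, Phi t r ν β 1 n y ∂mh ≤ C * q1 ^ n := by
  have hκ0 : 0 ≤ ∫ y, Gf t r y ∂mh := integral_nonneg fun y => (Gf_pos ht0 hr0 hr1 hrt y).le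
  have hκ1 := kappa_lt ht0 hr0 hr1 hrt
  have hT := fun (β β' : Torus → Torus) hβ hβ' h h' (F : Torus → ℝ) hF hF0 =>
    two_step ht0 hr0 hr1 hrt ν (β := β) (β' := β') hβ hβ' hq0 hq1 h h' (F := F) hF hF0
  set q' := (1 - (1 - q^2) * ((1 - ∫ y, Gf t r y ∂mh) / 2) ^ 2) with hq'
  have hqq : 0 < 1 - q ^ 2 := by nlinarith
  have hd : 0 < ((1 - ∫ y, Gf t r y ∂mh) / 2) ^ 2 := by
    have : 0 < (1 - ∫ y, Gf t r y ∂mh) / 2 := by linarith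
    positivity
  have hd1 : ((1 - ∫ y, Gf t r y ∂mh) / 2) ^ 2 < 1 := by nlinarith
  have hq'1 : q' < 1 := by rw [hq']; nlinarith
  have hq'0 : 0 < q' := by rw [hq']; nlinarith [sq_nonneg q]
  clear_value q'
  obtain ⟨ρ, hρ0, hρ⟩ : ∃ ρ : ℝ, 0 < ρ ∧ ρ ^ 2 = q' := ⟨√q', Real.sqrt_pos.2 hq'0, Real.sq_sqrt hq'0.le⟩
  have hρ1 : ρ < 1 := by nlinarith
  obtain ⟨σ, hσ0, hσ⟩ : ∃ σ : ℝ, 0 < σ ∧ σ ^ 2 = ρ := ⟨√ρ, Real.sqrt_pos.2 hρ0, Real.sq_sqrt hρ0.le⟩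
  have hσ1 : σ < 1 := by nlinarith
  refine ⟨σ⁻¹, by positivity, σ, hσ0, hσ1, ?_⟩
  intro β hβ hcoef n
  have hN : ∀ n, ∫ y, Phi t r ν β 1 n y ^ 2 ∂mh ≤ ρ⁻¹ * ρ ^ n := by
    have h0 : ∫ y, Phi t r ν β 1 0 y ^ 2 ∂mh = 1 := by simp [Phi]
    intro n
    induction n using Nat.twoStepInduction with
    | zero => rw [h0, pow_zero, mul_one]; exact (one_le_inv₀ hρ0).2 hρ1.le
    | one =>
      have := (hT _ _ (hβ 0) (hβ 1) (hcoef 0) (hcoef 1) _ (Phi_cont ht0 hr0 hr1 hrt ν hβ 1 0)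
        (Phi_nonneg ht0 hr0 hr1 hrt ν β 1 0)).1
      rw [h0] at this
      rw [pow_one, inv_mul_cancel₀ hρ0.ne']
      exact this
    | more n ih1 ih2 =>
      have := (hT _ _ (hβ n) (hβ (n+1)) (hcoef n) (hcoef (n+1)) _ (Phi_cont ht0 hr0 hr1 hrt ν hβ 1 n)
        (Phi_nonneg ht0 hr0 hr1 hrt ν β 1 n)).2
      refine this.trans ?_
      rw [← hρ]
      calc ρ ^ 2 * ∫ y, Phi t r ν β 1 n y ^ 2 ∂mh ≤ ρ ^ 2 * (ρ⁻¹ * ρ ^ n) := by gcongr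
        _ = _ := by ring
  have hcs := cs_int (Phi_cont ht0 hr0 hr1 hrt ν hβ 1 n) (continuous_const (y := (1:ℝ)))
  simp only [mul_one, one_pow, integral_const, probReal_univ, one_smul] at hcs
  refine (abs_le_of_sq_le_sq' (hcs.trans ((hN n).trans (le_of_eq ?_))) (by positivity)).2
  rw [← hσ]; ring

lemma jensen_rpow (μ : Measure Torus) [IsProbabilityMeasure μ] {s : ℝ} (hs0 : 0 < s) (hs1 : s ≤ 1)
    {f : Torus → ℝ} (hf : Continuous f) (hf0 : ∀ y, 0 ≤ f y) :
    ∫ y, f y ^ s ∂μ ≤ (∫ y, f y ∂μ) ^ s := by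
  have := (Real.concaveOn_rpow hs0.le hs1).le_map_integral (μ := μ) (f := f)
    (Real.continuous_rpow_const hs0.le).continuousOn isClosed_Ici
    (Eventually.of_forall hf0) (cont_integrable _ hf)
    (cont_integrable _ ((Real.continuous_rpow_const hs0.le).comp hf))
  exact this

lemma Phi_jensen (ν : Measure Torus) [IsProbabilityMeasure ν] {β : ℕ → Torus → Torus}
    (hβ : ∀ n, Continuous (β n)) {s : ℝ} (hs0 : 0 < s) (hs1 : s ≤ 1) (n : ℕ) (y : Torus) :
    Phi t r ν β s n y ≤ Phi t r ν β 1 n y ^ s := by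
  induction n generalizing y with
  | zero => simp [Phi]
  | succ n ih =>
    have c1 := Kop_continuous ht0 hr0 hr1 hrt 1 (Phi_cont ht0 hr0 hr1 hrt ν hβ 1 n)
    have cs := Kop_continuous ht0 hr0 hr1 hrt s (Phi_cont ht0 hr0 hr1 hrt ν hβ s n)
    have hb := hβ n
    have p0 := Kop_nonneg ht0 hr0 hr1 hrt 1 (Phi_nonneg ht0 hr0 hr1 hrt ν β 1 n)
    have hc : Continuous fun a => Kop t r 1 (Phi t r ν β 1 n) (β n a + y) := c1.comp (by fun_prop)
    refine le_trans ?_ (jensen_rpow ht0 hr0 hr1 hrt ν hs0 hs1 hc fun a => p0 _)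
    apply integral_mono (cont_integrable _ (cs.comp (by fun_prop)))
      (cont_integrable _ ((Real.continuous_rpow_const hs0.le).comp hc))
    intro a
    change Gf t r (β n a + y) ^ s * Phi t r ν β s n (mob r (β n a + y)) ≤
      (Gf t r (β n a + y) ^ (1:ℝ) * Phi t r ν β 1 n (mob r (β n a + y))) ^ s
    rw [Real.rpow_one, Real.mul_rpow (Gf_pos ht0 hr0 hr1 hrt _).le (Phi_nonneg ht0 hr0 hr1 hrt ν β 1 n _)]
    exact mul_le_mul_of_nonneg_left (ih _) (Real.rpow_nonneg (Gf_pos ht0 hr0 hr1 hrt _).le _)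

lemma Gf_le (y : Torus) : Gf t r y ≤ t / (1 - r) := by
  unfold Gf
  rw [← inv_div]
  have : 0 < (1 - r) / t := div_pos (by linarith) ht0
  exact inv_anti₀ this (gf_ge ht0 hr0 hr1 hrt y)

lemma Phi_sup (ν : Measure Torus) [IsProbabilityMeasure ν]
    (hac : (volume : Measure Torus).withDensity (ν.rnDeriv volume) ≠ 0) :
    ∃ s : ℝ, 0 < s ∧ s ≤ 1 ∧ ∃ A > (0:ℝ), ∃ q2 : ℝ, 0 < q2 ∧ q2 < 1 ∧ ∀ (x y : Torus) (n : ℕ),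
      Phi t r ν (fun k a => sg k (x + a)) s n y ≤ A * q2 ^ n := by
  obtain ⟨q, hq0, hq1, hq⟩ := fourier_gap ν hac
  obtain ⟨C, hC, q1, hq10, hq11, hdec⟩ := Phi_one_decay ht0 hr0 hr1 hrt ν hq0 hq1
  obtain ⟨D, ν₂, hD, hD1, hfin2, hν, hne⟩ := nu_decomp ν hac
  set ν₁ := (volume : Measure Torus).withDensity D with hν₁
  have hfin1 : IsFiniteMeasure ν₁ := isFiniteMeasure_of_le ν (by rw [hν]; exact Measure.le_add_right le_rfl)
  have hp : 0 < ν₁.real Set.univ := by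
    rw [measureReal_def, ENNReal.toReal_pos_iff]
    exact ⟨by rw [pos_iff_ne_zero]; simpa using hne, measure_lt_top _ _⟩
  have htot : ν₁.real Set.univ + ν₂.real Set.univ = 1 := by
    rw [← measureReal_add_apply, ← hν]; simp
  have hν₁le : ν₁ ≤ volume := by
    calc ν₁ ≤ (volume : Measure Torus).withDensity 1 := withDensity_mono (Eventually.of_forall hD1)
      _ = volume := withDensity_one
  set K := t / (1 - r) with hK
  have hK1 : 1 ≤ K := by
    rw [hK, le_div_iff₀ (by linarith)]
    nlinarith
  have hK0 : 0 < K := by linarith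
  obtain ⟨s, hs0, hs1, hs⟩ : ∃ s : ℝ, 0 < s ∧ s ≤ 1 ∧ ν₂.real Set.univ * K ^ s < 1 := by
    have hc : ContinuousAt (fun s : ℝ => ν₂.real Set.univ * K ^ s) 0 :=
      ((Real.continuous_const_rpow hK0.ne').const_mul _).continuousAt
    have hlt : ν₂.real Set.univ * K ^ (0:ℝ) < 1 := by rw [Real.rpow_zero]; linarith
    have hev := hc.eventually (gt_mem_nhds hlt)
    have h1 : ∀ᶠ s : ℝ in nhdsWithin 0 (Set.Ioi 0), ν₂.real Set.univ * K ^ s < 1 :=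
      hev.filter_mono nhdsWithin_le_nhds
    have h2 : ∀ᶠ s : ℝ in nhdsWithin 0 (Set.Ioi 0), s ∈ Set.Ioc (0:ℝ) 1 := Ioc_mem_nhdsGT zero_lt_one
    obtain ⟨s, h, h'⟩ := (h1.and h2).exists
    exact ⟨s, h'.1, h'.2, h⟩
  set θ := ν₂.real Set.univ * K ^ s with hθ
  have hθ0 : 0 ≤ θ := by positivity
  set q3 := q1 ^ s with hq3
  have hq30 : 0 < q3 := Real.rpow_pos_of_pos hq10 _
  have hq31 : q3 < 1 := Real.rpow_lt_one hq10.le hq11 hs0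
  set B := K * ((1 + r) / t) ^ 2 with hB
  have hB0 : 0 < B := by have : 0 < (1 + r) / t := div_pos (by linarith) ht0
                         positivity
  set C' := 2 * Real.pi * (B * C ^ s) with hC'
  have hCs : 0 < C ^ s := Real.rpow_pos_of_pos hC _
  have hC'0 : 0 < C' := by positivity
  set q2 := (1 + max θ q3) / 2 with hq2
  have hm : max θ q3 < 1 := max_lt hs hq31
  have hθq : θ < q2 := by have := le_max_left θ q3; rw [hq2]; linarith
  have hq3q : q3 ≤ q2 := by have := le_max_right θ q3; rw [hq2]; linarith
  have hq21 : q2 < 1 := by rw [hq2]; linarith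
  have hq20 : 0 < q2 := by linarith
  set A := max 1 (C' / (q2 - θ)) with hA
  have hA1 : 1 ≤ A := le_max_left _ _
  have hAC : C' ≤ A * (q2 - θ) := by
    rw [← div_le_iff₀ (by linarith)]; exact le_max_right _ _
  refine ⟨s, hs0, hs1, A, by linarith, q2, hq20, hq21, ?_⟩
  intro x y n
  set β : ℕ → Torus → Torus := fun k a => sg k (x + a) with hβdef
  have hβ : ∀ k, Continuous (β k) := fun k => (sg_continuous k).comp (by fun_prop)
  have hmean : ∀ n, ∫ y, Phi t r ν β s n y ∂mh ≤ C ^ s * q3 ^ n := by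
    intro n
    have c1 := Phi_cont ht0 hr0 hr1 hrt ν hβ 1 n
    have p1 := Phi_nonneg ht0 hr0 hr1 hrt ν β 1 n
    calc ∫ y, Phi t r ν β s n y ∂mh ≤ ∫ y, Phi t r ν β 1 n y ^ s ∂mh := by
          apply integral_mono (cont_integrable _ (Phi_cont ht0 hr0 hr1 hrt ν hβ s n))
            (cont_integrable _ ((Real.continuous_rpow_const hs0.le).comp c1))
          exact fun y => Phi_jensen ht0 hr0 hr1 hrt ν hβ hs0 hs1 n y
      _ ≤ (∫ y, Phi t r ν β 1 n y ∂mh) ^ s := jensen_rpow ht0 hr0 hr1 hrt mh hs0 hs1 c1 p1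
      _ ≤ (C * q1 ^ n) ^ s :=
          Real.rpow_le_rpow (integral_nonneg p1) (hdec β hβ (fun k m hm => sg_fourier ν hq k x m hm) n) hs0.le
      _ = C ^ s * q3 ^ n := by
          rw [Real.mul_rpow hC.le (by positivity), hq3, ← Real.rpow_natCast, ← Real.rpow_natCast,
            ← Real.rpow_mul hq10.le, ← Real.rpow_mul hq10.le, mul_comm s]
  have hKs : ∀ y, Gf t r y ^ s ≤ K ^ s := fun y =>
    Real.rpow_le_rpow (Gf_pos ht0 hr0 hr1 hrt y).le (Gf_le ht0 hr0 hr1 hrt y) hs0.le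
  induction n generalizing y with
  | zero => simp only [Phi, pow_zero, mul_one]; exact hA1
  | succ n ih =>
    have cP := Phi_cont ht0 hr0 hr1 hrt ν hβ s n
    have pP := Phi_nonneg ht0 hr0 hr1 hrt ν β s n
    have cH := Kop_continuous ht0 hr0 hr1 hrt s cP
    have pH := Kop_nonneg ht0 hr0 hr1 hrt s pP
    set H := Kop t r s (Phi t r ν β s n) with hH
    have hb := hβ n
    have cHb : Continuous fun a => H (β n a + y) := cH.comp (by fun_prop)
    have e : Phi t r ν β s (n+1) y = ∫ a, H (β n a + y) ∂ν₁ + ∫ a, H (β n a + y) ∂ν₂ := by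
      change ∫ a, H (β n a + y) ∂ν = _
      rw [hν]; exact integral_add_measure (cont_integrable _ cHb) (cont_integrable _ cHb)
    have b2 : ∫ a, H (β n a + y) ∂ν₂ ≤ θ * (A * q2 ^ n) := by
      calc ∫ a, H (β n a + y) ∂ν₂ ≤ ∫ a, K ^ s * (A * q2 ^ n) ∂ν₂ := by
            apply integral_mono (cont_integrable _ cHb) (integrable_const _)
            intro a
            exact mul_le_mul (hKs _) (ih _) (pP _) (by positivity)
        _ = _ := by rw [integral_const, smul_eq_mul, hθ]; ring
    have b1 : ∫ a, H (β n a + y) ∂ν₁ ≤ C' * q3 ^ n := by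
      calc ∫ a, H (β n a + y) ∂ν₁ ≤ ∫ a, H (β n a + y) ∂(volume : Measure Torus) :=
            integral_mono_measure hν₁le (Eventually.of_forall fun a => pH _) (cont_integrable _ cHb)
        _ = 2 * Real.pi * ∫ a, H a ∂mh := sg_integral n x y H
        _ ≤ 2 * Real.pi * (B * (C ^ s * q3 ^ n)) := by
            gcongr
            calc ∫ a, H a ∂mh ≤ ∫ a, B * (Gf t r a ^ 2 * Phi t r ν β s n (mob r a)) ∂mh := by
                  have hG := Gf_continuous ht0 hr0 hr1 hrt
                  have hmb := mob_continuous hr0 hr1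
                  apply integral_mono (cont_integrable _ cH)
                    (cont_integrable _ (((hG.pow 2).mul (cP.comp hmb)).const_mul B))
                  intro a
                  change Gf t r a ^ s * Phi t r ν β s n (mob r a) ≤
                    B * (Gf t r a ^ 2 * Phi t r ν β s n (mob r a))
                  rw [← mul_assoc]
                  apply mul_le_mul_of_nonneg_right _ (pP _)
                  have g1 := hKs a
                  have g2 : K ^ s ≤ K := by
                    conv_rhs => rw [← Real.rpow_one K]
                    exact Real.rpow_le_rpow_of_exponent_le hK1 hs1
                  have g3 := gf_le ht0 hr0 hr1 hrt a
                  have g4 := gf_pos ht0 hr0 hr1 hrt a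
                  have g5 : gf t r a ^ 2 ≤ ((1 + r) / t) ^ 2 := by gcongr
                  have g6 : Gf t r a ^ 2 * gf t r a ^ 2 = 1 := by
                    unfold Gf; field_simp
                  have g7 := Gf_pos ht0 hr0 hr1 hrt a
                  calc Gf t r a ^ s ≤ K * (Gf t r a ^ 2 * gf t r a ^ 2) := by rw [g6]; linarith
                    _ ≤ K * (Gf t r a ^ 2 * ((1 + r) / t) ^ 2) := by gcongr
                    _ = _ := by rw [hB]; ring
              _ = B * ∫ a, Phi t r ν β s n a ∂mh := by
                  rw [integral_const_mul, cov_integral ht0 hr0 hr1 hrt cP]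
              _ ≤ _ := by gcongr; exact hmean n
        _ = _ := by rw [hC']; ring
    rw [e]
    have : q3 ^ n ≤ q2 ^ n := by gcongr
    calc _ ≤ C' * q3 ^ n + θ * (A * q2 ^ n) := add_le_add b1 b2
      _ ≤ (A * (q2 - θ)) * q2 ^ n + θ * (A * q2 ^ n) := by gcongr
      _ = _ := by ring
end

end

section
set_option linter.unusedSectionVars false

section
variable {ι : Type*} [DecidableEq ι] (ν : Measure Torus) [IsProbabilityMeasure ν]

lemma resample_map (j : ι) :
    Measure.map (fun p : (ι → Torus) × Torus => Function.update p.1 j p.2)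
      ((Measure.infinitePi fun _ : ι => ν).prod ν) = Measure.infinitePi fun _ : ι => ν := by
  have hm : Measurable (fun p : (ι → Torus) × Torus => Function.update p.1 j p.2) := by
    rw [measurable_pi_iff]
    intro i
    by_cases h : i = j
    · subst h; simpa using measurable_snd
    · simp only [Function.update_of_ne h]; fun_prop
  apply Measure.eq_infinitePi
  intro s A hA
  rw [Measure.map_apply hm (MeasurableSet.pi s.countable_toSet fun i _ => hA i)]
  have hpre : (fun p : (ι → Torus) × Torus => Function.update p.1 j p.2) ⁻¹' (Set.pi s A)
      = (Set.pi (s.erase j) A) ×ˢ (if j ∈ s then A j else Set.univ) := by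
    ext ⟨ω, a⟩
    simp only [Set.mem_preimage, Set.mem_pi, Finset.mem_coe, Set.mem_prod, Finset.mem_erase]
    constructor
    · intro h
      refine ⟨fun i hi => ?_, ?_⟩
      · have := h i hi.2
        rwa [Function.update_of_ne hi.1] at this
      · split_ifs with hj
        · simpa using h j hj
        · trivial
    · rintro ⟨h1, h2⟩ i hi
      by_cases hij : i = j
      · subst hij
        simpa [hi] using h2
      · rw [Function.update_of_ne hij]; exact h1 i ⟨hij, hi⟩
  rw [hpre, Measure.prod_prod, Measure.infinitePi_pi _ (fun i _ => hA i)]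
  split_ifs with hj
  · rw [Finset.prod_erase_mul _ _ hj]
  · rw [Finset.erase_eq_of_notMem hj]; simp

lemma measurable_upd (j : ι) : Measurable (fun p : (ι → Torus) × Torus => Function.update p.1 j p.2) := by
  rw [measurable_pi_iff]
  intro i
  by_cases h : i = j
  · subst h; simpa using measurable_snd
  · simp only [Function.update_of_ne h]; fun_prop

lemma resample (j : ι) {H : (ι → Torus) → ENNReal} (hH : Measurable H) :
    ∫⁻ ω, H ω ∂(Measure.infinitePi fun _ : ι => ν)
      = ∫⁻ ω, ∫⁻ a, H (Function.update ω j a) ∂ν ∂(Measure.infinitePi fun _ : ι => ν) := by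
  conv_lhs => rw [← resample_map ν j]
  rw [lintegral_map hH (measurable_upd j)]
  exact lintegral_prod (fun p : (ι → Torus) × Torus => H (Function.update p.1 j p.2))
    (hH.comp (measurable_upd j)).aemeasurable

lemma infinitePi_reindex {κ : Type*} (j : κ → ι) (hj : Function.Injective j) :
    Measure.map (fun (ω : ι → Torus) k => ω (j k)) (Measure.infinitePi fun _ : ι => ν)
      = Measure.infinitePi fun _ : κ => ν := by
  apply Measure.eq_infinitePi
  intro s A hA
  rw [Measure.map_apply (by fun_prop) (MeasurableSet.pi s.countable_toSet fun i _ => hA i)]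
  classical
  let A' : ι → Set Torus := fun i => if h : ∃ k, j k = i then A h.choose else Set.univ
  have hA'j : ∀ k, A' (j k) = A k := by
    intro k
    have h : ∃ k', j k' = j k := ⟨k, rfl⟩
    simp only [A', dif_pos h]
    rw [hj h.choose_spec]
  have hpre : (fun (ω : ι → Torus) k => ω (j k)) ⁻¹' (Set.pi s A) = Set.pi (s.image j) A' := by
    ext ω
    simp [hA'j]
  rw [hpre, Measure.infinitePi_pi, Finset.prod_image (fun a _ b _ h => hj h)]
  · simp [hA'j]
  · intro i _
    simp only [A']
    split_ifs
    · exact hA _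
    · exact MeasurableSet.univ
end

/-- product along backward orbit -/
def Rb (t r s : ℝ) (θ : ℕ → Torus) : ℕ → Torus → ℝ
  | 0 => fun _ => 1
  | n + 1 => fun y => Gf t r (sg n (θ n) + y) ^ s * Rb t r s θ n (mob r (sg n (θ n) + y))

/-- backward orbit -/
def bk (r : ℝ) (θ : ℕ → Torus) (N : ℕ) : ℕ → Torus
  | 0 => 0
  | m + 1 => mob r (sg (N - (m + 1)) (θ (N - (m + 1))) + bk r θ N m)

/-- forward orbit -/
def fw (r : ℝ) (θ : ℕ → Torus) (y : Torus) : ℕ → Torus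
  | 0 => y
  | k + 1 => mob r (fw r θ y k) - sg k (θ k)

/-- forward product -/
def rho (t r : ℝ) (θ : ℕ → Torus) (y : Torus) (n : ℕ) : ℝ := ∏ k ∈ Finset.range n, gf t r (fw r θ y k)

/-- truncated sums -/
def TN (t r s w : ℝ) (θ : ℕ → Torus) (N : ℕ) : ENNReal :=
  ∑ n ∈ Finset.range (N + 1), ENNReal.ofReal (w ^ n * rho t r θ (bk r θ N N) n ^ s)

/-- bad set -/
def Bad (t r s w : ℝ) : Set (ℕ → Torus) := {θ | liminf (TN t r s w θ) atTop = ⊤}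

section
variable {t r : ℝ} (ht0 : 0 < t) (hr0 : 0 < r) (hr1 : r < 1) (hrt : r^2 + t^2 = 1)
include ht0 hr0 hr1 hrt

lemma sg_measurable (k : ℕ) : Measurable (sg k) := (sg_continuous k).measurable

lemma Rb_moment (ν : Measure Torus) [IsProbabilityMeasure ν] (x : Torus) {s : ℝ} (n : ℕ)
    (W : (ℕ → Torus) → ENNReal) (Y : (ℕ → Torus) → Torus) (hW : Measurable W) (hY : Measurable Y)
    (hWi : ∀ i < n, ∀ ω a, W (Function.update ω i a) = W ω)
    (hYi : ∀ i < n, ∀ ω a, Y (Function.update ω i a) = Y ω) :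
    ∫⁻ ω, W ω * ENNReal.ofReal (Rb t r s (fun k => x + ω k) n (Y ω)) ∂(Measure.infinitePi fun _ : ℕ => ν)
    = ∫⁻ ω, W ω * ENNReal.ofReal (Phi t r ν (fun k a => sg k (x + a)) s n (Y ω))
        ∂(Measure.infinitePi fun _ : ℕ => ν) := by
  have hG : Measurable (fun y => Gf t r y ^ s) :=
    (Gf_continuous ht0 hr0 hr1 hrt).measurable.pow_const s
  have hm := (mob_continuous hr0 hr1).measurable
  have hβ : ∀ k, Continuous ((fun (k : ℕ) (a : Torus) => sg k (x + a)) k) :=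
    fun k => (sg_continuous k).comp (by fun_prop)
  induction n generalizing W Y with
  | zero => simp [Rb, Phi]
  | succ n ih =>
    have hsg := sg_measurable ht0 hr0 hr1 hrt n
    have hz : Measurable fun ω : ℕ → Torus => sg n (x + ω n) + Y ω := by fun_prop
    set P := Phi t r ν (fun k a => sg k (x + a)) s n with hP
    have hPc : Continuous P := Phi_cont ht0 hr0 hr1 hrt ν hβ s n
    have hPm : Measurable P := hPc.measurable
    have e1 : ∀ ω : ℕ → Torus, W ω * ENNReal.ofReal (Rb t r s (fun k => x + ω k) (n+1) (Y ω))
        = (W ω * ENNReal.ofReal (Gf t r (sg n (x + ω n) + Y ω) ^ s)) *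
          ENNReal.ofReal (Rb t r s (fun k => x + ω k) n (mob r (sg n (x + ω n) + Y ω))) := by
      intro ω
      simp only [Rb]
      rw [ENNReal.ofReal_mul (Real.rpow_nonneg (Gf_pos ht0 hr0 hr1 hrt _).le _), mul_assoc]
    simp_rw [e1]
    rw [ih (fun ω => W ω * ENNReal.ofReal (Gf t r (sg n (x + ω n) + Y ω) ^ s))
      (fun ω => mob r (sg n (x + ω n) + Y ω)) (hW.mul (hG.comp hz).ennreal_ofReal) (hm.comp hz)]
    · rw [resample ν n]
      · congr 1
        ext ω
        have hc : Continuous fun a : Torus => Kop t r s P (sg n (x + a) + Y ω) := by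
          have h1 := hβ n
          exact (Kop_continuous ht0 hr0 hr1 hrt s hPc).comp (h1.add continuous_const)
        have e2 : ∀ a, W (Function.update ω n a) *
            ENNReal.ofReal (Gf t r (sg n (x + Function.update ω n a n) + Y (Function.update ω n a)) ^ s) *
            ENNReal.ofReal (P (mob r (sg n (x + Function.update ω n a n) + Y (Function.update ω n a))))
            = W ω * ENNReal.ofReal (Kop t r s P (sg n (x + a) + Y ω)) := by
          intro a
          rw [hWi n (Nat.lt_succ_self n), hYi n (Nat.lt_succ_self n), Function.update_self, mul_assoc,
            ← ENNReal.ofReal_mul (Real.rpow_nonneg (Gf_pos ht0 hr0 hr1 hrt _).le _)]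
          rfl
        simp_rw [e2]
        rw [lintegral_const_mul _ hc.measurable.ennreal_ofReal]
        congr 1
        rw [← ofReal_integral_eq_lintegral_ofReal (cont_integrable _ hc)
          (Eventually.of_forall fun a => Kop_nonneg ht0 hr0 hr1 hrt s (Phi_nonneg ht0 hr0 hr1 hrt ν _ s n) _)]
        rfl
      · exact (hW.mul (hG.comp hz).ennreal_ofReal).mul (hPm.comp (hm.comp hz)).ennreal_ofReal
    · intro i hi ω a
      rw [hWi i (by omega), hYi i (by omega), Function.update_of_ne (by omega)]
    · intro i hi ω a
      rw [hYi i (by omega), Function.update_of_ne (by omega)]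

lemma fw_bk (θ : ℕ → Torus) (N k : ℕ) (hk : k ≤ N) :
    fw r θ (bk r θ N N) k = bk r θ N (N - k) := by
  induction k with
  | zero => rfl
  | succ k ih =>
    rw [fw, ih (by omega)]
    obtain ⟨m, hm⟩ : ∃ m, N - k = m + 1 := ⟨N - k - 1, by omega⟩
    rw [hm, bk, mob_mob ht0 hr0 hr1 hrt]
    have : N - (m + 1) = k := by omega
    rw [this, add_sub_cancel_left]
    congr 1; omega

lemma rho_bk (θ : ℕ → Torus) (s : ℝ) (N n : ℕ) (hn : n ≤ N) :
    rho t r θ (bk r θ N N) n ^ s = Rb t r s θ n (bk r θ N (N - n)) := by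
  induction n with
  | zero => simp [rho, Rb]
  | succ n ih =>
    have ih := ih (by omega)
    unfold rho at ih ⊢
    rw [Finset.prod_range_succ, Real.mul_rpow (Finset.prod_nonneg fun k _ => (gf_pos ht0 hr0 hr1 hrt _).le)
      (gf_pos ht0 hr0 hr1 hrt _).le, ih, fw_bk ht0 hr0 hr1 hrt θ N n (by omega), Rb]
    have hb : bk r θ N (N - n) = mob r (sg n (θ n) + bk r θ N (N - (n + 1))) := by
      obtain ⟨m, hm⟩ : ∃ m, N - n = m + 1 := ⟨N - n - 1, by omega⟩
      rw [hm, bk]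
      have h1 : N - (m + 1) = n := by omega
      have h2 : N - (n + 1) = m := by omega
      rw [h1, h2]
    rw [hb, mul_comm]
    congr 2
    unfold Gf
    exact eq_inv_of_mul_eq_one_left (gf_mob ht0 hr0 hr1 hrt _)

lemma fw_cont (n : ℕ) : Continuous fun p : (ℕ → Torus) × Torus => fw r p.1 p.2 n := by
  induction n with
  | zero => exact continuous_snd
  | succ n ih =>
    exact ((mob_continuous hr0 hr1).comp ih).sub ((sg_continuous n).comp (by fun_prop))

lemma rho_cont (n : ℕ) : Continuous fun p : (ℕ → Torus) × Torus => rho t r p.1 p.2 n :=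
  continuous_finsetProd _ fun k _ => gf_continuous.comp (fw_cont ht0 hr0 hr1 hrt k)

lemma fw_cont2 (θ : ℕ → Torus) (n : ℕ) : Continuous fun y : Torus => fw r θ y n := by
  induction n with
  | zero => exact continuous_id
  | succ n ih => exact ((mob_continuous hr0 hr1).comp ih).sub continuous_const

lemma rho_cont2 (θ : ℕ → Torus) (n : ℕ) : Continuous fun y : Torus => rho t r θ y n :=
  continuous_finsetProd _ fun k _ => gf_continuous.comp (fw_cont2 ht0 hr0 hr1 hrt θ k)

lemma bk_cont (N m : ℕ) : Continuous fun θ : ℕ → Torus => bk r θ N m := by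
  induction m with
  | zero => exact continuous_const
  | succ n ih =>
    exact (mob_continuous hr0 hr1).comp (((sg_continuous _).comp (by fun_prop)).add ih)

lemma rho_pos (θ : ℕ → Torus) (y : Torus) (n : ℕ) : 0 < rho t r θ y n :=
  Finset.prod_pos fun k _ => gf_pos ht0 hr0 hr1 hrt _

lemma TN_meas (s w : ℝ) (N : ℕ) : Measurable fun θ => TN t r s w θ N := by
  unfold TN
  apply Finset.measurable_sum
  intro n _
  have : Measurable fun θ : ℕ → Torus => rho t r θ (bk r θ N N) n :=
    ((rho_cont ht0 hr0 hr1 hrt n).comp (continuous_id.prodMk (bk_cont ht0 hr0 hr1 hrt N N))).measurable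
  exact ((this.pow_const s).const_mul _).ennreal_ofReal

lemma Bad_meas (s w : ℝ) : MeasurableSet (Bad t r s w) :=
  (Measurable.liminf (fun N => TN_meas ht0 hr0 hr1 hrt s w N)) (measurableSet_singleton ⊤)

lemma bk_update (ω : ℕ → Torus) (N m i : ℕ) (hm : m ≤ N) (hi : i < N - m) (x a : Torus) :
    bk r (fun k => x + Function.update ω i a k) N m = bk r (fun k => x + ω k) N m := by
  induction m with
  | zero => rfl
  | succ m ih =>
    rw [bk, bk, ih (by omega) (by omega), Function.update_of_ne (by omega)]

lemma bad_null (ν : Measure Torus) [IsProbabilityMeasure ν]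
    (hac : (volume : Measure Torus).withDensity (ν.rnDeriv volume) ≠ 0) :
    ∃ s w : ℝ, 0 < s ∧ 1 < w ∧ ∀ x : Torus, ∀ᵐ ω ∂(Measure.infinitePi fun _ : ℕ => ν),
      (fun k => x + ω k) ∉ Bad t r s w := by
  obtain ⟨s, hs0, hs1, A, hA, q, hq0, hq1, hsup⟩ := Phi_sup ht0 hr0 hr1 hrt ν hac
  obtain ⟨w, hw1, hwq⟩ : ∃ w : ℝ, 1 < w ∧ w * q < 1 := by
    refine ⟨(1 + 1 / q) / 2, ?_, ?_⟩
    · have : 1 < 1 / q := by rw [lt_div_iff₀ hq0]; linarith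
      linarith
    · field_simp; linarith
  refine ⟨s, w, hs0, hw1, fun x => ?_⟩
  have hmeas : ∀ N, Measurable fun ω : ℕ → Torus => TN t r s w (fun k => x + ω k) N :=
    fun N => (TN_meas ht0 hr0 hr1 hrt s w N).comp (by fun_prop)
  have hb : ∀ N, ∫⁻ ω, TN t r s w (fun k => x + ω k) N ∂(Measure.infinitePi fun _ : ℕ => ν)
      ≤ ENNReal.ofReal (A * (1 - w * q)⁻¹) := by
    intro N
    unfold TN
    rw [lintegral_finsetSum]
    · calc _ ≤ ∑ n ∈ Finset.range (N + 1), ENNReal.ofReal (A * (w * q) ^ n) := by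
            apply Finset.sum_le_sum
            intro n hn
            have hn : n ≤ N := by simp at hn; omega
            have e : ∀ ω : ℕ → Torus, ENNReal.ofReal (w ^ n * rho t r (fun k => x + ω k)
                (bk r (fun k => x + ω k) N N) n ^ s) =
                ENNReal.ofReal (w ^ n) * ENNReal.ofReal (Rb t r s (fun k => x + ω k) n
                  (bk r (fun k => x + ω k) N (N - n))) := by
              intro ω
              rw [rho_bk ht0 hr0 hr1 hrt _ s N n hn, ENNReal.ofReal_mul (by positivity)]
            simp_rw [e]
            rw [Rb_moment ht0 hr0 hr1 hrt ν x n (fun _ => ENNReal.ofReal (w ^ n))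
              (fun ω => bk r (fun k => x + ω k) N (N - n)) measurable_const
              ((bk_cont ht0 hr0 hr1 hrt N (N - n)).measurable.comp (by fun_prop)) (fun _ _ _ _ => rfl)
              (fun i hi ω a => bk_update ht0 hr0 hr1 hrt ω N (N - n) i (by omega) (by omega) x a)]
            calc _ ≤ ∫⁻ ω, ENNReal.ofReal (w ^ n) * ENNReal.ofReal (A * q ^ n)
                    ∂(Measure.infinitePi fun _ : ℕ => ν) := by
                  apply lintegral_mono
                  intro ω
                  dsimp only
                  gcongr
                  exact hsup x _ n
              _ = _ := by
                  rw [lintegral_const, measure_univ, mul_one, ← ENNReal.ofReal_mul (by positivity)]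
                  congr 1
                  rw [mul_pow]; ring
        _ = ENNReal.ofReal (∑ n ∈ Finset.range (N + 1), A * (w * q) ^ n) := by
            rw [ENNReal.ofReal_sum_of_nonneg]
            intro n _; positivity
        _ ≤ _ := by
            apply ENNReal.ofReal_le_ofReal
            rw [← Finset.mul_sum]
            gcongr
            have h0 : 0 ≤ w * q := by positivity
            rw [← tsum_geometric_of_lt_one h0 hwq]
            exact (summable_geometric_of_lt_one h0 hwq).sum_le_tsum _ (fun n _ => by positivity)
    · intro n _
      have : Measurable fun θ : ℕ → Torus => rho t r θ (bk r θ N N) n :=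
        ((rho_cont ht0 hr0 hr1 hrt n).comp (continuous_id.prodMk (bk_cont ht0 hr0 hr1 hrt N N))).measurable
      have h2 : Measurable fun ω : ℕ → Torus => rho t r (fun k => x + ω k) (bk r (fun k => x + ω k) N N) n :=
        this.comp (by fun_prop : Measurable fun (ω : ℕ → Torus) k => x + ω k)
      exact ((h2.pow_const s).const_mul _).ennreal_ofReal
  have hfin : ∫⁻ ω, liminf (fun N => TN t r s w (fun k => x + ω k) N) atTop
      ∂(Measure.infinitePi fun _ : ℕ => ν) ≠ ⊤ := by
    refine ne_top_of_le_ne_top ?_ (lintegral_liminf_le hmeas)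
    refine ne_top_of_le_ne_top (ENNReal.ofReal_ne_top (r := A * (1 - w * q)⁻¹)) ?_
    refine (liminf_le_liminf (v := fun _ => ENNReal.ofReal (A * (1 - w * q)⁻¹)) (Eventually.of_forall hb)).trans ?_
    simp
  filter_upwards [ae_lt_top (Measurable.liminf hmeas) hfin] with ω hω
  exact fun h => hω.ne h

lemma not_bad {s w : ℝ} (hs : 0 < s) (hw : 1 < w) {θ : ℕ → Torus} (h : θ ∉ Bad t r s w) :
    ∃ y : Torus, ∃ C > (0:ℝ), ∃ η : ℝ, 0 < η ∧ η < 1 ∧ ∀ n, rho t r θ y n ≤ C * η ^ n := by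
  have hlt : liminf (TN t r s w θ) atTop < ⊤ := lt_top_iff_ne_top.2 h
  obtain ⟨M, hM1, hM2⟩ := exists_between hlt
  have hfreq := frequently_lt_of_liminf_lt (by isBoundedDefault) hM1
  set F := atTop ⊓ 𝓟 {N | TN t r s w θ N < M}
  have : NeBot F := frequently_mem_iff_neBot.1 hfreq
  obtain ⟨y, hy⟩ := exists_clusterPt_of_compactSpace (map (fun N => bk r θ N N) F)
  have hw0 : 0 < w := by linarith
  have key : ∀ n, w ^ n * rho t r θ y n ^ s ≤ M.toReal := by
    intro n
    have hc : Continuous fun y => w ^ n * rho t r θ y n ^ s := by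
      exact ((rho_cont2 ht0 hr0 hr1 hrt θ n).rpow_const fun y => Or.inr hs.le).const_mul _
    have hcl : IsClosed {y | w ^ n * rho t r θ y n ^ s ≤ M.toReal} := isClosed_le hc continuous_const
    refine isClosed_iff_clusterPt.1 hcl y (hy.mono (le_principal_iff.2 ?_))
    rw [mem_map]
    have h1 : {N | n ≤ N} ∈ F := mem_inf_of_left (mem_atTop n)
    have h2 : {N | TN t r s w θ N < M} ∈ F := mem_inf_of_right (mem_principal_self _)
    filter_upwards [h1, h2] with N hN hT
    change w ^ n * rho t r θ (bk r θ N N) n ^ s ≤ M.toReal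
    change n ≤ N at hN
    change TN t r s w θ N < M at hT
    have h3 : ENNReal.ofReal (w ^ n * rho t r θ (bk r θ N N) n ^ s) ≤ M := by
      refine le_trans ?_ hT.le
      exact Finset.single_le_sum (f := fun n => ENNReal.ofReal (w ^ n * rho t r θ (bk r θ N N) n ^ s))
        (fun i _ => zero_le) (Finset.mem_range.2 (by omega))
    exact (ENNReal.ofReal_le_iff_le_toReal hM2.ne).1 h3
  have hM0 : 0 < M.toReal := by
    have := key 0
    have h1 : rho t r θ y 0 = 1 := by simp [rho]
    rw [h1] at this
    norm_num at this
    linarith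
  refine ⟨y, M.toReal ^ (1/s), by positivity, w⁻¹ ^ (1/s), by positivity,
    Real.rpow_lt_one (by positivity) (inv_lt_one_of_one_lt₀ hw) (by positivity), fun n => ?_⟩
  have hp := rho_pos ht0 hr0 hr1 hrt θ y n
  have h1 : rho t r θ y n ^ s ≤ M.toReal * w⁻¹ ^ n := by
    rw [inv_pow, ← div_eq_mul_inv, le_div_iff₀ (by positivity), mul_comm]; exact key n
  calc rho t r θ y n = (rho t r θ y n ^ s) ^ (1/s) := by
        rw [← Real.rpow_mul hp.le, mul_one_div_cancel hs.ne', Real.rpow_one]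
    _ ≤ (M.toReal * w⁻¹ ^ n) ^ (1/s) := by gcongr
    _ = _ := by
        rw [Real.mul_rpow hM0.le (by positivity)]
        congr 1
        rw [← Real.rpow_natCast, ← Real.rpow_natCast, ← Real.rpow_mul (by positivity),
          ← Real.rpow_mul (by positivity), mul_comm]
end

end

section
set_option linter.unusedSectionVars false

/-- recursion on the half line -/
def HRec (t r : ℝ) (c : ℂ) (θ : ℕ → Torus) (p q : ℕ → ℂ) : Prop :=
  ∀ k, p (k+1) = c * ec (-(sg k (θ k))) * (r * p k - q k) / t ∧ q (k+1) = c * (p k - r * q k) / t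

/-- the field phi -/
def phi (t r : ℝ) (h : ℤ → ℂ) (k : ℤ) : ℂ :=
  if Even k then t * h (k-1) + r * h k else r * h k - t * h (k+1)

/-- generalized eigenvalue equation -/
def EigEq (t r : ℝ) (ω : ℤ → Torus) (x : Torus) (h : ℤ → ℂ) : Prop :=
  ∀ k, Even k → (ec (x + ω k) * h k = r * phi t r h k + t * phi t r h (k+1) ∧
    ec (x + ω (k+1)) * h (k+1) = - t * phi t r h k + r * phi t r h (k+1))

/-- half line p -/
def hp (ω : ℤ → Torus) (x : Torus) (h : ℤ → ℂ) (s : ℕ → ℤ) (k : ℕ) : ℂ :=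
  if Even k then h (s k) else ec (x + ω (s k)) * h (s k)

lemma hp_norm (ω : ℤ → Torus) (x : Torus) (h : ℤ → ℂ) (s : ℕ → ℤ) (k : ℕ) :
    ‖hp ω x h s k‖ = ‖h (s k)‖ := by
  unfold hp; split_ifs <;> simp [ec_norm]

section
variable {t r : ℝ} (ht0 : 0 < t) (hr0 : 0 < r) (hr1 : r < 1) (hrt : r^2 + t^2 = 1)
include ht0 hr0 hr1 hrt

lemma half_line {s w : ℝ} (hs : 0 < s) (hw : 1 < w) {θ : ℕ → Torus} (hb : θ ∉ Bad t r s w)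
    {c : ℂ} (hc : ‖c‖ = 1) {p q : ℕ → ℂ} (hrec : HRec t r c θ p q) {M : ℝ}
    (hp : ∀ k, ‖p k‖ ≤ M * (1 + k)) (hq : ∀ k, ‖q k‖ ≤ M * (1 + k)) :
    ∃ C > (0:ℝ), ∃ η : ℝ, 0 < η ∧ η < 1 ∧ ∀ n, ‖p n‖ ≤ C * η ^ n := by
  obtain ⟨y, C, hC, η, hη0, hη1, hdec⟩ := not_bad ht0 hr0 hr1 hrt hs hw hb
  have htc : (t:ℂ) ≠ 0 := by exact_mod_cast ht0.ne'
  have hrtc : (r:ℂ)^2 + (t:ℂ)^2 = 1 := by exact_mod_cast hrt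
  set Y := fw r θ y with hY
  set D : ℕ → ℂ := fun k => p k - q k * ec (Y k) with hD
  have hDstep : ∀ k, ‖D (k+1)‖ * gf t r (Y k) = ‖D k‖ := by
    intro k
    have hne := ec_sub_ne hr0 hr1 (Y k)
    have e1 : D (k+1) = c * ec (-(sg k (θ k))) * (t / (ec (Y k) - r)) * D k := by
      have hy : ec (Y (k+1)) = (r * ec (Y k) - 1) / (ec (Y k) - r) * ec (-(sg k (θ k))) := by
        change ec (mob r (Y k) - sg k (θ k)) = _
        rw [sub_eq_add_neg, ec_add, ec_mob hr0 hr1]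
      simp only [hD]
      rw [(hrec k).1, (hrec k).2, hy]
      field_simp
      linear_combination (c * ec (-(sg k (θ k)))) * (-(p k) + q k * ec (Y k)) * hrtc
    rw [e1]
    simp only [norm_mul, hc, ec_norm, norm_div, Complex.norm_real, Real.norm_eq_abs, abs_of_pos ht0, gf]
    have : ‖ec (Y k) - r‖ ≠ 0 := norm_ne_zero_iff.2 hne
    field_simp
  have hDr : ∀ k, ‖D k‖ * rho t r θ y k = ‖D 0‖ := by
    intro k
    induction k with
    | zero => simp [rho]
    | succ k ih =>
      rw [← ih, ← hDstep k]
      unfold rho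
      rw [Finset.prod_range_succ]; ring
  have hD0 : D 0 = 0 := by
    rw [← norm_eq_zero]
    have hM : 0 ≤ M := by have := (norm_nonneg _).trans (hp 0); simpa using this
    have hle : ∀ k : ℕ, ‖D 0‖ ≤ (2 * M * C) * ((1 + k) * η ^ k) := by
      intro k
      rw [← hDr k]
      have h1 : ‖D k‖ ≤ 2 * M * (1 + k) := by
        calc ‖D k‖ ≤ ‖p k‖ + ‖q k * ec (Y k)‖ := norm_sub_le _ _
          _ ≤ M * (1 + k) + M * (1 + k) := by
            rw [norm_mul, ec_norm, mul_one]; exact add_le_add (hp k) (hq k)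
          _ = _ := by ring
      calc ‖D k‖ * rho t r θ y k ≤ (2 * M * (1 + k)) * (C * η ^ k) :=
            mul_le_mul h1 (hdec k) (rho_pos ht0 hr0 hr1 hrt _ _ _).le (by positivity)
        _ = _ := by ring
    have hlim : Tendsto (fun k : ℕ => (2 * M * C) * ((1 + (k:ℝ)) * η ^ k)) atTop (nhds 0) := by
      have h1 := tendsto_self_mul_const_pow_of_lt_one hη0.le hη1
      have h2 := tendsto_pow_atTop_nhds_zero_of_lt_one hη0.le hη1
      have h3 := ((h2.add h1).const_mul (2 * M * C))
      simp only [add_zero, mul_zero] at h3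
      refine h3.congr fun k => ?_
      ring
    exact le_antisymm (ge_of_tendsto' hlim hle) (norm_nonneg _)
  have hDz : ∀ k, p k = q k * ec (Y k) := by
    intro k
    have := hDr k
    rw [hD0, norm_zero] at this
    have h2 := (mul_eq_zero.1 this).resolve_right (rho_pos ht0 hr0 hr1 hrt _ _ _).ne'
    exact sub_eq_zero.1 (norm_eq_zero.1 h2)
  have hqn : ∀ k, ‖q k‖ = ‖q 0‖ * rho t r θ y k := by
    intro k
    induction k with
    | zero => simp [rho]
    | succ k ih =>
      have e : q (k+1) = c * q k * ((ec (Y k) - r) / t) := by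
        rw [(hrec k).2, hDz k]; ring
      rw [e, norm_mul, norm_mul, hc, one_mul, ih, norm_div, Complex.norm_real, Real.norm_eq_abs, abs_of_pos ht0]
      unfold rho
      rw [Finset.prod_range_succ]
      change _ = _ * (_ * (‖ec (Y k) - r‖ / t))
      ring
  refine ⟨(‖q 0‖ + 1) * C, by positivity, η, hη0, hη1, fun n => ?_⟩
  rw [hDz n, norm_mul, ec_norm, mul_one, hqn n, mul_assoc]
  exact mul_le_mul (by linarith) (hdec n) (rho_pos ht0 hr0 hr1 hrt _ _ _).le (by positivity)

lemma step_phi (h : ℤ → ℂ) (k : ℤ) (hk : ¬ Even k) :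
    h (k+1) = (r * h k - phi t r h k) / t ∧ phi t r h (k+1) = (h k - r * phi t r h k) / t := by
  have htc : (t:ℂ) ≠ 0 := by exact_mod_cast ht0.ne'
  have hrtc : (r:ℂ)^2 + (t:ℂ)^2 = 1 := by exact_mod_cast hrt
  have hk1 : Even (k+1) := by
    rw [Int.even_add_one]; exact hk
  simp only [phi, if_neg hk, if_pos hk1, add_sub_cancel_right]
  constructor
  · field_simp; ring
  · field_simp; linear_combination (h k) * hrtc

lemma right_rec {ω : ℤ → Torus} {x : Torus} {h : ℤ → ℂ} (he : EigEq t r ω x h) (m : ℤ) :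
    HRec t r 1 (fun k => x + ω (2*m+2+k)) (hp ω x h fun k => 2*m+1+k) (fun k => phi t r h (2*m+1+k)) := by
  intro k
  have htc : (t:ℂ) ≠ 0 := by exact_mod_cast ht0.ne'
  have hrtc : (r:ℂ)^2 + (t:ℂ)^2 = 1 := by exact_mod_cast hrt
  have es : 2*m+1+((k+1:ℕ):ℤ) = (2*m+1+k) + 1 := by push_cast; ring
  have ej : 2*m+2+(k:ℤ) = (2*m+1+k) + 1 := by ring
  simp only [hp, es, ej, sg, Nat.even_add_one]
  set σ : ℤ := 2*m+1+k with hσ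
  by_cases hk : Even k
  · have hσo : ¬ Even σ := by
      rw [hσ, Int.even_add]; simp [hk, Int.even_add, parity_simps]
    obtain ⟨a, b⟩ := step_phi ht0 hr0 hr1 hrt h σ hσo
    simp only [hk, if_true, not_true, if_false, neg_neg]
    rw [a, b]
    constructor <;> ring
  · have hσe : Even σ := by
      rw [hσ, Int.even_add]; simp [hk, Int.even_add, parity_simps]
    obtain ⟨a, b⟩ := he σ hσe
    simp only [hk, if_false, not_false_iff, if_true, one_mul]
    have b2 : ec (x + ω (σ+1)) * h (σ+1) * t = (r * (ec (x + ω σ) * h σ) - phi t r h σ) := by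
      rw [a, b]; linear_combination (- phi t r h σ) * hrtc
    constructor
    · rw [← b2, ec_neg]
      field_simp [ec_ne_zero]
    · rw [a]; field_simp; ring

lemma left_rec {ω : ℤ → Torus} {x : Torus} {h : ℤ → ℂ} (he : EigEq t r ω x h) (m : ℤ) :
    HRec t r (-1) (fun k => x + ω (2*m-1-k)) (hp ω x h fun k => 2*m-k) (fun k => phi t r h (2*m-k)) := by
  intro k
  have htc : (t:ℂ) ≠ 0 := by exact_mod_cast ht0.ne'
  have hrtc : (r:ℂ)^2 + (t:ℂ)^2 = 1 := by exact_mod_cast hrt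
  have es : 2*m-((k+1:ℕ):ℤ) = 2*m-1-k := by push_cast; ring
  have ej : 2*m-(k:ℤ) = (2*m-1-k) + 1 := by ring
  simp only [hp, es, ej, sg, Nat.even_add_one]
  set σ : ℤ := 2*m-1-k with hσ
  by_cases hk : Even k
  · have hσo : ¬ Even σ := by
      rw [hσ, Int.even_sub]; simp [hk, Int.even_sub, parity_simps]
    obtain ⟨a, b⟩ := step_phi ht0 hr0 hr1 hrt h σ hσo
    simp only [hk, if_true, not_true, if_false, neg_neg]
    rw [a, b]
    constructor
    · field_simp; linear_combination (h σ * ec (x + ω σ)) * hrtc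
    · field_simp; linear_combination (phi t r h σ) * hrtc
  · have hσe : Even σ := by
      rw [hσ, Int.even_sub]; simp [hk, Int.even_sub, parity_simps]
    obtain ⟨a, b⟩ := he σ hσe
    simp only [hk, if_false, not_false_iff, if_true]
    have a2 : -(ec (x + ω σ) * h σ * t) = (r * (ec (x + ω (σ+1)) * h (σ+1)) - phi t r h (σ+1)) := by
      rw [a, b]; linear_combination (-(phi t r h (σ+1))) * hrtc
    constructor
    · rw [← a2, ec_neg]
      field_simp [ec_ne_zero]
      try ring
    · rw [b]; field_simp; ring

lemma rec_zero {c : ℂ} {θ : ℕ → Torus} {p q : ℕ → ℂ} (hrec : HRec t r c θ p q) (hp0 : p 0 = 0) (hq0 : q 0 = 0)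
    (k : ℕ) : p k = 0 ∧ q k = 0 := by
  induction k with
  | zero => exact ⟨hp0, hq0⟩
  | succ k ih => rw [(hrec k).1, (hrec k).2, ih.1, ih.2]; simp

lemma eig_unique {ω : ℤ → Torus} {x : Torus} {h : ℤ → ℂ} (he : EigEq t r ω x h) (m : ℤ)
    (h0 : h (2*m) = 0) (h1 : h (2*m+1) = 0) (k : ℤ) : h k = 0 := by
  obtain ⟨a, b⟩ := he (2*m) (even_two_mul m)
  have hrtc : (r:ℂ)^2 + (t:ℂ)^2 = 1 := by exact_mod_cast hrt
  rw [h0, mul_zero] at a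
  rw [h1, mul_zero] at b
  have f0 : phi t r h (2*m) = 0 := by
    linear_combination (-(phi t r h (2*m))) * hrtc - r * a + t * b
  have f1 : phi t r h (2*m+1) = 0 := by
    linear_combination (-(phi t r h (2*m+1))) * hrtc - t * a - r * b
  rw [← norm_eq_zero]
  rcases le_or_gt (2*m+1) k with hk | hk
  · have := (rec_zero ht0 hr0 hr1 hrt (right_rec ht0 hr0 hr1 hrt he m) (by simp [hp, h1]) (by simp [f1])
      (k - (2*m+1)).toNat).1
    rw [← norm_eq_zero, hp_norm] at this
    have e : 2*m+1+((k - (2*m+1)).toNat : ℤ) = k := by omega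
    rwa [e] at this
  · have := (rec_zero ht0 hr0 hr1 hrt (left_rec ht0 hr0 hr1 hrt he m) (by simp [hp, h0]) (by simp [f0])
      (2*m - k).toNat).1
    rw [← norm_eq_zero, hp_norm] at this
    have e : 2*m-((2*m - k).toNat : ℤ) = k := by omega
    rwa [e] at this

lemma eig_decay {s w : ℝ} (hs : 0 < s) (hw : 1 < w) {ω : ℤ → Torus} {x : Torus} {h : ℤ → ℂ}
    (he : EigEq t r ω x h) (m : ℤ)
    (hR : (fun k : ℕ => x + ω (2*m+2+k)) ∉ Bad t r s w)
    (hL : (fun k : ℕ => x + ω (2*m-1-k)) ∉ Bad t r s w) {M : ℝ}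
    (hM : ∀ k, ‖h k‖ ≤ M * (1 + |(k:ℝ)|)) :
    ∃ C > (0:ℝ), ∃ lam > (0:ℝ), ∀ k : ℤ, ‖h k‖ ≤ C * Real.exp (-lam * |(k:ℝ)|) := by
  have hM0 : 0 ≤ M := by have := (norm_nonneg _).trans (hM 0); simpa using this
  have hphi : ∀ k, ‖phi t r h k‖ ≤ 2 * M * (2 + |(k:ℝ)|) := by
    have ht1 : t ≤ 1 := by nlinarith
    have key : ∀ a b : ℤ, |(a:ℝ)| ≤ 1 + |(b:ℝ)| → ‖h a‖ ≤ M * (2 + |(b:ℝ)|) := by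
      intro a b hab
      refine (hM a).trans ?_
      exact mul_le_mul_of_nonneg_left (by linarith) hM0
    have key2 : ∀ a b : ℂ, ‖(t:ℂ) * a‖ + ‖(r:ℂ) * b‖ ≤ ‖a‖ + ‖b‖ := by
      intro a b
      rw [norm_mul, norm_mul, Complex.norm_real, Complex.norm_real, Real.norm_of_nonneg ht0.le,
        Real.norm_of_nonneg hr0.le]
      have := mul_le_mul_of_nonneg_right ht1 (norm_nonneg a)
      have := mul_le_mul_of_nonneg_right hr1.le (norm_nonneg b)
      linarith
    intro k
    unfold phi
    have a0 := key k k (by linarith)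
    have a1 := key (k-1) k (by push_cast; have := abs_sub (k:ℝ) 1; simp at this; linarith)
    have a2 := key (k+1) k (by push_cast; have := abs_add_le (k:ℝ) 1; simp at this; linarith)
    split_ifs
    · refine (norm_add_le _ _).trans ((key2 _ _).trans ?_); linarith
    · refine (norm_sub_le _ _).trans ?_
      rw [add_comm]
      refine (key2 _ _).trans ?_; linarith
  set M' := 2 * M * (3 + |2 * (m:ℝ)|) with hM'
  have bd : ∀ (j : ℤ) (n : ℕ), |(j:ℝ)| ≤ 1 + |2 * (m:ℝ)| + n → ‖h j‖ ≤ M' * (1 + n) ∧ ‖phi t r h j‖ ≤ M' * (1 + n) := by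
    intro j n hj
    have hn : (0:ℝ) ≤ n := Nat.cast_nonneg n
    have hm : 0 ≤ |2 * (m:ℝ)| := abs_nonneg _
    have e : 2 * M * (2 + |(j:ℝ)|) ≤ M' * (1 + n) := by
      rw [hM', mul_assoc (2 * M)]
      apply mul_le_mul_of_nonneg_left _ (by positivity)
      nlinarith
    refine ⟨(hM j).trans (le_trans ?_ e), (hphi j).trans e⟩
    have := abs_nonneg (j:ℝ)
    nlinarith
  have bR : ∀ k : ℕ, |((2*m+1+k : ℤ):ℝ)| ≤ 1 + |2 * (m:ℝ)| + k := by
    intro k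
    push_cast
    have h1 := abs_add_le (2*(m:ℝ)+1) k
    have h2 := abs_add_le (2*(m:ℝ)) 1
    simp only [Nat.abs_cast, abs_one] at h1 h2
    linarith
  have bL : ∀ k : ℕ, |((2*m-k : ℤ):ℝ)| ≤ 1 + |2 * (m:ℝ)| + k := by
    intro k
    push_cast
    have h1 := abs_sub (2*(m:ℝ)) k
    simp only [Nat.abs_cast] at h1
    linarith
  obtain ⟨C1, hC1, η1, hη10, hη11, hd1⟩ := half_line ht0 hr0 hr1 hrt hs hw hR (by simp)
    (right_rec ht0 hr0 hr1 hrt he m) (M := M') (fun k => by rw [hp_norm]; exact (bd _ k (bR k)).1)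
    (fun k => (bd _ k (bR k)).2)
  obtain ⟨C2, hC2, η2, hη20, hη21, hd2⟩ := half_line ht0 hr0 hr1 hrt hs hw hL (by simp)
    (left_rec ht0 hr0 hr1 hrt he m) (M := M') (fun k => by rw [hp_norm]; exact (bd _ k (bL k)).1)
    (fun k => (bd _ k (bL k)).2)
  set η := max η1 η2 with hη
  have hη0 : 0 < η := lt_max_of_lt_left hη10
  have hη1 : η < 1 := max_lt hη11 hη21
  set lam := - Real.log η with hlam
  have hlam0 : 0 < lam := by rw [hlam]; have := Real.log_neg hη0 hη1; linarith
  set C := max C1 C2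
  have hexp : ∀ n : ℕ, η ^ n = Real.exp (-lam * n) := by
    intro n
    rw [hlam, neg_neg, mul_comm, Real.exp_nat_mul, Real.exp_log hη0]
  have fin : ∀ (j : ℤ) (n : ℕ), |(j:ℝ)| ≤ 1 + |2 * (m:ℝ)| + n → ‖h j‖ ≤ C * η ^ n →
      ‖h j‖ ≤ (C * Real.exp (lam * (1 + |2 * (m:ℝ)|))) * Real.exp (-lam * |(j:ℝ)|) := by
    intro j n hj hh
    refine hh.trans ?_
    rw [hexp, mul_assoc, ← Real.exp_add]
    have : 0 ≤ C := (le_max_left C1 C2).trans' hC1.le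
    gcongr
    nlinarith
  refine ⟨C * Real.exp (lam * (1 + |2 * (m:ℝ)|)), ?_, lam, hlam0, fun k => ?_⟩
  · have : 0 < C := lt_max_of_lt_left hC1
    positivity
  rcases le_or_gt (2*m+1) k with hk | hk
  · obtain ⟨n, rfl⟩ : ∃ n : ℕ, k = 2*m+1+n := ⟨(k - (2*m+1)).toNat, by omega⟩
    apply fin _ n (bR n)
    have := hd1 n
    rw [hp_norm] at this
    refine this.trans ?_
    gcongr
    · exact le_max_left _ _
    · exact le_max_left _ _
  · obtain ⟨n, rfl⟩ : ∃ n : ℕ, k = 2*m-n := ⟨(2*m-k).toNat, by omega⟩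
    apply fin _ n (bL n)
    have := hd2 n
    rw [hp_norm] at this
    refine this.trans ?_
    gcongr
    · exact le_max_right _ _
    · exact le_max_right _ _
end

end

section
set_option linter.unusedSectionVars false

lemma inner_ez (k : ℤ) (x : Hz) : inner ℂ (ez k) x = x k := by
  unfold ez; rw [lp.inner_single_left]; simp

lemma ez_apply (j k : ℤ) : (ez j : Hz) k = if k = j then 1 else 0 := by
  unfold ez; rw [lp.single_apply]; simp [Pi.single_apply]

lemma Hz_ext {x y : Hz} (h : ∀ k, inner ℂ (ez k) x = inner ℂ (ez k) y) : x = y := by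
  ext k; rw [← inner_ez, ← inner_ez, h]

lemma ez_norm (k : ℤ) : ‖ez k‖ = 1 := by
  unfold ez; rw [lp.norm_single (by norm_num)]; simp

lemma ez_dense : (Submodule.span ℂ (Set.range ez)).topologicalClosure = ⊤ := by
  rw [Submodule.topologicalClosure_eq_top_iff, Submodule.eq_bot_iff]
  intro x hx
  apply Hz_ext
  intro k
  rw [inner_zero_right]
  exact hx _ (Submodule.subset_span ⟨k, rfl⟩)

lemma op_ext {A B : Hz →L[ℂ] Hz} (h : ∀ k, A (ez k) = B (ez k)) : A = B := by
  apply ContinuousLinearMap.ext_on (s := Set.range ez)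
  · have := ez_dense
    rw [Submodule.dense_iff_topologicalClosure_eq_top]; exact this
  · rintro _ ⟨k, rfl⟩; exact h k

section
variable {t r : ℝ} {ω : ℤ → Torus} {A : Hz →L[ℂ] Hz}
  (hrt : r^2 + t^2 = 1)
  (hA : ∀ k j : ℤ, inner ℂ (ez k) (A (ez j)) = ec (-(ω k)) * Sent t r k j)
include hA

lemma adj_even (k : ℤ) (hk : Even k) : (star A) (ez k) = ec (ω k) •
    ((r*t:ℂ) • ez (k-1) + (r^2:ℂ) • ez k + (r*t:ℂ) • ez (k+1) - (t^2:ℂ) • ez (k+2)) := by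
  apply Hz_ext
  intro j
  rw [ContinuousLinearMap.star_eq_adjoint, ContinuousLinearMap.adjoint_inner_right, ← inner_conj_symm, hA]
  simp only [inner_smul_right, inner_add_right, inner_sub_right, inner_ez, ez_apply, Sent]
  rw [if_pos (Int.even_iff.1 hk), map_mul, ec_conj, neg_neg]
  congr 1
  split_ifs <;> first | omega | simp

lemma adj_odd (k : ℤ) (hk : ¬ Even k) : (star A) (ez k) = ec (ω k) •
    ((-t^2:ℂ) • ez (k-2) - (r*t:ℂ) • ez (k-1) + (r^2:ℂ) • ez k - (r*t:ℂ) • ez (k+1)) := by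
  apply Hz_ext
  intro j
  rw [ContinuousLinearMap.star_eq_adjoint, ContinuousLinearMap.adjoint_inner_right, ← inner_conj_symm, hA]
  simp only [inner_smul_right, inner_add_right, inner_sub_right, inner_ez, ez_apply, Sent]
  rw [if_neg (fun h => hk (Int.even_iff.2 h)), map_mul, ec_conj, neg_neg]
  congr 1
  split_ifs <;> first | omega | simp

lemma col_even (j : ℤ) (hj : Even j) : A (ez j) =
    (r^2 * ec (-(ω j)):ℂ) • ez j - (t^2 * ec (-(ω (j-2))):ℂ) • ez (j-2)
      - (r*t * ec (-(ω (j-1))):ℂ) • ez (j-1) - (r*t* ec (-(ω (j+1))):ℂ) • ez (j+1) := by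
  apply Hz_ext
  intro k
  rw [hA]
  simp only [inner_smul_right, inner_add_right, inner_sub_right, inner_ez, ez_apply, Sent]
  rw [Int.even_iff] at hj
  split_ifs <;> first | omega | (subst_vars; simp [mul_comm])

lemma col_odd (j : ℤ) (hj : ¬ Even j) : A (ez j) =
    (r^2 * ec (-(ω j)):ℂ) • ez j - (t^2 * ec (-(ω (j+2))):ℂ) • ez (j+2)
      + (r*t * ec (-(ω (j-1))):ℂ) • ez (j-1) + (r*t* ec (-(ω (j+1))):ℂ) • ez (j+1) := by
  apply Hz_ext
  intro k
  rw [hA]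
  simp only [inner_smul_right, inner_add_right, inner_sub_right, inner_ez, ez_apply, Sent]
  rw [Int.even_iff] at hj
  split_ifs <;> first | omega | (subst_vars; simp [mul_comm])

lemma coord_even (k : ℤ) (hk : Even k) (x : Hz) : (A x) k =
    ec (-(ω k)) * (r*t * x (k-1) + r^2 * x k + r*t * x (k+1) - t^2 * x (k+2)) := by
  rw [← inner_ez, ← ContinuousLinearMap.adjoint_inner_left, ← ContinuousLinearMap.star_eq_adjoint,
    adj_even hA k hk]
  simp [inner_smul_left, inner_add_left, inner_sub_left, inner_ez, ec_conj]

lemma coord_odd (k : ℤ) (hk : ¬ Even k) (x : Hz) : (A x) k =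
    ec (-(ω k)) * (-t^2 * x (k-2) - r*t * x (k-1) + r^2 * x k - r*t * x (k+1)) := by
  rw [← inner_ez, ← ContinuousLinearMap.adjoint_inner_left, ← ContinuousLinearMap.star_eq_adjoint,
    adj_odd hA k hk]
  simp [inner_smul_left, inner_add_left, inner_sub_left, inner_ez, ec_conj]

include hrt
lemma A_star_mul (j : ℤ) : (star A) (A (ez j)) = ez j := by
  have hrtc : (r:ℂ)^2 + (t:ℂ)^2 = 1 := by exact_mod_cast hrt
  have hm : ∀ x : Torus, ec (-x) * ec x = 1 := fun x => by
    rw [ec_neg, inv_mul_cancel₀ (ec_ne_zero x)]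
  by_cases hj : Even j
  · rw [col_even hA j hj]
    simp only [map_sub, map_smul]
    rw [adj_even hA j hj, adj_even hA (j-2) (by simpa [parity_simps] using hj),
      adj_odd hA (j-1) (by simpa [parity_simps] using hj), adj_odd hA (j+1) (by simpa [parity_simps] using hj)]
    simp only [smul_smul, mul_assoc, hm, mul_one]
    have e1 : j - 2 - 1 = j - 3 := by ring
    have e2 : j - 2 + 1 = j - 1 := by ring
    have e3 : j - 2 + 2 = j := by ring
    have e4 : j - 1 - 2 = j - 3 := by ring
    have e5 : j - 1 - 1 = j - 2 := by ring
    have e6 : j - 1 + 1 = j := by ring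
    have e7 : j + 1 - 2 = j - 1 := by ring
    have e8 : j + 1 - 1 = j := by ring
    have e9 : j + 1 + 1 = j + 2 := by ring
    rw [e1, e2, e3, e4, e5, e6, e7, e8, e9]
    match_scalars <;> first | ring1 | linear_combination ((r:ℂ)^2+(t:ℂ)^2+1) * hrtc
  · rw [col_odd hA j hj]
    simp only [map_sub, map_add, map_smul]
    rw [adj_odd hA j hj, adj_odd hA (j+2) (by simpa [parity_simps] using hj),
      adj_even hA (j-1) (by simpa [parity_simps] using hj), adj_even hA (j+1) (by simpa [parity_simps] using hj)]
    simp only [smul_smul, mul_assoc, hm, mul_one]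
    have e1 : j + 2 - 1 = j + 1 := by ring
    have e2 : j + 2 + 1 = j + 3 := by ring
    have e3 : j + 2 - 2 = j := by ring
    have e4 : j - 1 + 2 = j + 1 := by ring
    have e5 : j - 1 - 1 = j - 2 := by ring
    have e6 : j - 1 + 1 = j := by ring
    have e7 : j + 1 + 2 = j + 3 := by ring
    have e8 : j + 1 - 1 = j := by ring
    have e9 : j + 1 + 1 = j + 2 := by ring
    rw [e1, e2, e3, e4, e5, e6, e7, e8, e9]
    match_scalars <;> first | ring1 | linear_combination ((r:ℂ)^2+(t:ℂ)^2+1) * hrtc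

lemma A_mul_star (j : ℤ) : A ((star A) (ez j)) = ez j := by
  have hrtc : (r:ℂ)^2 + (t:ℂ)^2 = 1 := by exact_mod_cast hrt
  have hm : ec (ω j) * ec (-(ω j)) = 1 := by
    rw [ec_neg, mul_inv_cancel₀ (ec_ne_zero _)]
  by_cases hj : Even j
  · rw [adj_even hA j hj]
    simp only [map_sub, map_add, map_smul]
    rw [col_even hA j hj, col_even hA (j+2) (by simpa [parity_simps] using hj),
      col_odd hA (j-1) (by simpa [parity_simps] using hj), col_odd hA (j+1) (by simpa [parity_simps] using hj)]
    have e1 : j + 2 - 1 = j + 1 := by ring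
    have e2 : j + 2 + 1 = j + 3 := by ring
    have e3 : j + 2 - 2 = j := by ring
    have e4 : j - 1 + 2 = j + 1 := by ring
    have e5 : j - 1 - 1 = j - 2 := by ring
    have e6 : j - 1 + 1 = j := by ring
    have e7 : j + 1 + 2 = j + 3 := by ring
    have e8 : j + 1 - 1 = j := by ring
    have e9 : j + 1 + 1 = j + 2 := by ring
    rw [e1, e2, e3, e4, e5, e6, e7, e8, e9]
    match_scalars <;> first | ring1 | linear_combination (((r:ℂ)^2+(t:ℂ)^2+1) * hrtc + ((r:ℂ)^2+(t:ℂ)^2)^2*hm)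
  · rw [adj_odd hA j hj]
    simp only [map_sub, map_add, map_smul]
    rw [col_odd hA j hj, col_odd hA (j-2) (by simpa [parity_simps] using hj),
      col_even hA (j-1) (by simpa [parity_simps] using hj), col_even hA (j+1) (by simpa [parity_simps] using hj)]
    have e1 : j - 2 - 1 = j - 3 := by ring
    have e2 : j - 2 + 1 = j - 1 := by ring
    have e3 : j - 2 + 2 = j := by ring
    have e4 : j - 1 - 2 = j - 3 := by ring
    have e5 : j - 1 - 1 = j - 2 := by ring
    have e6 : j - 1 + 1 = j := by ring
    have e7 : j + 1 - 2 = j - 1 := by ring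
    have e8 : j + 1 - 1 = j := by ring
    have e9 : j + 1 + 1 = j + 2 := by ring
    rw [e1, e2, e3, e4, e5, e6, e7, e8, e9]
    match_scalars <;> first | ring1 | linear_combination (((r:ℂ)^2+(t:ℂ)^2+1) * hrtc + ((r:ℂ)^2+(t:ℂ)^2)^2*hm)

lemma A_unitary : A ∈ unitary (Hz →L[ℂ] Hz) := by
  rw [Unitary.mem_iff]
  exact ⟨op_ext fun k => A_star_mul hrt hA k, op_ext fun k => A_mul_star hrt hA k⟩

end

/-- the four-term recursion -/
def REq (t r : ℝ) (ω : ℤ → Torus) (x : Torus) (h : ℤ → ℂ) : Prop :=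
  ∀ k, Even k → (ec x * h k = ec (-(ω k)) * (r*t * h (k-1) + r^2 * h k + r*t * h (k+1) - t^2 * h (k+2)) ∧
    ec x * h (k+1) = ec (-(ω (k+1))) * (-t^2 * h (k-1) - r*t * h k + r^2 * h (k+1) - r*t * h (k+2)))

lemma REq_EigEq {t r : ℝ} {ω : ℤ → Torus} {x : Torus} {h : ℤ → ℂ} (H : REq t r ω x h) :
    EigEq t r ω x h := by
  intro k hk
  obtain ⟨a, b⟩ := H k hk
  have hk' : ¬ Even (k+1) := by simpa [parity_simps] using hk
  have hm : ∀ x : Torus, ec x * ec (-x) = 1 := fun x => by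
    rw [ec_neg, mul_inv_cancel₀ (ec_ne_zero x)]
  simp only [phi, hk, hk', if_true, if_false]
  rw [show k+1+1 = k+2 by ring]
  constructor
  · rw [ec_add, mul_comm (ec x), mul_assoc, a, ← mul_assoc, hm]; ring
  · rw [ec_add, mul_comm (ec x), mul_assoc, b, ← mul_assoc, hm]; ring

lemma eig_REq {t r : ℝ} {ω : ℤ → Torus} {A : Hz →L[ℂ] Hz}
  (hA : ∀ k j : ℤ, inner ℂ (ez k) (A (ez j)) = ec (-(ω k)) * Sent t r k j) {ψ : Hz} {x : Torus}
  (h : A ψ = ec x • ψ) : REq t r ω x ψ := by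
  intro k hk
  have a := coord_even hA k hk ψ
  have b := coord_odd hA (k+1) (by simpa [parity_simps] using hk) ψ
  rw [h] at a b
  simp only [lp.coeFn_smul, Pi.smul_apply, smul_eq_mul] at a b
  rw [show k+1-2 = k-1 by ring, show k+1-1 = k by ring, show k+1+1=k+2 by ring] at b
  exact ⟨a, b⟩

lemma REq_eig {t r : ℝ} {ω : ℤ → Torus} {A : Hz →L[ℂ] Hz}
  (hA : ∀ k j : ℤ, inner ℂ (ez k) (A (ez j)) = ec (-(ω k)) * Sent t r k j) {ψ : Hz} {x : Torus}
  (h : REq t r ω x ψ) : A ψ = ec x • ψ := by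
  ext k
  simp only [lp.coeFn_smul, Pi.smul_apply, smul_eq_mul]
  by_cases hk : Even k
  · rw [coord_even hA k hk ψ, (h k hk).1]
  · have := (h (k-1) (by simpa [parity_simps] using hk)).2
    rw [show k-1+1 = k by ring, show k-1-1 = k-2 by ring, show k-1+2 = k+1 by ring] at this
    rw [coord_odd hA k hk ψ, this]
end

section
set_option linter.unusedSectionVars false

lemma exists_calc {A : Hz →L[ℂ] Hz} (hA : A ∈ unitary (Hz →L[ℂ] Hz)) :
    ∃ Φ : C(Torus, ℂ) →⋆ₐ[ℂ] (Hz →L[ℂ] Hz), Φ (fourier 1) = A := by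
  have hn : IsStarNormal A := ⟨by
    rw [Unitary.mem_iff] at hA; rw [Commute, SemiconjBy, hA.1, hA.2]⟩
  have hs := spectrum.subset_circle_of_unitary (𝕜 := ℂ) hA
  let c : C(spectrum ℂ A, Torus) :=
    ⟨fun z => AddCircle.homeomorphCircle'.symm ⟨z.1, by
        have := hs z.2; simpa [Submonoid.unitSphere] using this⟩, by
      refine AddCircle.homeomorphCircle'.symm.continuous.comp ?_
      exact Continuous.subtype_mk continuous_subtype_val _⟩
  refine ⟨(cfcHom hn).comp (ContinuousMap.compStarAlgHom' ℂ ℂ c), ?_⟩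
  rw [StarAlgHom.comp_apply]
  conv_rhs => rw [← cfcHom_id (R := ℂ) hn]
  congr 1
  ext z
  change fourier 1 ((((z.1).arg : ℝ)) : Torus) = z.1
  rw [← ec_def', ec_arg]
  simpa using hs z.2

/-- complexification of a real function -/
def cpx (f : C(Torus, ℝ)) : C(Torus, ℂ) := ⟨fun x => (f x : ℂ), by fun_prop⟩

section
variable (Φ : C(Torus, ℂ) →⋆ₐ[ℂ] (Hz →L[ℂ] Hz)) (φ : Hz)

lemma Cal_inner (f g : C(Torus, ℂ)) : inner ℂ (Φ f φ) (Φ g φ) = inner ℂ φ (Φ (star f * g) φ) := by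
  rw [map_mul, map_star, mul_apply_eq_comp, ContinuousLinearMap.star_eq_adjoint,
    ContinuousLinearMap.adjoint_inner_right]

lemma Cal_nonneg (f : C(Torus, ℝ)) (hf : 0 ≤ f) : 0 ≤ (inner ℂ φ (Φ (cpx f) φ)).re := by
  let g : C(Torus, ℝ) := ⟨fun x => Real.sqrt (f x), by fun_prop⟩
  have : cpx f = star (cpx g) * cpx g := by
    ext x
    simp only [cpx, g, ContinuousMap.mul_apply, ContinuousMap.star_apply, ContinuousMap.coe_mk]
    rw [← starRingEnd_apply, Complex.conj_ofReal, ← Complex.ofReal_mul, Real.mul_self_sqrt (show 0 ≤ f x from hf x)]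
  rw [this, ← Cal_inner]
  exact inner_self_nonneg (𝕜 := ℂ)

lemma Cal_real (f : C(Torus, ℝ)) : (inner ℂ φ (Φ (cpx f) φ)).im = 0 := by
  have h : star (cpx f) = cpx f := by
    ext x
    simp only [cpx, ContinuousMap.star_apply, ContinuousMap.coe_mk]
    rw [← starRingEnd_apply, Complex.conj_ofReal]
  have : (starRingEnd ℂ) (inner ℂ φ (Φ (cpx f) φ)) = inner ℂ φ (Φ (cpx f) φ) := by
    rw [inner_conj_symm, ← ContinuousLinearMap.adjoint_inner_right, ← ContinuousLinearMap.star_eq_adjoint,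
      ← map_star, h]
  exact Complex.conj_eq_iff_im.1 this

/-- the positive functional -/
def Lam : CompactlySupportedContinuousMap Torus ℝ →ₚ[ℝ] ℝ :=
  PositiveLinearMap.mk₀
    { toFun := fun f => (inner ℂ φ (Φ (cpx f.toContinuousMap) φ)).re
      map_add' := by
        intro f g
        have : cpx (f + g).toContinuousMap = cpx f.toContinuousMap + cpx g.toContinuousMap := by
          ext x; simp [cpx]
        rw [this, map_add, add_apply, inner_add_right, Complex.add_re]
      map_smul' := by
        intro c f
        have : cpx (c • f).toContinuousMap = (c:ℂ) • cpx f.toContinuousMap := by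
          ext x; simp [cpx]
        rw [this, map_smul, smul_apply, inner_smul_right]
        simp }
    (fun f hf => Cal_nonneg Φ φ _ hf)

/-- the spectral measure -/
def sm : Measure Torus := RealRMK.rieszMeasure (Lam Φ φ)

instance : IsFiniteMeasure (sm Φ φ) := by
  unfold sm
  infer_instance

lemma sm_real (f : C(Torus, ℝ)) : ∫ x, f x ∂(sm Φ φ) = (inner ℂ φ (Φ (cpx f) φ)).re := by
  have := RealRMK.integral_rieszMeasure (Lam Φ φ) ⟨f, HasCompactSupport.of_compactSpace _⟩
  exact this

lemma sm_int (f : C(Torus, ℂ)) : ∫ x, f x ∂(sm Φ φ) = inner ℂ φ (Φ f φ) := by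
  let a : C(Torus, ℝ) := ⟨fun x => (f x).re, by fun_prop⟩
  let b : C(Torus, ℝ) := ⟨fun x => (f x).im, by fun_prop⟩
  have hab : f = cpx a + I • cpx b := by
    ext x; simp only [cpx, a, b, ContinuousMap.add_apply, ContinuousMap.smul_apply, ContinuousMap.coe_mk, smul_eq_mul]
    rw [mul_comm I, Complex.re_add_im]
  have h1 : ∫ x, f x ∂(sm Φ φ) = ∫ x, (a x : ℂ) + I * (b x : ℂ) ∂(sm Φ φ) := by
    congr 1; ext x; simp only [a, b, ContinuousMap.coe_mk]; rw [mul_comm I, Complex.re_add_im]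
  rw [h1, integral_add (cont_integrable _ (by fun_prop)) (cont_integrable _ (by fun_prop)),
    integral_const_mul, integral_complex_ofReal, integral_complex_ofReal, sm_real, sm_real, hab, map_add, map_smul,
    add_apply, inner_add_right, smul_apply, inner_smul_right]
  have e : ∀ g, ((inner ℂ φ (Φ (cpx g) φ)).re : ℂ) = inner ℂ φ (Φ (cpx g) φ) := fun g =>
    Complex.ext rfl (Cal_real Φ φ g).symm
  exact congrArg₂ (fun u v => u + I * v) (e a) (e b)

/-- L2 class of a continuous function -/
abbrev tL (μ : Measure Torus) [IsFiniteMeasure μ] : C(Torus, ℂ) →L[ℂ] Lp ℂ 2 μ :=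
  ContinuousMap.toLp 2 μ ℂ

lemma tL_dense (μ : Measure Torus) [IsFiniteMeasure μ] : DenseRange (tL μ) :=
  ContinuousMap.toLp_denseRange ℂ μ ℂ (by norm_num)

lemma tL_inner (μ : Measure Torus) [IsFiniteMeasure μ] (f : C(Torus, ℂ)) (g : Lp ℂ 2 μ) :
    inner ℂ (tL μ f) g = ∫ x, (starRingEnd ℂ) (f x) * g x ∂μ := by
  rw [L2.inner_def]
  apply integral_congr_ae
  filter_upwards [ContinuousMap.coeFn_toLp (p := 2) μ (𝕜 := ℂ) f] with x hx
  simp only [RCLike.inner_apply]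
  rw [show (tL μ f) x = f x from hx, mul_comm]

lemma Cal_norm (f : C(Torus, ℂ)) : ‖Φ f φ‖ = ‖tL (sm Φ φ) f‖ := by
  have h : inner ℂ (Φ f φ) (Φ f φ) = inner ℂ (tL (sm Φ φ) f) (tL (sm Φ φ) f) := by
    rw [Cal_inner, ← sm_int, tL_inner]
    apply integral_congr_ae
    filter_upwards [ContinuousMap.coeFn_toLp (p := 2) (sm Φ φ) (𝕜 := ℂ) f] with x hx
    rw [show (tL (sm Φ φ) f) x = f x from hx]
    rfl
  rw [inner_self_eq_norm_sq_to_K, inner_self_eq_norm_sq_to_K] at h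
  have h' : ‖Φ f φ‖^2 = ‖tL (sm Φ φ) f‖^2 := by exact_mod_cast h
  exact (sq_eq_sq₀ (norm_nonneg _) (norm_nonneg _)).1 h'

lemma exists_J : ∃ J : Lp ℂ 2 (sm Φ φ) →L[ℂ] Hz, ‖J‖ ≤ 1 ∧ ∀ f, J (tL _ f) = Φ f φ := by
  let F : C(Torus, ℂ) →ₗ[ℂ] Hz :=
    { toFun := fun f => Φ f φ
      map_add' := fun f g => by rw [map_add]; rfl
      map_smul' := fun c f => by rw [map_smul]; rfl }
  have hd : DenseRange (tL (sm Φ φ)).toLinearMap := tL_dense _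
  have hn : ∀ f, ‖F f‖ ≤ 1 * ‖(tL (sm Φ φ)).toLinearMap f‖ := fun f => by
    rw [one_mul]; exact (Cal_norm Φ φ f).le
  exact ⟨F.extendOfNorm _, LinearMap.opNorm_extendOfNorm_le hd zero_le_one hn,
    fun f => LinearMap.extendOfNorm_eq hd ⟨1, hn⟩ f⟩
end

lemma L2_zero (μ : Measure Torus) [IsFiniteMeasure μ] {g : Torus → ℂ} (hg : MemLp g 2 μ)
    (h : ∀ f : C(Torus, ℂ), ∫ x, f x * g x ∂μ = 0) : g =ᵐ[μ] 0 := by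
  have h0 : hg.toLp g = 0 := by
    refine Dense.eq_zero_of_inner_right (𝕜 := ℂ) (tL_dense μ) ?_
    rintro _ ⟨f, rfl⟩
    rw [tL_inner, ← h (star f)]
    apply integral_congr_ae
    filter_upwards [hg.coeFn_toLp] with x hx
    rw [hx]; rfl
  filter_upwards [hg.coeFn_toLp, Lp.coeFn_zero ℂ 2 μ] with x hx hy
  rw [← hx, h0, hy]
end

section
set_option linter.unusedSectionVars false

lemma sum_sq : Summable fun k : ℤ => ((1 + |(k:ℝ)|)^2)⁻¹ := by
  have h : Summable fun k : ℕ => ((1 + (k:ℝ))^2)⁻¹ := by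
    have := (summable_nat_add_iff 1).2 (Real.summable_nat_pow_inv.2 (by norm_num : 1 < 2))
    simpa [add_comm] using this
  rw [summable_int_iff_summable_nat_and_neg]
  constructor <;> simpa using h

lemma decay_mem {h : ℤ → ℂ} {C lam : ℝ} (hC : 0 < C) (hl : 0 < lam)
    (H : ∀ k : ℤ, ‖h k‖ ≤ C * Real.exp (-lam * |(k:ℝ)|)) : Memℓp h 2 := by
  apply memℓp_gen
  set d := min 1 lam
  have hd : 0 < d := lt_min one_pos hl
  refine Summable.of_nonneg_of_le (fun k => by positivity) (fun k => ?_) (sum_sq.mul_left ((C / d)^2))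
  have h1 : ‖h k‖ ≤ C / d * (1 + |(k:ℝ)|)⁻¹ := by
    refine (H k).trans ?_
    rw [div_mul_eq_mul_div, mul_div_assoc]
    refine mul_le_mul_of_nonneg_left ?_ hC.le
    rw [neg_mul, Real.exp_neg, ← one_div, ← one_div, div_div]
    have := Real.add_one_le_exp (lam * |(k:ℝ)|)
    refine one_div_le_one_div_of_le (by positivity) ?_
    have a := min_le_left 1 lam
    have b : d * |(k:ℝ)| ≤ lam * |(k:ℝ)| := mul_le_mul_of_nonneg_right (min_le_right 1 lam) (abs_nonneg _)
    have a' : d ≤ 1 := a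
    nlinarith
  simp only [ENNReal.toReal_ofNat]
  rw [show (2:ℝ) = ((2:ℕ):ℝ) by norm_num, Real.rpow_natCast, ← inv_pow, ← mul_pow]
  exact pow_le_pow_left₀ (norm_nonneg _) h1 2

section
variable (μ : Measure Torus) [IsFiniteMeasure μ]

lemma int_fg {g : Torus → ℂ} (hg : MemLp g 2 μ) (f : C(Torus, ℂ)) :
    Integrable (fun x => f x * g x) μ := by
  refine (hg.integrable (by norm_num)).bdd_mul (c := ‖f‖) f.continuous.aestronglyMeasurable ?_
  exact Eventually.of_forall fun x => f.norm_coe_le_norm x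

lemma lin5 {a b1 b2 b3 b4 : Torus → ℂ} (ha : MemLp a 2 μ) (h1 : MemLp b1 2 μ) (h2 : MemLp b2 2 μ)
    (h3 : MemLp b3 2 μ) (h4 : MemLp b4 2 μ) (c c1 c2 c3 c4 : ℂ)
    (H : ∀ f : C(Torus, ℂ), ∫ x, ((fourier 1 : C(Torus, ℂ)) * f) x * a x ∂μ =
      c * (c1 * ∫ x, f x * b1 x ∂μ + c2 * ∫ x, f x * b2 x ∂μ + c3 * ∫ x, f x * b3 x ∂μ + c4 * ∫ x, f x * b4 x ∂μ)) :
    ∀ᵐ x ∂μ, ec x * a x = c * (c1 * b1 x + c2 * b2 x + c3 * b3 x + c4 * b4 x) := by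
  have hea : MemLp (fun x => ec x * a x) 2 μ := by
    refine MemLp.of_le ha (ec_continuous.aestronglyMeasurable.mul ha.1) (Eventually.of_forall fun x => ?_)
    rw [norm_mul, ec_norm, one_mul]
  have hm : MemLp (fun x => ec x * a x - c * (c1 * b1 x + c2 * b2 x + c3 * b3 x + c4 * b4 x)) 2 μ :=
    hea.sub (((((h1.const_mul c1).add (h2.const_mul c2)).add (h3.const_mul c3)).add (h4.const_mul c4)).const_mul c)
  have := L2_zero μ hm (fun f => ?_)
  · filter_upwards [this] with x hx
    exact sub_eq_zero.1 hx
  · have e : ∀ x, f x * (ec x * a x - c * (c1 * b1 x + c2 * b2 x + c3 * b3 x + c4 * b4 x)) =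
        ((fourier 1 : C(Torus, ℂ)) * f) x * a x - c * (c1 * (f x * b1 x) + c2 * (f x * b2 x) + c3 * (f x * b3 x) + c4 * (f x * b4 x)) := by
      intro x; rw [ContinuousMap.mul_apply, ← ec_def']; ring
    simp_rw [e]
    have i1 := (int_fg μ h1 f).const_mul c1
    have i2 := (int_fg μ h2 f).const_mul c2
    have i3 := (int_fg μ h3 f).const_mul c3
    have i4 := (int_fg μ h4 f).const_mul c4
    have j2 : Integrable (fun x => c1 * (f x * b1 x) + c2 * (f x * b2 x)) μ := i1.add i2
    have j3 : Integrable (fun x => c1 * (f x * b1 x) + c2 * (f x * b2 x) + c3 * (f x * b3 x)) μ := j2.add i3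
    have j4 : Integrable (fun x => c1 * (f x * b1 x) + c2 * (f x * b2 x) + c3 * (f x * b3 x) + c4 * (f x * b4 x)) μ :=
      j3.add i4
    rw [integral_sub (int_fg μ ha _) (j4.const_mul c), integral_const_mul,
      integral_add j3 i4, integral_add j2 i3, integral_add i1 i2, integral_const_mul,
      integral_const_mul, integral_const_mul, integral_const_mul, H, sub_self]

lemma growth {g : ℤ → Torus → ℂ} (hg : ∀ k, MemLp (g k) 2 μ) (hn : ∀ k, ∫⁻ x, ‖g k x‖ₑ^2 ∂μ ≤ 1) :
    ∀ᵐ x ∂μ, ∃ M : ℝ, ∀ k : ℤ, ‖g k x‖ ≤ M * (1 + |(k:ℝ)|) := by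
  have hm : ∀ k, AEMeasurable (fun x => ‖g k x‖ₑ^2 * ENNReal.ofReal ((1 + |(k:ℝ)|)^2)⁻¹) μ := fun k =>
    ((hg k).1.enorm.pow_const 2).mul_const _
  have h : ∫⁻ x, ∑' k, ‖g k x‖ₑ^2 * ENNReal.ofReal ((1 + |(k:ℝ)|)^2)⁻¹ ∂μ ≠ ⊤ := by
    rw [lintegral_tsum hm]
    refine ne_top_of_le_ne_top (b := ∑' k : ℤ, ENNReal.ofReal ((1 + |(k:ℝ)|)^2)⁻¹) ?_ ?_
    · rw [← ENNReal.ofReal_tsum_of_nonneg (fun k => by positivity) sum_sq]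
      exact ENNReal.ofReal_ne_top
    · refine ENNReal.tsum_le_tsum fun k => ?_
      rw [lintegral_mul_const'' _ ((hg k).1.enorm.pow_const 2)]
      exact mul_le_of_le_one_left' (hn k)
  filter_upwards [ae_lt_top' (AEMeasurable.tsum hm) h] with x hx
  set T := ∑' k, ‖g k x‖ₑ^2 * ENNReal.ofReal ((1 + |(k:ℝ)|)^2)⁻¹
  refine ⟨Real.sqrt T.toReal, fun k => ?_⟩
  have h1 : ‖g k x‖ₑ^2 * ENNReal.ofReal ((1 + |(k:ℝ)|)^2)⁻¹ ≤ T := ENNReal.le_tsum k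
  have h2 := ENNReal.toReal_mono hx.ne h1
  rw [ENNReal.toReal_mul, ENNReal.toReal_pow, toReal_enorm, ENNReal.toReal_ofReal (by positivity),
    ← div_eq_mul_inv, div_le_iff₀ (by positivity)] at h2
  have hT : 0 ≤ T.toReal := ENNReal.toReal_nonneg
  refine (pow_le_pow_iff_left₀ (norm_nonneg _) (by positivity) two_ne_zero).1 ?_
  rw [mul_pow, Real.sq_sqrt hT]; exact h2
end

section
variable (Φ : C(Torus, ℂ) →⋆ₐ[ℂ] (Hz →L[ℂ] Hz)) (φ : Hz)

lemma exists_g : ∃ g : Hz → Torus → ℂ, (∀ y, MemLp (g y) 2 (sm Φ φ)) ∧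
    (∀ y f, ∫ x, f x * g y x ∂(sm Φ φ) = inner ℂ y (Φ f φ)) ∧
    (∀ y, ‖y‖ ≤ 1 → ∫⁻ x, ‖g y x‖ₑ^2 ∂(sm Φ φ) ≤ 1) ∧
    ∀ x, ∃ v : Hz, ∀ y, inner ℂ y v = (sm Φ φ).real {x} * g y x := by
  obtain ⟨J, hJ1, hJ⟩ := exists_J Φ φ
  let μ := sm Φ φ
  have : IsFiniteMeasure μ := inferInstanceAs (IsFiniteMeasure (sm Φ φ))
  refine ⟨fun y x => (starRingEnd ℂ) ((ContinuousLinearMap.adjoint J y) x), fun y => ?_, fun y f => ?_,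
    fun y hy => ?_, fun x => ?_⟩
  · exact (Lp.memLp (ContinuousLinearMap.adjoint J y)).star
  · rw [← hJ, ← ContinuousLinearMap.adjoint_inner_left, ← inner_conj_symm, tL_inner, ← integral_conj]
    congr 1; ext x; simp
  · have h1 : ‖ContinuousLinearMap.adjoint J y‖ ≤ 1 := by
      refine (ContinuousLinearMap.le_opNorm _ _).trans ?_
      rw [LinearIsometryEquiv.norm_map]
      exact mul_le_one₀ hJ1 (norm_nonneg _) hy
    have h2 : eLpNorm (ContinuousLinearMap.adjoint J y) 2 μ ≤ 1 := by
      rw [Lp.norm_def] at h1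
      have := ENNReal.ofReal_le_ofReal h1
      rwa [ENNReal.ofReal_toReal (Lp.eLpNorm_ne_top _), ENNReal.ofReal_one] at this
    have h3 := eLpNorm_nnreal_pow_eq_lintegral (μ := μ) (p := 2) (f := ContinuousLinearMap.adjoint J y) (by norm_num)
    have h4 : ∫⁻ x, ‖(starRingEnd ℂ) ((ContinuousLinearMap.adjoint J y) x)‖ₑ^2 ∂μ =
        (eLpNorm (ContinuousLinearMap.adjoint J y) 2 μ)^2 := by
      have e : ∀ x, ‖(starRingEnd ℂ) ((ContinuousLinearMap.adjoint J y) x)‖ₑ = ‖(ContinuousLinearMap.adjoint J y) x‖ₑ := by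
        intro x
        rw [← ofReal_norm, ← ofReal_norm, RCLike.norm_conj]
      simp_rw [e]
      simpa using h3.symm
    rw [h4]
    exact pow_le_one' h2 2
  · refine ⟨J (indicatorConstLp 2 (measurableSet_singleton x) (measure_ne_top μ _) 1), fun y => ?_⟩
    rw [← ContinuousLinearMap.adjoint_inner_left, ← inner_conj_symm,
      L2.inner_indicatorConstLp_one, integral_singleton, Complex.real_smul, map_mul, Complex.conj_ofReal]


lemma eig_atom {A : Hz →L[ℂ] Hz} (hΦ : Φ (fourier 1) = A) (hu : star A * A = 1) {ψ : Hz} {x : Torus}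
    (h : A ψ = ec x • ψ) (hne : inner ℂ ψ φ ≠ 0) : sm Φ φ {x} ≠ 0 := by
  intro h0
  obtain ⟨g, hg, hgi, -, -⟩ := exists_g Φ φ
  have hs : (star A) ψ = ec (-x) • ψ := by
    have : (star A) (A ψ) = ψ := by
      rw [← mul_apply_eq_comp, hu]; rfl
    rw [h, map_smul] at this
    rw [ec_neg, ← this, smul_smul, inv_mul_cancel₀ (ec_ne_zero _), one_smul, this]
  have key := lin5 (sm Φ φ) (hg ψ) (hg ψ) (hg ψ) (hg ψ) (hg ψ) 1 (ec x) 0 0 0 (fun f => by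
    rw [hgi, hgi, map_mul, hΦ, mul_apply_eq_comp, ← ContinuousLinearMap.adjoint_inner_left,
      ← ContinuousLinearMap.star_eq_adjoint, hs, inner_smul_left, ec_conj, neg_neg]
    ring)
  have hx : ∀ᵐ y ∂(sm Φ φ), y ≠ x := by
    rw [ae_iff]; simpa using h0
  apply hne
  have h1 := hgi ψ 1
  rw [map_one, one_apply_eq_self] at h1
  rw [← h1]
  apply integral_eq_zero_of_ae
  filter_upwards [key, hx] with y hy hyx
  have : (ec y - ec x) * g ψ y = 0 := by linear_combination hy
  rcases mul_eq_zero.1 this with h2 | h2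
  · exact absurd (ec_injective (sub_eq_zero.1 h2)) hyx
  · simp [h2]
end

section
variable {t r : ℝ} {ω : ℤ → Torus} {A : Hz →L[ℂ] Hz}
  (hA : ∀ k j : ℤ, inner ℂ (ez k) (A (ez j)) = ec (-(ω k)) * Sent t r k j)
  {Φ : C(Torus, ℂ) →⋆ₐ[ℂ] (Hz →L[ℂ] Hz)} (hΦ : Φ (fourier 1) = A)
include hA hΦ

lemma g_REq (φ : Hz) {g : Hz → Torus → ℂ} (hg : ∀ y, MemLp (g y) 2 (sm Φ φ))
    (hgi : ∀ y f, ∫ x, f x * g y x ∂(sm Φ φ) = inner ℂ y (Φ f φ)) :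
    ∀ᵐ x ∂(sm Φ φ), REq t r ω x (fun k => g (ez k) x) := by
  unfold REq
  rw [ae_all_iff]
  intro k
  by_cases hk : Even k
  swap
  · simp [hk]
  have hk' : ¬ Even (k+1) := by simpa [parity_simps] using hk
  have a := lin5 (sm Φ φ) (hg (ez k)) (hg (ez (k-1))) (hg (ez k)) (hg (ez (k+1))) (hg (ez (k+2)))
    (ec (-(ω k))) (r*t) (r^2) (r*t) (-t^2) (fun f => by
      simp only [hgi]
      rw [map_mul, hΦ, mul_apply_eq_comp]
      simp only [inner_ez]
      rw [coord_even hA k hk]; ring)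
  have b := lin5 (sm Φ φ) (hg (ez (k+1))) (hg (ez (k-1))) (hg (ez k)) (hg (ez (k+1))) (hg (ez (k+2)))
    (ec (-(ω (k+1)))) (-t^2) (-(r*t)) (r^2) (-(r*t)) (fun f => by
      simp only [hgi]
      rw [map_mul, hΦ, mul_apply_eq_comp]
      simp only [inner_ez]
      rw [coord_odd hA (k+1) hk', show k+1-2 = k-1 by ring, show k+1-1 = k by ring, show k+1+1=k+2 by ring]; ring)
  filter_upwards [a, b] with x h1 h2 _
  exact ⟨by rw [h1]; ring, by rw [h2]; ring⟩

lemma gen_eig (j : ℤ) : ∀ᵐ x ∂(sm Φ (ez j)), ∃ h : ℤ → ℂ, REq t r ω x h ∧ h j = 1 ∧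
    ∃ M : ℝ, ∀ k : ℤ, ‖h k‖ ≤ M * (1 + |(k:ℝ)|) := by
  obtain ⟨g, hg, hgi, hgn, -⟩ := exists_g Φ (ez j)
  have h1 : ∀ᵐ x ∂(sm Φ (ez j)), g (ez j) x = 1 := by
    have := L2_zero (sm Φ (ez j)) (g := fun x => g (ez j) x - 1) ((hg (ez j)).sub (memLp_const 1)) (fun f => by
      simp_rw [mul_sub]
      rw [integral_sub (int_fg _ (hg _) _) (int_fg _ (memLp_const 1) _), hgi, ← sm_int]
      simp)
    filter_upwards [this] with x hx
    exact sub_eq_zero.1 hx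
  filter_upwards [h1, g_REq hA hΦ _ hg hgi, growth _ (fun k => hg (ez k)) (fun k => hgn _ (ez_norm k).le)]
    with x a b c
  exact ⟨fun k => g (ez k) x, b, a, c⟩

lemma mem_span (j : ℤ) (hat : ∀ᵐ x ∂(sm Φ (ez j)), sm Φ (ez j) {x} ≠ 0) :
    ez j ∈ (Submodule.span ℂ {ψ : Hz | ψ ≠ 0 ∧ ∃ μ : ℂ, A ψ = μ • ψ}).topologicalClosure := by
  set K := Submodule.span ℂ {ψ : Hz | ψ ≠ 0 ∧ ∃ μ : ℂ, A ψ = μ • ψ}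
  obtain ⟨g, hg, hgi, hgn, hv⟩ := exists_g Φ (ez j)
  rw [← Submodule.orthogonal_orthogonal_eq_closure, Submodule.mem_orthogonal]
  intro y hy
  have h1 := hgi y 1
  rw [map_one, one_apply_eq_self] at h1
  rw [← h1]
  apply integral_eq_zero_of_ae
  have hR := g_REq hA hΦ _ hg hgi
  filter_upwards [hat, hR] with x hx hRx
  obtain ⟨v, hv⟩ := hv x
  have hm : ((sm Φ (ez j)).real {x} : ℂ) ≠ 0 := by
    have : (sm Φ (ez j)).real {x} ≠ 0 := by
      rw [Measure.real, ENNReal.toReal_ne_zero]; exact ⟨hx, measure_ne_top _ _⟩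
    exact_mod_cast this
  have hvk : ∀ k, v k = (sm Φ (ez j)).real {x} * g (ez k) x := fun k => by rw [← inner_ez, hv]
  have hev : A v = ec x • v := by
    refine REq_eig hA (x := x) ?_
    intro k hk
    obtain ⟨a, b⟩ := hRx k hk
    simp only [hvk]
    exact ⟨by linear_combination ((sm Φ (ez j)).real {x} : ℂ) * a,
      by linear_combination ((sm Φ (ez j)).real {x} : ℂ) * b⟩
  have hvK : v ∈ K := by
    by_cases h0 : v = 0
    · rw [h0]; exact zero_mem _
    · exact Submodule.subset_span ⟨h0, ec x, hev⟩
  have : inner ℂ y v = 0 := Submodule.inner_left_of_mem_orthogonal hvK hy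
  rw [hv] at this
  rcases mul_eq_zero.1 this with h | h
  · exact absurd h hm
  · simp [h]
end
end

section
set_option linter.unusedSectionVars false

section
variable {t r : ℝ} {ω : ℤ → Torus} {A : Hz →L[ℂ] Hz}
  (ht0 : 0 < t) (hr0 : 0 < r) (hr1 : r < 1) (hrt : r^2 + t^2 = 1)
  (hA : ∀ k j : ℤ, inner ℂ (ez k) (A (ez j)) = ec (-(ω k)) * Sent t r k j)
include ht0 hr0 hrt hA

lemma block_step (K : Submodule ℂ Hz) (hK : ∀ x ∈ K, A x ∈ K) (hK' : ∀ x ∈ K, (star A) x ∈ K) (k : ℤ)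
    (hk : Even k) (h0 : ez k ∈ K) (h1 : ez (k+1) ∈ K) :
    (ez (k+2) ∈ K ∧ ez (k+3) ∈ K) ∧ (ez (k-2) ∈ K ∧ ez (k-1) ∈ K) := by
  have htc : (t:ℂ) ≠ 0 := by exact_mod_cast ht0.ne'
  have hrc : (r:ℂ) ≠ 0 := by exact_mod_cast hr0.ne'
  have hrtc : (r:ℂ)^2 + (t:ℂ)^2 = 1 := by exact_mod_cast hrt
  have hk' : ¬ Even (k+1) := by simpa [parity_simps] using hk
  have a := hK' _ h0
  rw [adj_even hA k hk, Submodule.smul_mem_iff _ (ec_ne_zero _)] at a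
  have b := hK' _ h1
  rw [adj_odd hA (k+1) hk', Submodule.smul_mem_iff _ (ec_ne_zero _), show k+1-2 = k-1 by ring,
    show k+1-1 = k by ring, show k+1+1=k+2 by ring] at b
  have c : (r:ℂ) • ez (k-1) - (t:ℂ) • ez (k+2) ∈ K := by
    rw [← Submodule.smul_mem_iff K htc]
    convert K.sub_mem a (K.add_mem (K.smul_mem (r^2:ℂ) h0) (K.smul_mem (r*t:ℂ) h1)) using 1
    module
  have d : (t:ℂ) • ez (k-1) + (r:ℂ) • ez (k+2) ∈ K := by
    rw [← Submodule.smul_mem_iff K htc]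
    convert K.sub_mem (K.sub_mem (K.smul_mem (r^2:ℂ) h1) (K.smul_mem (r*t:ℂ) h0)) b using 1
    module
  have e1 : ez (k-1) ∈ K := by
    convert K.add_mem (K.smul_mem (r:ℂ) c) (K.smul_mem (t:ℂ) d) using 1
    match_scalars
    · linear_combination -hrtc
    · ring
  have e2 : ez (k+2) ∈ K := by
    convert K.sub_mem (K.smul_mem (r:ℂ) d) (K.smul_mem (t:ℂ) c) using 1
    match_scalars
    · linear_combination -hrtc
    · ring
  refine ⟨⟨e2, ?_⟩, ?_, e1⟩
  · have f := hK _ e2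
    rw [col_even hA (k+2) (by simpa [parity_simps] using hk), show k+2-2 = k by ring, show k+2-1=k+1 by ring,
      show k+2+1=k+3 by ring] at f
    have hne : (r*t * ec (-(ω (k+3))):ℂ) ≠ 0 := mul_ne_zero (mul_ne_zero hrc htc) (ec_ne_zero _)
    rw [← Submodule.smul_mem_iff K hne]
    convert K.sub_mem (K.sub_mem (K.sub_mem (K.smul_mem (r^2 * ec (-(ω (k+2)))) e2)
      (K.smul_mem (t^2 * ec (-(ω k))) h0)) (K.smul_mem (r*t * ec (-(ω (k+1)))) h1)) f using 1
    module
  · have f := hK _ e1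
    rw [col_odd hA (k-1) (by simpa [parity_simps] using hk), show k-1+2 = k+1 by ring, show k-1-1=k-2 by ring,
      show k-1+1=k by ring] at f
    have hne : (r*t * ec (-(ω (k-2))):ℂ) ≠ 0 := mul_ne_zero (mul_ne_zero hrc htc) (ec_ne_zero _)
    rw [← Submodule.smul_mem_iff K hne]
    convert K.sub_mem f (K.add_mem (K.sub_mem (K.smul_mem (r^2 * ec (-(ω (k-1)))) e1)
      (K.smul_mem (t^2 * ec (-(ω (k+1)))) h1)) (K.smul_mem (r*t * ec (-(ω k))) h0)) using 1
    module

lemma block_all (K : Submodule ℂ Hz) (hK : ∀ x ∈ K, A x ∈ K) (hK' : ∀ x ∈ K, (star A) x ∈ K) (m : ℤ)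
    (h0 : ez (2*m) ∈ K) (h1 : ez (2*m+1) ∈ K) (k : ℤ) : ez k ∈ K := by
  have step := block_step ht0 hr0 hrt hA K hK hK'
  have key : ∀ n : ℤ, ez (2*n) ∈ K ∧ ez (2*n+1) ∈ K := by
    intro n
    have up : ∀ i : ℕ, ez (2*(m+i)) ∈ K ∧ ez (2*(m+i)+1) ∈ K := by
      intro i
      induction i with
      | zero => simpa using ⟨h0, h1⟩
      | succ i ih =>
        have := (step _ (even_two_mul _) ih.1 ih.2).1
        rw [show 2*(m+(i:ℤ))+2 = 2*(m+((i+1:ℕ):ℤ)) by push_cast; ring,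
          show 2*(m+(i:ℤ))+3 = 2*(m+((i+1:ℕ):ℤ))+1 by push_cast; ring] at this
        exact this
    have dn : ∀ i : ℕ, ez (2*(m-i)) ∈ K ∧ ez (2*(m-i)+1) ∈ K := by
      intro i
      induction i with
      | zero => simpa using ⟨h0, h1⟩
      | succ i ih =>
        have := (step _ (even_two_mul _) ih.1 ih.2).2
        rw [show 2*(m-(i:ℤ))-2 = 2*(m-((i+1:ℕ):ℤ)) by push_cast; ring,
          show 2*(m-(i:ℤ))-1 = 2*(m-((i+1:ℕ):ℤ))+1 by push_cast; ring] at this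
        exact this
    rcases le_total m n with h | h
    · obtain ⟨i, hi⟩ := Int.eq_ofNat_of_zero_le (sub_nonneg.2 h)
      have := up i
      rwa [show m + (i:ℤ) = n by omega] at this
    · obtain ⟨i, hi⟩ := Int.eq_ofNat_of_zero_le (sub_nonneg.2 h)
      have := dn i
      rwa [show m - (i:ℤ) = n by omega] at this
  rcases Int.even_or_odd' k with ⟨n, rfl | rfl⟩
  · exact (key n).1
  · exact (key n).2

lemma eig_unit (hu : star A * A = 1) {ψ : Hz} (h0 : ψ ≠ 0) {μ : ℂ} (h : A ψ = μ • ψ) :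
    ∃ x : Torus, ec x = μ := by
  have h1 : inner ℂ (A ψ) (A ψ) = inner ℂ ψ ψ := by
    rw [← ContinuousLinearMap.adjoint_inner_right, ← ContinuousLinearMap.star_eq_adjoint,
      ← mul_apply_eq_comp, hu, one_apply_eq_self]
  have h2 : ‖A ψ‖ = ‖ψ‖ := by
    rw [inner_self_eq_norm_sq_to_K, inner_self_eq_norm_sq_to_K] at h1
    have h' : ‖A ψ‖^2 = ‖ψ‖^2 := by exact_mod_cast h1
    exact (sq_eq_sq₀ (norm_nonneg _) (norm_nonneg _)).1 h'
  rw [h, norm_smul] at h2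
  have h3 : ‖μ‖ = 1 := mul_right_cancel₀ (norm_ne_zero_iff.2 h0) (h2.trans (one_mul _).symm)
  exact ⟨_, ec_arg h3⟩

/-- exceptional energies -/
def Exc (t r s w : ℝ) (m : ℤ) (ω : ℤ → Torus) : Set Torus :=
  {x | (fun k : ℕ => x + ω (2*m+2+k)) ∈ Bad t r s w ∨ (fun k : ℕ => x + ω (2*m-1-k)) ∈ Bad t r s w}

include hr1
lemma det_main {s w : ℝ} (hs : 0 < s) (hw : 1 < w)
    {Φ : C(Torus, ℂ) →⋆ₐ[ℂ] (Hz →L[ℂ] Hz)} (hΦ : Φ (fourier 1) = A) (m : ℤ)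
    (hn : ∀ j, (j = 2*m ∨ j = 2*m+1) → sm Φ (ez j) (Exc t r s w m ω) = 0) :
    (Submodule.span ℂ {ψ : Hz | ψ ≠ 0 ∧ ∃ μ : ℂ, A ψ = μ • ψ}).topologicalClosure = ⊤ ∧
      ∀ ψ : Hz, ψ ≠ 0 → (∃ μ : ℂ, A ψ = μ • ψ) →
        ∃ C > (0:ℝ), ∃ lam > (0:ℝ), ∀ k : ℤ,
          ‖inner (𝕜 := ℂ) (ez k) ψ‖ ≤ C * Real.exp (-lam * |(k:ℝ)|) := by
  have hu := A_unitary hrt hA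
  rw [Unitary.mem_iff] at hu
  constructor
  · have hat : ∀ j, (j = 2*m ∨ j = 2*m+1) → ∀ᵐ x ∂(sm Φ (ez j)), sm Φ (ez j) {x} ≠ 0 := by
      intro j hj
      have hE : ∀ᵐ x ∂(sm Φ (ez j)), x ∉ Exc t r s w m ω := by
        rw [ae_iff]; simpa using hn j hj
      filter_upwards [hE, gen_eig hA hΦ j] with x hx ⟨h, hR, hj1, M, hM⟩
      have hx' := not_or.1 hx
      obtain ⟨C, hC, lam, hl, hdec⟩ := eig_decay ht0 hr0 hr1 hrt hs hw (REq_EigEq hR) m hx'.1 hx'.2 hM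
      let ψ : Hz := ⟨h, decay_mem hC hl hdec⟩
      have hψ : A ψ = ec x • ψ := REq_eig hA (ψ := ψ) hR
      refine eig_atom Φ (ez j) hΦ hu.1 hψ ?_
      rw [← inner_conj_symm, inner_ez, show ψ j = 1 from hj1]
      simp
    set S := Submodule.span ℂ {ψ : Hz | ψ ≠ 0 ∧ ∃ μ : ℂ, A ψ = μ • ψ} with hS
    have inv : ∀ B : Hz →L[ℂ] Hz, (∀ ψ : Hz, ψ ≠ 0 → (∃ μ : ℂ, A ψ = μ • ψ) → B ψ ∈ S) →
        ∀ x ∈ S.topologicalClosure, B x ∈ S.topologicalClosure := by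
      intro B hB
      have h1 : S ≤ S.comap B.toLinearMap := by
        rw [hS, Submodule.span_le]
        rintro ψ ⟨h0, h1⟩
        exact hB ψ h0 h1
      intro x hx
      exact map_mem_closure B.continuous hx (fun y hy => h1 hy)
    have hin : ∀ ψ : Hz, ψ ≠ 0 → (∃ μ : ℂ, A ψ = μ • ψ) → ψ ∈ S := fun ψ h0 h1 =>
      Submodule.subset_span ⟨h0, h1⟩
    have hall := block_all ht0 hr0 hrt hA S.topologicalClosure
      (inv A fun ψ h0 h1 => by
        have := hin ψ h0 h1
        obtain ⟨μ, h1⟩ := h1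
        rw [h1]; exact S.smul_mem _ this)
      (inv (star A) fun ψ h0 h1 => by
        have := hin ψ h0 h1
        obtain ⟨μ, h1⟩ := h1
        obtain ⟨x, rfl⟩ := eig_unit ht0 hr0 hrt hA hu.1 h0 h1
        have h2 : (star A) (A ψ) = ψ := by
          rw [← mul_apply_eq_comp, hu.1, one_apply_eq_self]
        rw [h1, map_smul] at h2
        rw [← Submodule.smul_mem_iff S (ec_ne_zero x), h2]; exact this)
      m (mem_span hA hΦ _ (hat _ (Or.inl rfl))) (mem_span hA hΦ _ (hat _ (Or.inr rfl)))
    rw [eq_top_iff, ← ez_dense]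
    refine Submodule.topologicalClosure_minimal _ ?_ (Submodule.isClosed_topologicalClosure _)
    rw [Submodule.span_le]
    rintro _ ⟨k, rfl⟩
    exact hall k
  · rintro ψ h0 ⟨μ, h⟩
    obtain ⟨x, rfl⟩ := eig_unit ht0 hr0 hrt hA hu.1 h0 h
    have hE := REq_EigEq (eig_REq hA h)
    have hj : ∃ j, (j = 2*m ∨ j = 2*m+1) ∧ ψ j ≠ 0 := by
      by_contra hcon
      push Not at hcon
      apply h0
      ext k
      exact eig_unique ht0 hr0 hr1 hrt hE m (hcon _ (Or.inl rfl)) (hcon _ (Or.inr rfl)) k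
    obtain ⟨j, hj, hj0⟩ := hj
    have hatom := eig_atom Φ (ez j) hΦ hu.1 h (by
      rw [← inner_conj_symm, inner_ez]; simpa using hj0)
    have hx : x ∉ Exc t r s w m ω := fun hx => hatom
      (measure_mono_null (Set.singleton_subset_iff.2 hx) (hn j hj))
    have hx' := not_or.1 hx
    simp only [inner_ez]
    refine eig_decay ht0 hr0 hr1 hrt hs hw hE m hx'.1 hx'.2 (M := ‖ψ‖) (fun k => ?_)
    refine (lp.norm_apply_le_norm (by norm_num) ψ k).trans ?_
    exact le_mul_of_one_le_right (norm_nonneg _) (by linarith [abs_nonneg (k:ℝ)])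
end
end

section
set_option linter.unusedSectionVars false

section
variable {Ω : Type*} [MeasurableSpace Ω] (K : Ω → Measure Torus) [∀ ω, IsProbabilityMeasure (K ω)]

lemma kernel_meas (h : ∀ n : ℤ, Measurable fun ω => ∫ x, fourier n x ∂(K ω)) : Measurable K := by
  have hc : ∀ f : C(Torus, ℂ), Measurable fun ω => ∫ x, f x ∂(K ω) := by
    intro f
    induction f using trig_induction with
    | hcl =>
      refine IsSeqClosed.isClosed fun u f hu hf => ?_
      change Measurable fun ω => ∫ x, f x ∂(K ω)
      refine measurable_of_tendsto_metrizable (f := fun n ω => ∫ x, u n x ∂(K ω)) hu ?_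
      rw [tendsto_pi_nhds]
      intro ω
      exact ((integral_trig_continuous (K ω)).tendsto f).comp hf
    | h0 => simp
    | hadd f g hf hg =>
      have : (fun ω => ∫ x, (f + g) x ∂(K ω)) = fun ω => ∫ x, f x ∂(K ω) + ∫ x, g x ∂(K ω) := by
        ext ω
        exact integral_add (cont_integrable _ f.continuous) (cont_integrable _ g.continuous)
      rw [this]; exact hf.add hg
    | hsmul c f hf =>
      have : (fun ω => ∫ x, (c • f) x ∂(K ω)) = fun ω => c * ∫ x, f x ∂(K ω) := by
        ext ω
        exact integral_const_mul c _
      rw [this]; exact hf.const_mul c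
    | hf n => exact h n
  have hr : ∀ f : C(Torus, ℝ), Measurable fun ω => ∫ x, f x ∂(K ω) := by
    intro f
    have : (fun ω => ∫ x, f x ∂(K ω)) = fun ω => (∫ x, (cpx f) x ∂(K ω)).re := by
      ext ω
      have : ∫ x, (cpx f) x ∂(K ω) = ((∫ x, f x ∂(K ω) : ℝ) : ℂ) := integral_complex_ofReal
      rw [this]; simp
    rw [this]
    exact Complex.measurable_re.comp (hc _)
  refine Measurable.measure_of_isPiSystem_of_isProbabilityMeasure
    (S := {s : Set Torus | IsClosed s}) ?_ isPiSystem_isClosed ?_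
  · rw [← borel_eq_generateFrom_isClosed]; exact BorelSpace.measurable_eq
  intro F hF
  have hd : ∀ n : ℕ, 0 < 1 / ((n : ℝ) + 1) := fun n => Nat.one_div_pos_of_nat
  refine measurable_of_tendsto_metrizable
    (f := fun n ω => ∫⁻ x, (thickenedIndicator (hd n) F x : ENNReal) ∂(K ω)) ?_ ?_
  · intro n
    let g : C(Torus, ℝ) := ⟨fun x => (thickenedIndicator (hd n) F x : ℝ),
      NNReal.continuous_coe.comp (thickenedIndicator (hd n) F).continuous⟩
    have : (fun ω => ∫⁻ x, (thickenedIndicator (hd n) F x : ENNReal) ∂(K ω))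
        = fun ω => ENNReal.ofReal (∫ x, g x ∂(K ω)) := by
      ext ω
      rw [ofReal_integral_eq_lintegral_ofReal (g.continuous.integrable_of_hasCompactSupport
        (HasCompactSupport.of_compactSpace _)) (Eventually.of_forall fun x => NNReal.coe_nonneg _)]
      refine lintegral_congr fun x => ?_
      simp [g]
    rw [this]
    exact (hr g).ennreal_ofReal
  · rw [tendsto_pi_nhds]
    intro ω
    exact tendsto_lintegral_thickenedIndicator_of_isClosed (K ω) hF hd
      tendsto_one_div_add_atTop_nhds_zero_nat
end

lemma int_fourier_neg (μ : Measure Torus) (n : ℤ) :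
    ∫ x, fourier (-n) x ∂μ = (starRingEnd ℂ) (∫ x, fourier n x ∂μ) := by
  rw [← integral_conj]
  simp only [fourier_neg]

lemma avg_null (K : Torus → Measure Torus) [∀ a, IsProbabilityMeasure (K a)]
    (h : ∀ n : ℤ, Measurable fun ω => ∫ x, fourier n x ∂(K ω))
    (hav : ∀ n : ℕ, ∫ a, ∫ x, fourier ((n:ℤ)+1) x ∂(K a) ∂mh = 0)
    {E : Set Torus} (hE : MeasurableSet E) (hE0 : mh E = 0) : ∀ᵐ a ∂mh, K a E = 0 := by
  have hK := kernel_meas K h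
  let κ : ProbabilityTheory.Kernel Torus Torus := ⟨K, hK⟩
  have hκ : ∀ a, κ a = K a := fun a => rfl
  have : ProbabilityTheory.IsMarkovKernel κ := ⟨fun a => by rw [hκ]; infer_instance⟩
  have hall : ∀ n : ℤ, ∫ a, ∫ x, fourier n x ∂(K a) ∂mh = ∫ x, fourier n x ∂mh := by
    have hp : ∀ n : ℕ, ∫ a, ∫ x, fourier ((n:ℤ)+1) x ∂(K a) ∂mh = ∫ x, fourier ((n:ℤ)+1) x ∂mh := by
      intro n
      rw [hav, integral_fourier, if_neg (by omega)]
    intro n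
    rcases lt_trichotomy n 0 with hn | hn | hn
    · obtain ⟨m, rfl⟩ : ∃ m : ℕ, n = -((m:ℤ)+1) := ⟨(-n-1).toNat, by omega⟩
      simp only [int_fourier_neg]
      rw [integral_conj, hp]
    · subst hn
      simp
    · obtain ⟨m, rfl⟩ : ∃ m : ℕ, n = ((m:ℤ)+1) := ⟨(n-1).toNat, by omega⟩
      exact hp m
  have hmain : Measure.map Prod.snd (mh.compProd κ) = mh := by
    have : IsProbabilityMeasure (Measure.map Prod.snd (mh.compProd κ)) :=
      Measure.isProbabilityMeasure_map measurable_snd.aemeasurable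
    refine torus_measure_ext _ _ fun n => ?_
    rw [integral_map measurable_snd.aemeasurable (map_continuous _).aestronglyMeasurable,
      Measure.integral_compProd]
    · exact hall n
    · refine Integrable.mono' (integrable_const (1:ℝ)) ?_ ?_
      · exact ((map_continuous (fourier n)).comp continuous_snd).aestronglyMeasurable
      · exact Eventually.of_forall fun x => by rw [fourier_eq_ec]; simp [ec_norm]
  have h0 : (mh.compProd κ) (Prod.snd ⁻¹' E) = 0 := by
    rw [← Measure.map_apply measurable_snd hE, hmain, hE0]
  rw [Measure.compProd_apply (measurable_snd hE), lintegral_eq_zero_iff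
    (ProbabilityTheory.Kernel.measurable_kernel_prodMk_left (measurable_snd hE))] at h0
  filter_upwards [h0] with a ha
  exact ha
end

section
set_option linter.unusedSectionVars false

lemma coord_all (t r : ℝ) (k : ℤ) : ∃ c₁ c₂ c₃ c₄ c₅ : ℂ, ∀ {ω : ℤ → Torus} {A : Hz →L[ℂ] Hz}
    (_ : ∀ k j : ℤ, inner ℂ (ez k) (A (ez j)) = ec (-(ω k)) * Sent t r k j) (x : Hz),
    (A x) k = ec (-(ω k)) * (c₁ * x (k-2) + c₂ * x (k-1) + c₃ * x k + c₄ * x (k+1) + c₅ * x (k+2)) := by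
  by_cases hk : Even k
  · refine ⟨0, r*t, r^2, r*t, -t^2, fun hA x => ?_⟩
    rw [coord_even hA k hk x]; ring
  · refine ⟨-t^2, -(r*t), r^2, -(r*t), 0, fun hA x => ?_⟩
    rw [coord_odd hA k hk x]; ring

lemma fourier_nat (n : ℕ) : (fourier (n:ℤ) : C(Torus, ℂ)) = fourier 1 ^ n := by
  ext x
  rw [ContinuousMap.pow_apply, fourier_eq_ec, fourier_eq_ec]
  simp

section
variable {t r : ℝ} {U : (ℤ → Torus) → Hz →L[ℂ] Hz}
  (hU : ∀ ω : ℤ → Torus, ∀ k j : ℤ, inner ℂ (ez k) (U ω (ez j)) = ec (-(ω k)) * Sent t r k j)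

lemma sm_moment {A : Hz →L[ℂ] Hz} {Φ : C(Torus, ℂ) →⋆ₐ[ℂ] (Hz →L[ℂ] Hz)} (hΦ : Φ (fourier 1) = A)
    (j : ℤ) (n : ℕ) : ∫ x, fourier (n:ℤ) x ∂(sm Φ (ez j)) = ((A^n) (ez j)) j := by
  rw [sm_int, inner_ez, fourier_nat, map_pow, hΦ]

lemma sm_prob (Φ : C(Torus, ℂ) →⋆ₐ[ℂ] (Hz →L[ℂ] Hz)) (j : ℤ) :
    IsProbabilityMeasure (sm Φ (ez j)) := by
  have h := sm_moment (Φ := Φ) rfl j 0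
  simp only [Nat.cast_zero, fourier_zero, integral_const, pow_zero, one_apply_eq_self] at h
  rw [ez_apply, if_pos rfl] at h
  rw [isProbabilityMeasure_iff_real]
  simpa using h

include hU
lemma pow_coord_meas (j : ℤ) (n : ℕ) : ∀ k, Measurable fun ω => ((U ω ^ n) (ez j)) k := by
  induction n with
  | zero => intro k; simp
  | succ n ih =>
    intro k
    obtain ⟨c₁, c₂, c₃, c₄, c₅, h⟩ := coord_all t r k
    have : (fun ω => ((U ω ^ (n+1)) (ez j)) k) = fun ω => ec (-(ω k)) * (c₁ * ((U ω ^ n) (ez j)) (k-2)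
      + c₂ * ((U ω ^ n) (ez j)) (k-1) + c₃ * ((U ω ^ n) (ez j)) k + c₄ * ((U ω ^ n) (ez j)) (k+1)
      + c₅ * ((U ω ^ n) (ez j)) (k+2)) := by
      ext ω
      rw [pow_succ', mul_apply_eq_comp, h (hU ω)]
    rw [this]
    have h1 : Measurable fun ω : ℤ → Torus => ec (-(ω k)) :=
      ec_continuous.measurable.comp (measurable_pi_apply k).neg
    have ih' : ∀ (c : ℂ) (k : ℤ), Measurable fun ω => (c * ((U ω ^ n) (ez j)) k : ℂ) :=
      fun c k => (ih k).const_mul c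
    have a1 : Measurable fun ω => (c₁ * ((U ω ^ n) (ez j)) (k-2) + c₂ * ((U ω ^ n) (ez j)) (k-1) : ℂ) :=
      Measurable.add (ih' _ _) (ih' _ _)
    have a2 := Measurable.add a1 (ih' c₃ k)
    have a3 := Measurable.add a2 (ih' c₄ (k+1))
    have a4 := Measurable.add a3 (ih' c₅ (k+2))
    exact Measurable.mul h1 a4

lemma pow_coord_poly (ω : ℤ → Torus) (j : ℤ) (n : ℕ) : ∀ k, ∃ p : Polynomial ℂ, ∀ a,
    ((U (Function.update ω j a) ^ n) (ez j)) k = p.eval (ec (-a)) := by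
  induction n with
  | zero => intro k; exact ⟨Polynomial.C ((ez j) k), by simp⟩
  | succ n ih =>
    intro k
    obtain ⟨c₁, c₂, c₃, c₄, c₅, h⟩ := coord_all t r k
    obtain ⟨p₁, h₁⟩ := ih (k-2)
    obtain ⟨p₂, h₂⟩ := ih (k-1)
    obtain ⟨p₃, h₃⟩ := ih k
    obtain ⟨p₄, h₄⟩ := ih (k+1)
    obtain ⟨p₅, h₅⟩ := ih (k+2)
    refine ⟨(if k = j then Polynomial.X else Polynomial.C (ec (-(ω k)))) * (Polynomial.C c₁ * p₁
      + Polynomial.C c₂ * p₂ + Polynomial.C c₃ * p₃ + Polynomial.C c₄ * p₄ + Polynomial.C c₅ * p₅),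
      fun a => ?_⟩
    rw [pow_succ', mul_apply_eq_comp, h (hU _), h₁, h₂, h₃, h₄, h₅]
    by_cases hk : k = j
    · subst hk; simp
    · simp [hk]

lemma pow_coord_int (ω : ℤ → Torus) (j : ℤ) (n : ℕ) :
    ∫ a, ((U (Function.update ω j a) ^ (n+1)) (ez j)) j ∂mh = 0 := by
  obtain ⟨c₁, c₂, c₃, c₄, c₅, h⟩ := coord_all t r j
  obtain ⟨p₁, h₁⟩ := pow_coord_poly hU ω j n (j-2)
  obtain ⟨p₂, h₂⟩ := pow_coord_poly hU ω j n (j-1)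
  obtain ⟨p₃, h₃⟩ := pow_coord_poly hU ω j n j
  obtain ⟨p₄, h₄⟩ := pow_coord_poly hU ω j n (j+1)
  obtain ⟨p₅, h₅⟩ := pow_coord_poly hU ω j n (j+2)
  have : ∃ p : Polynomial ℂ, ∀ a, ((U (Function.update ω j a) ^ (n+1)) (ez j)) j
      = ec (-a) * p.eval (ec (-a)) := by
    refine ⟨(Polynomial.C c₁ * p₁
      + Polynomial.C c₂ * p₂ + Polynomial.C c₃ * p₃ + Polynomial.C c₄ * p₄ + Polynomial.C c₅ * p₅),
      fun a => ?_⟩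
    rw [pow_succ', mul_apply_eq_comp, h (hU _), h₁, h₂, h₃, h₄, h₅]
    simp
  obtain ⟨p, hp⟩ := this
  simp_rw [hp, Polynomial.eval_eq_sum_range, Finset.mul_sum]
  have hc : Continuous fun a : Torus => ec (-a) := ec_continuous.comp continuous_neg
  rw [integral_finsetSum _ fun i _ => cont_integrable _ (by fun_prop)]
  refine Finset.sum_eq_zero fun i _ => ?_
  have : (fun a : Torus => ec (-a) * (p.coeff i * ec (-a) ^ i))
      = fun a => p.coeff i * fourier (-((i:ℤ)+1)) a := by
    ext a
    rw [fourier_eq_ec, zpow_neg, ec_neg]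
    have : ec a ^ ((i:ℤ)+1) = ec a ^ (i+1) := by exact_mod_cast zpow_natCast (ec a) (i+1)
    rw [this, inv_pow, pow_succ, mul_inv]; ring
  rw [this, integral_const_mul, integral_fourier, if_neg (by omega), mul_zero]

/-- spectral averaging -/
lemma spec_avg {Φ : (ℤ → Torus) → C(Torus, ℂ) →⋆ₐ[ℂ] (Hz →L[ℂ] Hz)} (hΦ : ∀ ω, Φ ω (fourier 1) = U ω)
    (ω : ℤ → Torus) (j : ℤ) {E : Set Torus} (hE : MeasurableSet E) (hE0 : mh E = 0) :
    ∀ᵐ a ∂mh, sm (Φ (Function.update ω j a)) (ez j) E = 0 := by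
  have hp := fun a => sm_prob (Φ (Function.update ω j a)) j
  have hm : ∀ n : ℕ, Measurable fun a => ∫ x, fourier (n:ℤ) x ∂(sm (Φ (Function.update ω j a)) (ez j)) := by
    intro n
    simp_rw [sm_moment (hΦ _)]
    exact (pow_coord_meas hU j n j).comp (measurable_update ω)
  refine avg_null (fun a => sm (Φ (Function.update ω j a)) (ez j)) ?_ ?_ hE hE0
  · intro n
    obtain ⟨m, rfl | rfl⟩ := n.eq_nat_or_neg
    · exact hm m
    · simp only [int_fourier_neg]
      exact Complex.continuous_conj.measurable.comp (hm m)
  · intro n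
    have := pow_coord_int hU ω j n
    simp_rw [← sm_moment (hΦ _)] at this
    simpa using this

lemma sm_meas {Φ : (ℤ → Torus) → C(Torus, ℂ) →⋆ₐ[ℂ] (Hz →L[ℂ] Hz)} (hΦ : ∀ ω, Φ ω (fourier 1) = U ω)
    (j : ℤ) : Measurable fun ω => sm (Φ ω) (ez j) := by
  have hp := fun ω => sm_prob (Φ ω) j
  have hm : ∀ n : ℕ, Measurable fun ω => ∫ x, fourier (n:ℤ) x ∂(sm (Φ ω) (ez j)) := by
    intro n
    simp_rw [sm_moment (hΦ _)]
    exact pow_coord_meas hU j n j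
  refine kernel_meas (fun ω => sm (Φ ω) (ez j)) ?_
  intro n
  obtain ⟨m, rfl | rfl⟩ := n.eq_nat_or_neg
  · exact hm m
  · simp only [int_fourier_neg]
    exact Complex.continuous_conj.measurable.comp (hm m)
end
end

set_option linter.unusedSectionVars false

lemma good_M (ν : Measure Torus) [IsProbabilityMeasure ν]
    (hac : (volume : Measure Torus).withDensity (ν.rnDeriv volume) ≠ 0) :
    ∃ M, MeasurableSet M ∧ ν M ≠ 0 ∧ ∀ E, mh E = 0 → ν (E ∩ M) = 0 := by
  obtain ⟨N, hN, h1, h2⟩ := Measure.mutuallySingular_singularPart ν (volume : Measure Torus)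
  have hd := Measure.haveLebesgueDecomposition_add ν (volume : Measure Torus)
  set ρ := (volume : Measure Torus).withDensity (ν.rnDeriv volume) with hρ
  have hρac : ρ ≪ volume := withDensity_absolutelyContinuous _ _
  refine ⟨N, hN, ?_, ?_⟩
  · intro h
    apply hac
    rw [← Measure.measure_univ_eq_zero, ← Set.union_compl_self N]
    refine le_antisymm ((measure_union_le _ _).trans ?_) bot_le
    rw [hρac h2, add_zero, ← h]
    conv_rhs => rw [hd]
    rw [Measure.add_apply]
    exact le_add_self
  · intro E hE
    have hv : (volume : Measure Torus) E = 0 := by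
      rw [AddCircle.volume_eq_smul_haarAddCircle, Measure.smul_apply, hE, smul_zero]
    rw [hd, Measure.add_apply, measure_mono_null Set.inter_subset_right h1,
      measure_mono_null Set.inter_subset_left (hρac hv), add_zero]

lemma hits (ν : Measure Torus) [IsProbabilityMeasure ν] (ℙ : Measure (ℤ → Torus)) [IsProbabilityMeasure ℙ]
    (hiid : ∀ (s : Finset ℤ) (A : ℤ → Set Torus), (∀ k, MeasurableSet (A k)) →
      ℙ {ω | ∀ k ∈ s, ω k ∈ A k} = ∏ k ∈ s, ν (A k)) {M : Set Torus} (hM : MeasurableSet M)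
    (hM0 : ν M ≠ 0) : ∀ᵐ ω ∂ℙ, ∃ m : ℤ, ω (2*m) ∈ M ∧ ω (2*m+1) ∈ M := by
  classical
  let B : ℕ → Set (ℤ → Torus) := fun m => {ω | ω (2*(m:ℤ)) ∈ M ∧ ω (2*(m:ℤ)+1) ∈ M}
  have hB : ∀ m, MeasurableSet (B m) := fun m =>
    (measurable_pi_apply (2*(m:ℤ)) hM).inter (measurable_pi_apply (2*(m:ℤ)+1) hM)
  have hbox : ∀ s : Finset ℕ, ℙ (⋂ m ∈ s, B m) = (ν M ^ 2) ^ s.card := by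
    intro s
    let f : ℕ × Fin 2 → ℤ := fun p => 2 * (p.1 : ℤ) + (p.2.val : ℤ)
    have hf : Function.Injective f := by
      rintro ⟨a, i⟩ ⟨b, j⟩ h
      simp only [f] at h
      have := i.2
      have := j.2
      refine Prod.ext ?_ (Fin.ext ?_) <;> simp only <;> omega
    have := hiid ((s ×ˢ Finset.univ).image f) (fun _ => M) (fun _ => hM)
    rw [Finset.prod_const, Finset.card_image_of_injective _ hf, Finset.card_product] at this
    simp only [Finset.card_univ, Fintype.card_fin] at this
    rw [← pow_mul, Nat.mul_comm 2 s.card, ← this]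
    congr 1
    ext ω
    simp only [Set.mem_iInter, Finset.forall_mem_image, Finset.mem_product, Finset.mem_univ, and_true, Prod.forall]
    constructor
    · intro h m i hm
      have h' := h m hm
      fin_cases i
      · simpa [f] using h'.1
      · simpa [f] using h'.2
    · intro h m hm
      exact ⟨by simpa [f] using h m 0 hm, by simpa [f] using h m 1 hm⟩
  have hB1 : ∀ m, ℙ (B m) = ν M ^ 2 := by
    intro m
    simpa using hbox {m}
  have hind : ProbabilityTheory.iIndepSet B ℙ := by
    rw [ProbabilityTheory.iIndepSet_iff_meas_biInter hB]
    intro s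
    rw [hbox]; simp [hB1]
  have hlim := ProbabilityTheory.measure_limsup_eq_one hB hind (by
    simp only [hB1]
    exact ENNReal.tsum_const_eq_top_of_ne_zero (pow_ne_zero 2 hM0))
  have hms : MeasurableSet (limsup B atTop) := MeasurableSet.measurableSet_limsup hB
  rw [← prob_compl_eq_zero_iff hms] at hlim
  have hae : ∀ᵐ ω ∂ℙ, ω ∈ limsup B atTop := hlim
  filter_upwards [hae] with ω hω
  rw [mem_limsup_iff_frequently_mem] at hω
  obtain ⟨m, hm⟩ := hω.exists
  exact ⟨m, hm⟩

lemma Exc_update (t r s w : ℝ) (m j : ℤ) (hj : j = 2*m ∨ j = 2*m+1) (ω : ℤ → Torus) (a : Torus) :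
    Exc t r s w m (Function.update ω j a) = Exc t r s w m ω := by
  have h1 : ∀ k : ℕ, Function.update ω j a (2*m+2+k) = ω (2*m+2+k) := fun k =>
    Function.update_of_ne (by omega) _ _
  have h2 : ∀ k : ℕ, Function.update ω j a (2*m-1-k) = ω (2*m-1-k) := fun k =>
    Function.update_of_ne (by omega) _ _
  simp only [Exc, h1, h2]

lemma Exc_meas {t r : ℝ} (ht0 : 0 < t) (hr0 : 0 < r) (hr1 : r < 1) (hrt : r^2 + t^2 = 1) (s w : ℝ) (m : ℤ) :
    MeasurableSet {p : (ℤ → Torus) × Torus | p.2 ∈ Exc t r s w m p.1} := by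
  have hb := Bad_meas ht0 hr0 hr1 hrt s w
  have h1 : Measurable fun p : (ℤ → Torus) × Torus => (fun k : ℕ => p.2 + p.1 (2*m+2+k)) := by fun_prop
  have h2 : Measurable fun p : (ℤ → Torus) × Torus => (fun k : ℕ => p.2 + p.1 (2*m-1-k)) := by fun_prop
  exact (h1 hb).union (h2 hb)

lemma Exc_null {t r : ℝ} (ht0 : 0 < t) (hr0 : 0 < r) (hr1 : r < 1) (hrt : r^2 + t^2 = 1) {s w : ℝ}
    (ν : Measure Torus) [IsProbabilityMeasure ν]
    (h : ∀ x : Torus, ∀ᵐ ω ∂(Measure.infinitePi fun _ : ℕ => ν), (fun k => x + ω k) ∉ Bad t r s w) (m : ℤ) :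
    ∀ᵐ ω ∂(Measure.infinitePi fun _ : ℤ => ν), mh (Exc t r s w m ω) = 0 := by
  have hT := Exc_meas ht0 hr0 hr1 hrt s w m
  have key : ∀ f : ℕ → ℤ, Function.Injective f → ∀ x : Torus,
      ∀ᵐ ω ∂(Measure.infinitePi fun _ : ℤ => ν), (fun k => x + ω (f k)) ∉ Bad t r s w := by
    intro f hf x
    have := h x
    rw [← infinitePi_reindex ν f hf] at this
    exact ae_of_ae_map (f := fun (ω : ℤ → Torus) (k : ℕ) => ω (f k))
      (measurable_pi_lambda _ fun k => measurable_pi_apply (f k)).aemeasurable this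
  have hx : ∀ x : Torus, ∀ᵐ ω ∂(Measure.infinitePi fun _ : ℤ => ν), x ∉ Exc t r s w m ω := by
    intro x
    filter_upwards [key (fun k => 2*m+2+k) (fun a b hab => by simpa using hab) x,
      key (fun k => 2*m-1-k) (fun a b hab => by simpa using hab) x] with ω h1 h2 h3
    exact h3.elim h1 h2
  have h0 : (mh.prod (Measure.infinitePi fun _ : ℤ => ν)) {p : Torus × (ℤ → Torus) | p.1 ∈ Exc t r s w m p.2} = 0 := by
    have hT' : MeasurableSet {p : Torus × (ℤ → Torus) | p.1 ∈ Exc t r s w m p.2} := measurable_swap hT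
    rw [Measure.measure_prod_null hT']
    refine Eventually.of_forall fun x => ?_
    have := measure_eq_zero_iff_ae_notMem.2 (hx x)
    exact this
  have h1 : ((Measure.infinitePi fun _ : ℤ => ν).prod mh) {p : (ℤ → Torus) × Torus | p.2 ∈ Exc t r s w m p.1} = 0 := by
    rw [← Measure.prod_swap, Measure.map_apply measurable_swap hT]
    exact h0
  rw [Measure.measure_prod_null hT] at h1
  exact h1

lemma resample_null (ν : Measure Torus) [IsProbabilityMeasure ν] (j : ℤ) {g : (ℤ → Torus) → ENNReal}
    (hg : Measurable g) {M : Set Torus} (hM : MeasurableSet M)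
    (h : ∀ᵐ ω ∂(Measure.infinitePi fun _ : ℤ => ν), ν ({a | ¬ g (Function.update ω j a) = 0} ∩ M) = 0) :
    ∀ᵐ ω ∂(Measure.infinitePi fun _ : ℤ => ν), ω j ∈ M → g ω = 0 := by
  have hMj : MeasurableSet {ω : ℤ → Torus | ω j ∈ M} := measurable_pi_apply j hM
  let H : (ℤ → Torus) → ENNReal := {ω : ℤ → Torus | ω j ∈ M}.indicator g
  have hH : Measurable H := hg.indicator hMj
  have hz : ∫⁻ ω, H ω ∂(Measure.infinitePi fun _ : ℤ => ν) = 0 := by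
    rw [resample ν j hH]
    have : ∀ᵐ ω ∂(Measure.infinitePi fun _ : ℤ => ν), (∫⁻ a, H (Function.update ω j a) ∂ν) = 0 := by
      filter_upwards [h] with ω hω
      have hu : Measurable fun a => H (Function.update ω j a) := hH.comp (measurable_update ω)
      rw [lintegral_eq_zero_iff hu]
      refine measure_mono_null ?_ hω
      intro a ha
      by_cases haM : a ∈ M
      · refine ⟨fun h0 => ha ?_, haM⟩
        change {ω : ℤ → Torus | ω j ∈ M}.indicator g (Function.update ω j a) = 0
        rw [Set.indicator_apply_eq_zero]
        intro _
        exact h0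
      · exfalso; apply ha
        change {ω : ℤ → Torus | ω j ∈ M}.indicator g (Function.update ω j a) = 0
        rw [Set.indicator_apply_eq_zero]
        intro h1
        have h2 : Function.update ω j a j ∈ M := h1
        rw [Function.update_self] at h2
        exact absurd h2 haM
    rw [lintegral_congr_ae this]; simp
  rw [lintegral_eq_zero_iff hH] at hz
  filter_upwards [hz] with ω hω hm
  simp only [Pi.zero_apply, H] at hω
  rw [Set.indicator_apply_eq_zero] at hω
  exact hω hm

lemma smExc_meas {t r : ℝ} (ht0 : 0 < t) (hr0 : 0 < r) (hr1 : r < 1) (hrt : r^2 + t^2 = 1) {s w : ℝ}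
    {K : (ℤ → Torus) → Measure Torus} (hK : Measurable K) (hp : ∀ ω, IsProbabilityMeasure (K ω)) (m : ℤ) :
    Measurable fun ω => K ω (Exc t r s w m ω) := by
  let κ : ProbabilityTheory.Kernel (ℤ → Torus) Torus := ⟨K, hK⟩
  have : ProbabilityTheory.IsMarkovKernel κ := ⟨fun a => hp a⟩
  exact ProbabilityTheory.Kernel.measurable_kernel_prodMk_left (κ := κ) (Exc_meas ht0 hr0 hr1 hrt s w m)

lemma spec_null {t r : ℝ} (ht0 : 0 < t) (hr0 : 0 < r) (hr1 : r < 1) (hrt : r^2 + t^2 = 1) {s w : ℝ}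
    (ν : Measure Torus) [IsProbabilityMeasure ν]
    (h : ∀ x : Torus, ∀ᵐ ω ∂(Measure.infinitePi fun _ : ℕ => ν), (fun k => x + ω k) ∉ Bad t r s w)
    {M : Set Torus} (hM : MeasurableSet M) (hMν : ∀ E, mh E = 0 → ν (E ∩ M) = 0)
    {U : (ℤ → Torus) → Hz →L[ℂ] Hz}
    (hU : ∀ ω : ℤ → Torus, ∀ k j : ℤ, inner ℂ (ez k) (U ω (ez j)) = ec (-(ω k)) * Sent t r k j)
    {Φ : (ℤ → Torus) → C(Torus, ℂ) →⋆ₐ[ℂ] (Hz →L[ℂ] Hz)} (hΦ : ∀ ω, Φ ω (fourier 1) = U ω)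
    (m j : ℤ) (hj : j = 2*m ∨ j = 2*m+1) :
    ∀ᵐ ω ∂(Measure.infinitePi fun _ : ℤ => ν), ω j ∈ M → sm (Φ ω) (ez j) (Exc t r s w m ω) = 0 := by
  have hg := smExc_meas ht0 hr0 hr1 hrt (s := s) (w := w) (sm_meas hU hΦ j) (fun ω => sm_prob (Φ ω) j) m
  refine resample_null ν j hg hM ?_
  filter_upwards [Exc_null ht0 hr0 hr1 hrt ν h m] with ω hω
  have hE : MeasurableSet (Exc t r s w m ω) := measurable_prodMk_left (Exc_meas ht0 hr0 hr1 hrt s w m)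
  simp only [Exc_update t r s w m j hj]
  exact hMν _ (ae_iff.1 (spec_avg hU hΦ ω j hE hω))

/-- Localization for the random unitary operators `U_ω = D_ω S` on `ℓ²(ℤ)`:
for `ℙ`-a.e. `ω`, `U_ω` has pure point spectrum with exponentially decaying eigenfunctions. -/
theorem localization_Z
    (t r : ℝ) (ht0 : 0 < t) (ht1 : t < 1) (hr0 : 0 < r) (hr1 : r < 1)
    (hrt : r^2 + t^2 = 1)
    (ν : Measure Torus) [IsProbabilityMeasure ν]
    (hac : (volume : Measure Torus).withDensity (ν.rnDeriv volume) ≠ 0)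
    (hsupp : (interior (measSupport ν)).Nonempty)
    (ℙ : Measure (ℤ → Torus)) [IsProbabilityMeasure ℙ]
    (hiid : ∀ (s : Finset ℤ) (A : ℤ → Set Torus), (∀ k, MeasurableSet (A k)) →
      ℙ {ω | ∀ k ∈ s, ω k ∈ A k} = ∏ k ∈ s, ν (A k))
    (U : (ℤ → Torus) → (Hz →L[ℂ] Hz))
    (hU : ∀ (ω : ℤ → Torus) (k j : ℤ),
      inner (𝕜 := ℂ) (ez k) (U ω (ez j)) = ec (-(ω k)) * Sent t r k j) :
    ∀ᵐ ω ∂ℙ,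
      (Submodule.span ℂ {ψ : Hz | ψ ≠ 0 ∧ ∃ μ : ℂ, U ω ψ = μ • ψ}).topologicalClosure = ⊤ ∧
      ∀ ψ : Hz, ψ ≠ 0 → (∃ μ : ℂ, U ω ψ = μ • ψ) →
        ∃ C > (0:ℝ), ∃ lam > (0:ℝ), ∀ k : ℤ,
          ‖inner (𝕜 := ℂ) (ez k) ψ‖ ≤ C * Real.exp (-lam * |(k:ℝ)|) := by
  have hP : ℙ = Measure.infinitePi fun _ : ℤ => ν := by
    apply Measure.eq_infinitePi
    intro s A hA
    rw [← hiid s A hA]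
    congr 1
  obtain ⟨s, w, hs, hw, hbad⟩ := bad_null ht0 hr0 hr1 hrt ν hac
  obtain ⟨M, hM, hM0, hMν⟩ := good_M ν hac
  choose Φ hΦ using fun ω => exists_calc (A_unitary hrt (hU ω))
  have h1 : ∀ᵐ ω ∂ℙ, ∀ m j : ℤ, (j = 2*m ∨ j = 2*m+1) → ω j ∈ M →
      sm (Φ ω) (ez j) (Exc t r s w m ω) = 0 := by
    rw [ae_all_iff]; intro m
    rw [ae_all_iff]; intro j
    by_cases hj : j = 2*m ∨ j = 2*m+1
    · rw [hP]
      filter_upwards [spec_null ht0 hr0 hr1 hrt ν hbad hM hMν hU hΦ m j hj] with ω hω _ using hω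
    · exact Eventually.of_forall fun ω h => absurd h hj
  filter_upwards [h1, hits ν ℙ hiid hM hM0] with ω hω ⟨m, hm1, hm2⟩
  refine det_main ht0 hr0 hr1 hrt (hU ω) hs hw (hΦ ω) m ?_
  rintro j (rfl | rfl)
  · exact hω m _ (Or.inl rfl) hm1
  · exact hω m _ (Or.inr rfl) hm2

end
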